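/- Let n ≥ 2, let F be a Minkowski norm on ℝⁿ, and let Ω ⊆ ℝⁿ be an open set with smooth boundary whose complement Ω^c = ℝⁿ∖Ω is bounded and nonempty. Then there exists one and only one proper weak solution u, locally Lipschitz on the closure of Ω, of the level-set inverse anisotropic mean curvature flow equation div(F_ξ(∇u)) = F(∇u) in Ω satisfying u = 0 on ∂Ω. -/

import Mathlib

open MeasureTheory Filter Topology Metric Set
open scoped RealInnerProductSpace NNReal

noncomputable section

abbrev En (n : ℕ) := EuclideanSpace ℝ (Fin n)

/-- A Minkowski norm on ℝⁿ: a norm (convex, even, 1-homogeneous, positive away from 0)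
which is smooth away from the origin and whose Hessian of `F²/2` is positive definite
on `ℝⁿ \ {0}`. -/
structure MinkowskiNorm (n : ℕ) where
  F : En n → ℝ
  convexOn : ConvexOn ℝ Set.univ F
  even : ∀ ξ, F (-ξ) = F ξ
  homog : ∀ c : ℝ, 0 ≤ c → ∀ ξ, F (c • ξ) = c * F ξ
  pos : ∀ ξ : En n, ξ ≠ 0 → 0 < F ξ
  smooth : ContDiffOn ℝ (⊤ : ℕ∞) F {(0 : En n)}ᶜ
  elliptic : ∀ ξ : En n, ξ ≠ 0 → ∀ v : En n, v ≠ 0 →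
    0 < fderiv ℝ (fun x => fderiv ℝ (fun y => F y ^ 2 / 2) x) ξ v v

/-- Locally Lipschitz on a set (i.e. `C^{0,1}_loc`). -/
def LocLipOn {n : ℕ} (f : En n → ℝ) (s : Set (En n)) : Prop :=
  ∀ x ∈ s, ∃ (K : ℝ≥0) (t : Set (En n)), t ∈ nhdsWithin x s ∧ LipschitzOnWith K f t

/-- Weak solution of `div(F_ξ(∇u)) = F(∇u)` in `Ω` in the sense of Huisken–Ilmanen's
minimization principle. -/
def IsWeakSolIAMCF {n : ℕ} (N : MinkowskiNorm n) (Ω : Set (En n)) (u : En n → ℝ) : Prop :=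
  LocLipOn u Ω ∧
  ∀ K : Set (En n), IsCompact (closure K) → closure K ⊆ Ω →
    ∀ φ : En n → ℝ, LocLipOn φ Ω → (∀ x ∈ Ω \ K, φ x = u x) →
      (∫ x in K, (N.F (gradient u x) + u x * N.F (gradient u x))) ≤
        ∫ x in K, (N.F (gradient φ x) + φ x * N.F (gradient u x))

/-- Weak subsolution: the minimization inequality holds for competitors `φ ≤ u`. -/
def IsWeakSubSolIAMCF {n : ℕ} (N : MinkowskiNorm n) (Ω : Set (En n)) (u : En n → ℝ) : Prop :=
  LocLipOn u Ω ∧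
  ∀ K : Set (En n), IsCompact (closure K) → closure K ⊆ Ω →
    ∀ φ : En n → ℝ, LocLipOn φ Ω → (∀ x ∈ Ω \ K, φ x = u x) → (∀ x ∈ Ω, φ x ≤ u x) →
      (∫ x in K, (N.F (gradient u x) + u x * N.F (gradient u x))) ≤
        ∫ x in K, (N.F (gradient φ x) + φ x * N.F (gradient u x))

/-- Weak supersolution: the minimization inequality holds for competitors `φ ≥ u`. -/
def IsWeakSuperSolIAMCF {n : ℕ} (N : MinkowskiNorm n) (Ω : Set (En n)) (u : En n → ℝ) : Prop :=
  LocLipOn u Ω ∧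
  ∀ K : Set (En n), IsCompact (closure K) → closure K ⊆ Ω →
    ∀ φ : En n → ℝ, LocLipOn φ Ω → (∀ x ∈ Ω \ K, φ x = u x) → (∀ x ∈ Ω, u x ≤ φ x) →
      (∫ x in K, (N.F (gradient u x) + u x * N.F (gradient u x))) ≤
        ∫ x in K, (N.F (gradient φ x) + φ x * N.F (gradient u x))

/-- A smooth compactly supported test function on `Ω`. -/
def IsTestFun {n : ℕ} (Ω : Set (En n)) (ψ : En n → ℝ) : Prop :=
  ContDiff ℝ (⊤ : ℕ∞) ψ ∧ HasCompactSupport ψ ∧ tsupport ψ ⊆ Ω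

/-- Weak solution of the Finsler `p`-Laplace equation `div(F(∇v)^{p-1} F_ξ(∇v)) = 0` in `Ω`. -/
def IsWeakPHarmonic {n : ℕ} (N : MinkowskiNorm n) (Ω : Set (En n)) (p : ℝ)
    (v : En n → ℝ) : Prop :=
  ∀ ψ : En n → ℝ, IsTestFun Ω ψ →
    (∫ x in Ω, N.F (gradient v x) ^ (p - 1) *
      ⟪gradient N.F (gradient v x), gradient ψ x⟫) = 0

/-- Weak solution of `div(F(∇u)^{p-1} F_ξ(∇u)) = F(∇u)^p` in `Ω`. -/
def IsWeakPSol {n : ℕ} (N : MinkowskiNorm n) (Ω : Set (En n)) (p : ℝ)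
    (u : En n → ℝ) : Prop :=
  ∀ ψ : En n → ℝ, IsTestFun Ω ψ →
    (∫ x in Ω, N.F (gradient u x) ^ (p - 1) *
      ⟪gradient N.F (gradient u x), gradient ψ x⟫) =
      - ∫ x in Ω, N.F (gradient u x) ^ p * ψ x

/-- The polar (dual) norm `F^o(x) = sup_{ξ ≠ 0} ⟨ξ, x⟩ / F(ξ)`. -/
def polarF {n : ℕ} (N : MinkowskiNorm n) (x : En n) : ℝ :=
  sSup {c : ℝ | ∃ ξ : En n, ξ ≠ 0 ∧ c = ⟪ξ, x⟫ / N.F ξ}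

/-- The Wulff shape of radius `r` centered at `x₀`: `{x : F^o(x - x₀) < r}`. -/
def Wulff {n : ℕ} (N : MinkowskiNorm n) (r : ℝ) (x₀ : En n) : Set (En n) :=
  {x | polarF N (x - x₀) < r}

/-- `Ω` is an open set with smooth boundary: it is a smooth sublevel set of a smooth
function with nonvanishing gradient on the boundary. -/
def HasSmoothBoundary {n : ℕ} (Ω : Set (En n)) : Prop :=
  ∃ f : En n → ℝ, ContDiff ℝ (⊤ : ℕ∞) f ∧ Ω = {x | f x < 0} ∧
    ∀ x ∈ frontier Ω, fderiv ℝ f x ≠ 0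

/-- `C¹` on `s` with locally Hölder continuous gradient (i.e. `C^{1,α}_loc`). -/
def C1LocHolderOn {n : ℕ} (v : En n → ℝ) (s : Set (En n)) : Prop :=
  ContDiffOn ℝ 1 v s ∧
  ∀ x ∈ s, ∃ (α C : ℝ≥0), 0 < α ∧ (α : ℝ) ≤ 1 ∧
    ∃ t ∈ nhdsWithin x s, HolderOnWith C α (fun y => gradient v y) t

/-- Divergence of a vector field on `ℝⁿ`. -/
def divg {n : ℕ} (V : En n → En n) (x : En n) : ℝ :=
  ∑ i : Fin n, fderiv ℝ V x (EuclideanSpace.single i 1) i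

/-!
Uniqueness. Let `v > u` somewhere and let `d` be the truncation `min (v, t) - u / σ - c` restricted
to a superlevel set that is compact in `Ω`, with `σ < 1` and `0 ≤ d ≤ (1 - σ) / 2`. A suitable
positive combination of the minimization inequalities for the competitors `v - d`, `u + σ d` and
`u + σ d² / 2` forces `∇ d = 0`, hence `d = 0`.

Existence. For `p > 1` put `u = -(p - 1) log w`, where `w` minimizes `∫ F(∇w)ᵖ` subject to `w = 1`
off `Ω` and `w = ε` far away. Then `div (F(∇u)ᵖ⁻¹ F_ξ(∇u)) = F(∇u)ᵖ`, and the limit `p → 1` is a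
weak solution once `u` is Lipschitz uniformly in `p`. This follows from the maximum principle:
powers `polar (x - x₀) ^ (-b)` of the polar norm are subsolutions or supersolutions according to
the exponent, so comparison on Wulff shapes touching `∂Ω` from inside the complement bounds `log w`
from below near `∂Ω`, and comparison of `w` with its rescaled translates carries this bound into the
interior. To avoid regularity theory, `w` is a minimizer among functions with a prescribed, slightly
larger logarithmic Lipschitz constant; the bound shows that this constraint is inactive. A barrier
from above gives `u ≥ log (polar x / R₀) / 2`, hence properness.
-/

open scoped Gradient

section GradientCalculus

variable {E : Type*} [NormedAddCommGroup E] [InnerProductSpace ℝ E] [CompleteSpace E]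
  {f g : E → ℝ} {x : E}

lemma norm_gradient_le_of_lipschitzWith {K : ℝ≥0} (hf : LipschitzWith K f) (x : E) :
    ‖∇ f x‖ ≤ K := by
  simpa [gradient] using norm_fderiv_le_of_lipschitz ℝ (x₀ := x) hf

lemma gradient_fun_add (hf : DifferentiableAt ℝ f x) (hg : DifferentiableAt ℝ g x) :
    ∇ (fun y => f y + g y) x = ∇ f x + ∇ g x := by
  refine ext_inner_right ℝ fun v => ?_
  simp only [inner_add_left, inner_gradient_left, fderiv_fun_add hf hg,
    add_apply]

lemma gradient_fun_sub (hf : DifferentiableAt ℝ f x) (hg : DifferentiableAt ℝ g x) :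
    ∇ (fun y => f y - g y) x = ∇ f x - ∇ g x := by
  refine ext_inner_right ℝ fun v => ?_
  simp only [inner_sub_left, inner_gradient_left, fderiv_fun_sub hf hg,
    sub_apply]

lemma gradient_fun_mul (hf : DifferentiableAt ℝ f x) (hg : DifferentiableAt ℝ g x) :
    ∇ (fun y => f y * g y) x = f x • ∇ g x + g x • ∇ f x := by
  refine ext_inner_right ℝ fun v => ?_
  simp [inner_add_left, inner_smul_left, fderiv_fun_mul hf hg]

lemma gradient_comp {φ : ℝ → ℝ} {φ' : ℝ} (hφ : HasDerivAt φ φ' (f x))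
    (hf : DifferentiableAt ℝ f x) : ∇ (fun y => φ (f y)) x = φ' • ∇ f x := by
  refine ext_inner_right ℝ fun v => ?_
  have hcomp : fderiv ℝ (fun y => φ (f y)) x = φ' • fderiv ℝ f x :=
    (hφ.comp_hasFDerivAt x hf.hasFDerivAt).fderiv
  simp [inner_smul_left, hcomp]

lemma gradient_fun_const_mul (c : ℝ) (hf : DifferentiableAt ℝ f x) :
    ∇ (fun y => c * f y) x = c • ∇ f x :=
  gradient_comp (φ := fun t => c * t) (by simpa using (hasDerivAt_id (f x)).const_mul c) hf

lemma gradient_comp_add_right (f : E → ℝ) (h x : E) : ∇ (fun y => f (y + h)) x = ∇ f (x + h) := by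
  simp only [gradient, fderiv_comp_add_right]

lemma gradient_eq_zero_of_eqOn_const {U : Set E} (hU : IsOpen U) {c : ℝ} (hf : ∀ y ∈ U, f y = c)
    (hx : x ∈ U) : ∇ f x = 0 := by
  have hloc : f =ᶠ[𝓝 x] fun _ => c := by filter_upwards [hU.mem_nhds hx] with y hy using hf y hy
  rw [hloc.gradient_eq, gradient_fun_const]

lemma gradient_eq_zero_of_notMem_tsupport (hx : x ∉ tsupport f) : ∇ f x = 0 :=
  gradient_eq_zero_of_eqOn_const (isClosed_tsupport f).isOpen_compl
    (fun _ hy => image_eq_zero_of_notMem_tsupport hy) hx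

lemma hasCompactSupport_gradient (hf : HasCompactSupport f) : HasCompactSupport (∇ f) :=
  (hf.fderiv ℝ).comp_left (map_zero _)

lemma measurable_gradient [MeasurableSpace E] [BorelSpace E] (f : E → ℝ) : Measurable (∇ f) :=
  (InnerProductSpace.toDual ℝ E).symm.continuous.measurable.comp (measurable_fderiv ℝ f)

end GradientCalculus

/-- Real functions that are Lipschitz for some unspecified constant. -/
def IsLipschitz {X : Type*} [PseudoEMetricSpace X] (f : X → ℝ) : Prop :=
  ∃ K : ℝ≥0, LipschitzWith K f

namespace IsLipschitz

section Algebra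

variable {X : Type*} [PseudoMetricSpace X] {f g : X → ℝ}

protected lemma continuous (hf : IsLipschitz f) : Continuous f :=
  hf.choose_spec.continuous

lemma const (c : ℝ) : IsLipschitz fun _ : X => c :=
  ⟨0, .const c⟩

protected lemma add (hf : IsLipschitz f) (hg : IsLipschitz g) :
    IsLipschitz fun x => f x + g x :=
  hf.elim fun _ hf => hg.elim fun _ hg => ⟨_, hf.add hg⟩

protected lemma sub (hf : IsLipschitz f) (hg : IsLipschitz g) :
    IsLipschitz fun x => f x - g x :=
  hf.elim fun _ hf => hg.elim fun _ hg => ⟨_, hf.sub hg⟩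

protected lemma max (hf : IsLipschitz f) (hg : IsLipschitz g) :
    IsLipschitz fun x => max (f x) (g x) :=
  hf.elim fun _ hf => hg.elim fun _ hg => ⟨_, hf.max hg⟩

protected lemma min (hf : IsLipschitz f) (hg : IsLipschitz g) :
    IsLipschitz fun x => min (f x) (g x) :=
  hf.elim fun _ hf => hg.elim fun _ hg => ⟨_, hf.min hg⟩

lemma const_mul (hf : IsLipschitz f) (c : ℝ) : IsLipschitz fun x => c * f x :=
  hf.elim fun _ hf => ⟨_, (lipschitzWith_smul c).comp hf⟩

lemma mul_of_bounded (hf : IsLipschitz f) (hg : IsLipschitz g) {A B : ℝ}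
    (hA : ∀ x, |f x| ≤ A) (hB : ∀ x, |g x| ≤ B) : IsLipschitz fun x => f x * g x := by
  obtain ⟨K, hf⟩ := hf
  obtain ⟨L, hg⟩ := hg
  refine ⟨_, LipschitzWith.of_dist_le' (K := A * L + B * K) fun x y => ?_⟩
  have hfxy := hf.dist_le_mul x y
  have hgxy := hg.dist_le_mul x y
  rw [Real.dist_eq] at hfxy hgxy ⊢
  have hA0 := (abs_nonneg _).trans (hA x)
  have hB0 := (abs_nonneg _).trans (hB x)
  calc |f x * g x - f y * g y| = |f x * (g x - g y) + g y * (f x - f y)| := by ring_nf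
    _ ≤ |f x| * |g x - g y| + |g y| * |f x - f y| := by
        simpa only [abs_mul] using abs_add_le (f x * (g x - g y)) (g y * (f x - f y))
    _ ≤ A * (L * dist x y) + B * (K * dist x y) := by gcongr <;> apply_assumption
    _ = (A * L + B * K) * dist x y := by ring

lemma exists_abs_le (hf : IsLipschitz f) (hc : HasCompactSupport f) : ∃ A, ∀ x, |f x| ≤ A :=
  hc.exists_bound_of_continuous hf.continuous

lemma mul_hasCompactSupport (hf : IsLipschitz f) (hg : IsLipschitz g)
    (hc : HasCompactSupport g) : IsLipschitz fun x => f x * g x := by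
  obtain ⟨A, hA⟩ := hg.exists_abs_le hc
  obtain ⟨B, hB⟩ := hc.isCompact.exists_bound_of_continuousOn hf.continuous.continuousOn
  -- Only the values of `f` on the support of `g` matter, so `f` may be truncated to `[-|B|, |B|]`.
  have htrunc : (fun x => f x * g x) = fun x => max (-|B|) (min |B| (f x)) * g x := by
    funext x
    rcases eq_or_ne (g x) 0 with h | h
    · simp only [h, mul_zero]
    · have hfx := abs_le.1 ((hB x (subset_tsupport _ h)).trans (le_abs_self B))
      rw [min_eq_right hfx.2, max_eq_right hfx.1]
  rw [htrunc]
  exact ((const _).max ((const _).min hf)).mul_of_bounded hg (A := |B|)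
    (fun x => abs_le.2 ⟨le_max_left _ _,
      max_le ((neg_nonpos.2 (abs_nonneg B)).trans (abs_nonneg B)) (min_le_left _ _)⟩) hA

end Algebra

lemma comp_add_right {E : Type*} [SeminormedAddCommGroup E] {f : E → ℝ} (hf : IsLipschitz f)
    (h : E) : IsLipschitz fun x => f (x + h) :=
  hf.elim fun K hf => ⟨K * 1, hf.comp (LipschitzWith.of_dist_le_mul fun x y => by simp)⟩

section Gradient

variable {E : Type*} [NormedAddCommGroup E] [InnerProductSpace ℝ E] [FiniteDimensional ℝ E]
  {f g : E → ℝ}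

lemma exists_norm_gradient_le (hf : IsLipschitz f) : ∃ C, 0 ≤ C ∧ ∀ x, ‖∇ f x‖ ≤ C :=
  hf.elim fun K hf => ⟨K, K.2, norm_gradient_le_of_lipschitzWith hf⟩

variable [MeasurableSpace E] [BorelSpace E] {μ : Measure E} [μ.IsAddHaarMeasure]

protected lemma ae_differentiableAt (hf : IsLipschitz f) : ∀ᵐ x ∂μ, DifferentiableAt ℝ f x :=
  hf.elim fun _ hf => hf.ae_differentiableAt

lemma ae_gradient_eq_zero (hf : IsLipschitz f) : ∀ᵐ x ∂μ, f x = 0 → ∇ f x = 0 := by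
  rcases subsingleton_or_nontrivial E with _ | _
  · exact .of_forall fun x _ => Subsingleton.elim _ _
  -- On the zero set of `f`, the map `f • e` is approximated by the zero map, so its derivative
  -- `∇ f ⊗ e` vanishes at almost every point of that set.
  obtain ⟨e, he⟩ := exists_ne (0 : E)
  let s : Set E := {x | f x = 0 ∧ DifferentiableAt ℝ f x}
  have hs : MeasurableSet s :=
    (measurableSet_eq_fun hf.continuous.measurable measurable_const).inter
      (measurableSet_of_differentiableAt ℝ f)
  have happrox : ApproximatesLinearOn (fun x => f x • e) (0 : E →L[ℝ] E) s 0 :=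
    fun x hx y hy => by simp [hx.1, hy.1]
  have hderiv : ∀ x ∈ s,
      HasFDerivWithinAt (fun x => f x • e) ((fderiv ℝ f x).smulRight e) s x :=
    fun x hx => (hx.2.hasFDerivAt.smul_const e).hasFDerivWithinAt
  have hsmall := happrox.norm_fderiv_sub_le μ hs _ hderiv
  rw [ae_restrict_iff' hs] at hsmall
  filter_upwards [hsmall, hf.ae_differentiableAt (μ := μ)] with x hx hd h0
  have hprod : ‖(fderiv ℝ f x).smulRight e‖ = 0 := by
    simpa using congr_arg NNReal.toReal (le_antisymm (hx ⟨h0, hd⟩) bot_le)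
  rw [ContinuousLinearMap.norm_smulRight_apply, mul_eq_zero, norm_eq_zero, norm_eq_zero] at hprod
  simp only [gradient, hprod.resolve_right he, map_zero]

lemma ae_gradient_eq (hf : IsLipschitz f) (hg : IsLipschitz g) :
    ∀ᵐ x ∂μ, f x = g x → ∇ f x = ∇ g x := by
  filter_upwards [(hf.sub hg).ae_gradient_eq_zero (μ := μ), hf.ae_differentiableAt (μ := μ),
    hg.ae_differentiableAt (μ := μ)] with x hzero hfx hgx hx
  have := hzero (sub_eq_zero.2 hx)
  rwa [gradient_fun_sub hfx hgx, sub_eq_zero] at this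

lemma ae_gradient_max (hf : IsLipschitz f) (hg : IsLipschitz g) :
    ∀ᵐ x ∂μ, ∇ (fun y => max (f y) (g y)) x = if f x < g x then ∇ g x else ∇ f x := by
  filter_upwards [(hf.max hg).ae_gradient_eq hf (μ := μ)] with x hx
  split_ifs with hlt
  · refine Filter.EventuallyEq.gradient_eq ?_
    filter_upwards [(isOpen_lt hf.continuous hg.continuous).mem_nhds hlt] with y hy
    exact max_eq_right hy.le
  · exact hx (max_eq_left (not_lt.1 hlt))

lemma ae_gradient_min (hf : IsLipschitz f) (hg : IsLipschitz g) :
    ∀ᵐ x ∂μ, ∇ (fun y => min (f y) (g y)) x = if f x < g x then ∇ f x else ∇ g x := by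
  filter_upwards [(hf.min hg).ae_gradient_eq hg (μ := μ)] with x hx
  split_ifs with hlt
  · refine Filter.EventuallyEq.gradient_eq ?_
    filter_upwards [(isOpen_lt hf.continuous hg.continuous).mem_nhds hlt] with y hy
    exact min_eq_left hy.le
  · exact hx (min_eq_right (not_lt.1 hlt))

end Gradient

end IsLipschitz

section LipschitzSequences

variable {X : Type*} [PseudoMetricSpace X] {z : ℕ → X → ℝ} {L : ℝ≥0}

lemma lipschitzWith_of_tendsto {w : X → ℝ} (hz : ∀ k, LipschitzWith L (z k))
    (hw : ∀ x, Tendsto (fun k => z k x) atTop (𝓝 (w x))) : LipschitzWith L w :=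
  (isClosed_setOfPred_lipschitzWith L).mem_of_tendsto (tendsto_pi_nhds.2 hw) (.of_forall hz)

lemma cauchySeq_apply_of_dense {Q : Set X} (hQ : Dense Q) (hz : ∀ k, LipschitzWith L (z k))
    (hcauchy : ∀ q ∈ Q, CauchySeq fun k => z k q) (x : X) : CauchySeq fun k => z k x := by
  rw [Metric.cauchySeq_iff']
  intro δ hδ
  obtain ⟨q, hq, hxq⟩ := hQ.exists_dist_lt x (ε := δ / 3 / (L + 1)) (by positivity)
  obtain ⟨k₀, hk₀⟩ := Metric.cauchySeq_iff'.1 (hcauchy q hq) (δ / 3) (by positivity)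
  have hclose : ∀ k, dist (z k x) (z k q) ≤ δ / 3 := fun k => by
    calc dist (z k x) (z k q) ≤ L * dist x q := (hz k).dist_le_mul x q
      _ ≤ (L + 1) * (δ / 3 / (L + 1)) := by gcongr; linarith
      _ = δ / 3 := by field_simp
  refine ⟨k₀, fun k hk => ?_⟩
  have htriangle := dist_triangle4 (z k x) (z k q) (z k₀ q) (z k₀ x)
  rw [dist_comm (z k₀ q)] at htriangle
  linarith [hclose k, hclose k₀, hk₀ k hk]

lemma exists_subseq_tendsto_of_lipschitzWith [TopologicalSpace.SeparableSpace X]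
    (hz : ∀ k, LipschitzWith L (z k)) (hb : ∀ x, ∃ B, ∀ k, |z k x| ≤ B) :
    ∃ (w : X → ℝ) (s : ℕ → ℕ), StrictMono s ∧
      ∀ x, Tendsto (fun k => z (s k) x) atTop (𝓝 (w x)) := by
  obtain ⟨Q, hQc, hQ⟩ := TopologicalSpace.exists_countable_dense X
  have : Countable Q := hQc
  choose B hB using hb
  have hbox : IsCompact (Set.univ.pi fun q : Q => Icc (-(B q)) (B q)) :=
    isCompact_univ_pi fun q => isCompact_Icc
  obtain ⟨a, _, s, hs, ha⟩ := hbox.tendsto_subseq (x := fun k (q : Q) => z k q)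
    fun k q _ => abs_le.1 (hB q k)
  rw [tendsto_pi_nhds] at ha
  choose w hw using fun x => cauchySeq_tendsto_of_complete
    (cauchySeq_apply_of_dense hQ (fun k => hz (s k)) (fun q hq => (ha ⟨q, hq⟩).cauchySeq) x)
  exact ⟨w, s, hs, hw⟩

end LipschitzSequences

section LocallyLipschitz

variable {X : Type*} [MetricSpace X] [ProperSpace X] {Ω K : Set X} {u : X → ℝ}

lemma exists_isLipschitz_cutoff {U : Set X} (hK : IsCompact K) (hU : IsOpen U) (hKU : K ⊆ U) :
    ∃ η : X → ℝ, IsLipschitz η ∧ HasCompactSupport η ∧ tsupport η ⊆ U ∧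
      (∀ x, 0 ≤ η x) ∧ (∀ x, η x ≤ 1) ∧ ∀ x ∈ K, η x = 1 := by
  obtain ⟨δ, hδ, hδU⟩ := hK.exists_cthickening_subset_open hU hKU
  let η : X → ℝ := fun x => thickenedIndicator hδ K x
  have hsupp : tsupport η ⊆ cthickening δ K := by
    refine closure_minimal (fun x hx => ?_) isClosed_cthickening
    by_contra hout
    refine hx ?_
    simp only [η, thickenedIndicator_zero hδ K fun h => hout (thickening_subset_cthickening δ K h),
      NNReal.coe_zero]
  exact ⟨η, ⟨_, LipschitzWith.subtype_val _ |>.comp (lipschitzWith_thickenedIndicator hδ K)⟩,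
    hK.cthickening.of_isClosed_subset (isClosed_tsupport _) hsupp, hsupp.trans hδU,
    fun x => NNReal.coe_nonneg _, fun x => by exact_mod_cast thickenedIndicator_le_one hδ K x,
    fun x hx => by simp only [η, thickenedIndicator_one hδ K hx, NNReal.coe_one]⟩

lemma exists_isLipschitz_eqOn_nhds (hΩ : IsOpen Ω) (hu : LocallyLipschitzOn Ω u)
    (hK : IsCompact K) (hKΩ : K ⊆ Ω) :
    ∃ w : X → ℝ, IsLipschitz w ∧ ∃ U, IsOpen U ∧ K ⊆ U ∧ U ⊆ Ω ∧ EqOn w u U := by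
  obtain ⟨K', hK', hKK', hK'Ω⟩ := exists_compact_between hK hΩ hKΩ
  obtain ⟨C, hC⟩ := (hu.mono hK'Ω).exists_lipschitzOnWith_of_compact hK'
  obtain ⟨w, hw, hwu⟩ := hC.extend_real
  exact ⟨w, ⟨C, hw⟩, interior K', isOpen_interior, hKK', interior_subset.trans hK'Ω,
    fun x hx => (hwu (interior_subset hx)).symm⟩

lemma isLipschitz_of_locallyLipschitzOn_of_eq_zero_off (hΩ : IsOpen Ω)
    (hu : LocallyLipschitzOn Ω u) (hK : IsCompact K) (hKΩ : K ⊆ Ω) (h0 : ∀ x ∉ K, u x = 0) :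
    IsLipschitz u := by
  obtain ⟨w, hw, U, hU, hKU, -, hwu⟩ := exists_isLipschitz_eqOn_nhds hΩ hu hK hKΩ
  obtain ⟨η, hη, hηc, hηU, -, -, hη1⟩ := exists_isLipschitz_cutoff hK hU hKU
  have huwη : u = fun x => w x * η x := by
    funext x
    by_cases hxK : x ∈ K
    · rw [hη1 x hxK, hwu (hKU hxK), mul_one]
    by_cases hxU : x ∈ U
    · rw [hwu hxU, h0 x hxK, zero_mul]
    · rw [h0 x hxK, image_eq_zero_of_notMem_tsupport fun h => hxU (hηU h), mul_zero]
  exact huwη ▸ hw.mul_hasCompactSupport hη hηc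

end LocallyLipschitz

lemma locLipOn_iff_locallyLipschitzOn {n : ℕ} {f : En n → ℝ} {s : Set (En n)} :
    LocLipOn f s ↔ LocallyLipschitzOn s f :=
  Iff.rfl

lemma IsLipschitz.locallyLipschitzOn {X : Type*} [PseudoEMetricSpace X] {f : X → ℝ}
    (hf : IsLipschitz f) (s : Set X) : LocallyLipschitzOn s f :=
  hf.elim fun _ hf => hf.locallyLipschitz.locallyLipschitzOn

section Integration

lemma integrable_of_ae_norm_le_of_hasCompactSupport {X F : Type*} [TopologicalSpace X]
    [MeasurableSpace X] [NormedAddCommGroup F] {μ : Measure X}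
    [IsFiniteMeasureOnCompacts μ] {φ : X → F} {A : ℝ} (hm : AEStronglyMeasurable φ μ)
    (hb : ∀ᵐ x ∂μ, ‖φ x‖ ≤ A) (hc : HasCompactSupport φ) : Integrable φ μ :=
  (integrableOn_iff_integrable_of_support_subset (subset_tsupport φ)).1
    (Measure.integrableOn_of_bounded hc.isCompact.measure_lt_top.ne hm (ae_restrict_of_ae hb))

lemma integrable_continuous_mul_of_hasCompactSupport {X : Type*} [TopologicalSpace X] [T2Space X]
    [MeasurableSpace X] [OpensMeasurableSpace X] {μ : Measure X} {f h : X → ℝ} (hf : Continuous f)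
    (hh : Integrable h μ) (hc : HasCompactSupport h) : Integrable (fun x => f x * h x) μ :=
  (integrableOn_iff_integrable_of_support_subset
      ((Function.support_mul_subset_right f h).trans (subset_tsupport h))).1
    (hh.integrableOn.continuousOn_mul hf.continuousOn hc)

lemma IsLipschitz.integrable {X : Type*} [PseudoMetricSpace X] [MeasurableSpace X]
    [OpensMeasurableSpace X] {μ : Measure X} [IsFiniteMeasureOnCompacts μ] {f : X → ℝ}
    (hf : IsLipschitz f) (hc : HasCompactSupport f) : Integrable f μ :=
  hf.continuous.integrable_of_hasCompactSupport hc

section LinearFunctionals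

variable {E : Type*} [NormedAddCommGroup E] [InnerProductSpace ℝ E]

lemma gradient_inner_left [CompleteSpace E] (e x : E) : ∇ (fun y => ⟪e, y⟫) x = e :=
  (hasGradientAt_iff_hasFDerivAt.2 (innerSL ℝ e).hasFDerivAt).gradient

lemma isLipschitz_inner_left (e : E) : IsLipschitz fun y : E => ⟪e, y⟫ :=
  ⟨_, (innerSL ℝ e).lipschitz⟩

lemma abs_inner_gradient_le [CompleteSpace E] {L : ℝ≥0} {z : E → ℝ} (hz : LipschitzWith L z)
    (e x : E) : |⟪∇ z x, e⟫| ≤ L * ‖e‖ :=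
  (abs_real_inner_le_norm _ _).trans (by gcongr; exact norm_gradient_le_of_lipschitzWith hz x)

end LinearFunctionals

variable {E : Type*} [NormedAddCommGroup E] [InnerProductSpace ℝ E] [FiniteDimensional ℝ E]
  [MeasurableSpace E] [BorelSpace E] {μ : Measure E} [μ.IsAddHaarMeasure] {f g : E → ℝ}

lemma IsLipschitz.integrable_gradient (hf : IsLipschitz f) (hc : HasCompactSupport f) :
    Integrable (∇ f) μ := by
  obtain ⟨C, -, hC⟩ := hf.exists_norm_gradient_le
  exact integrable_of_ae_norm_le_of_hasCompactSupport (measurable_gradient f).aestronglyMeasurable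
    (.of_forall hC) (hasCompactSupport_gradient hc)

lemma integral_inner_gradient_mul (hf : IsLipschitz f) (hg : IsLipschitz g)
    (hc : HasCompactSupport g) (e : E) :
    ∫ x, ⟪∇ f x, e⟫ * g x ∂μ = - ∫ x, ⟪∇ g x, e⟫ * f x ∂μ := by
  obtain ⟨K, hK⟩ := hf
  obtain ⟨L, hL⟩ := hg
  calc ∫ x, ⟪∇ f x, e⟫ * g x ∂μ = ∫ x, lineDeriv ℝ f x e * g x ∂μ := by
        refine integral_congr_ae ?_
        filter_upwards [hK.ae_differentiableAt (μ := μ)] with x hx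
        rw [inner_gradient_left, hx.lineDeriv_eq_fderiv]
    _ = ∫ x, lineDeriv ℝ g x (-e) * f x ∂μ := hK.integral_lineDeriv_mul_eq hL hc e
    _ = - ∫ x, ⟪∇ g x, e⟫ * f x ∂μ := by
        rw [← integral_neg]
        refine integral_congr_ae ?_
        filter_upwards [hL.ae_differentiableAt (μ := μ)] with x hx
        rw [inner_gradient_left, hx.lineDeriv_eq_fderiv, map_neg, neg_mul]

lemma integrable_inner_sub_gradient (hg : IsLipschitz g) (hc : HasCompactSupport g) (x₀ : E) :
    Integrable (fun x => ⟪x - x₀, ∇ g x⟫) μ := by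
  obtain ⟨C, hC0, hC⟩ := hg.exists_norm_gradient_le
  obtain ⟨D, hD⟩ := hc.isCompact.exists_bound_of_continuousOn (f := fun x => x - x₀) (by fun_prop)
  refine integrable_of_ae_norm_le_of_hasCompactSupport (A := |D| * C)
    ((measurable_id.sub_const x₀).inner (measurable_gradient g)).aestronglyMeasurable
    (.of_forall fun x => ?_) ((hasCompactSupport_gradient hc).mono fun x hx => ?_)
  · by_cases hx : x ∈ tsupport g
    · refine (norm_inner_le_norm _ _).trans ?_
      gcongr
      exacts [(hD x hx).trans (le_abs_self D), hC x]
    · rw [gradient_eq_zero_of_notMem_tsupport hx, inner_zero_right, norm_zero]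
      positivity
  · exact fun h => hx (by simp only [h, inner_zero_right])

lemma integral_inner_sub_gradient (hg : IsLipschitz g) (hc : HasCompactSupport g) (x₀ : E) :
    ∫ x, ⟪x - x₀, ∇ g x⟫ ∂μ = -(Module.finrank ℝ E) * ∫ x, g x ∂μ := by
  let b := stdOrthonormalBasis ℝ E
  have hcoord : ∀ i, ∫ x, ⟪b i, x - x₀⟫ * ⟪∇ g x, b i⟫ ∂μ = - ∫ x, g x ∂μ := fun i => by
    have hlip : IsLipschitz fun x => ⟪b i, x - x₀⟫ := by
      simpa only [inner_sub_right] using (isLipschitz_inner_left (b i)).sub (.const _)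
    have hgrad : ∀ x, ∇ (fun y => ⟪b i, y - x₀⟫) x = b i := fun x => by
      simpa only [sub_eq_add_neg, gradient_inner_left]
        using gradient_comp_add_right (fun y => ⟪b i, y⟫) (-x₀) x
    have hibp := integral_inner_gradient_mul (μ := μ) hlip hg hc (b i)
    simp only [hgrad, real_inner_self_eq_norm_sq, b.norm_eq_one, one_pow, one_mul] at hibp
    rw [hibp, neg_neg]
    simp only [mul_comm]
  have hint : ∀ i, Integrable (fun x => ⟪b i, x - x₀⟫ * ⟪∇ g x, b i⟫) μ := fun i => by
    have hgc : HasCompactSupport fun x => ⟪∇ g x, b i⟫ :=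
      (hasCompactSupport_gradient hc).comp_left (g := fun v => ⟪v, b i⟫) (inner_zero_left _)
    have hgi : Integrable (fun x => ⟪∇ g x, b i⟫) μ := (hg.integrable_gradient hc).inner_const (b i)
    exact integrable_continuous_mul_of_hasCompactSupport (by fun_prop) hgi hgc
  calc ∫ x, ⟪x - x₀, ∇ g x⟫ ∂μ = ∫ x, ∑ i, ⟪b i, x - x₀⟫ * ⟪∇ g x, b i⟫ ∂μ := by
        refine integral_congr_ae (.of_forall fun x => ?_)
        dsimp only
        rw [← b.sum_inner_mul_inner (x - x₀) (∇ g x)]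
        exact Finset.sum_congr rfl fun i _ => by
          rw [real_inner_comm (b i), real_inner_comm (b i)]
    _ = -(Module.finrank ℝ E) * ∫ x, g x ∂μ := by
        rw [integral_finsetSum _ fun i _ => hint i]
        simp only [hcoord, Finset.sum_const, Finset.card_univ, Fintype.card_fin, nsmul_eq_mul,
          mul_neg, neg_mul]

lemma eq_zero_of_ae_gradient_eq_zero [Nontrivial E] (hg : IsLipschitz g)
    (hc : HasCompactSupport g) (h0 : ∀ x, 0 ≤ g x) (hgrad : ∀ᵐ x ∂μ, ∇ g x = 0) (x : E) :
    g x = 0 := by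
  by_contra hx
  have hpos : 0 < ∫ x, g x ∂μ :=
    hg.continuous.integral_pos_of_hasCompactSupport_nonneg_nonzero hc h0 hx
  have hdiv := integral_inner_sub_gradient (μ := μ) hg hc 0
  have hzero : ∫ x : E, ⟪x - 0, ∇ g x⟫ ∂μ = 0 :=
    integral_eq_zero_of_ae (by filter_upwards [hgrad] with x hx; simp [hx])
  have hdim : (0 : ℝ) < Module.finrank ℝ E := by exact_mod_cast Module.finrank_pos
  nlinarith

lemma exists_isLipschitz_integral_abs_sub_le {y : E → ℝ} (hy : Integrable y μ) {ε : ℝ}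
    (hε : 0 < ε) :
    ∃ w, IsLipschitz w ∧ HasCompactSupport w ∧ ∫ x, |y x - w x| ∂μ ≤ ε := by
  obtain ⟨w, hwc, hwd, hw⟩ :=
    (memLp_one_iff_integrable.2 hy).exist_eLpNorm_sub_le (by simp) le_rfl hε
  have hwl : IsLipschitz w := hwd.lipschitzWith_of_hasCompactSupport hwc (by simp)
  refine ⟨w, hwl, hwc, ?_⟩
  have hyw : Integrable (y - w) μ := hy.sub (hwl.integrable hwc)
  rw [eLpNorm_one_eq_lintegral_enorm, ← ofReal_integral_norm_eq_lintegral_enorm hyw,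
    ENNReal.ofReal_le_ofReal_iff hε.le] at hw
  exact hw

end Integration

section WeakConvergence

variable {E : Type*} [NormedAddCommGroup E] [InnerProductSpace ℝ E] [FiniteDimensional ℝ E]
  [MeasurableSpace E] [BorelSpace E] {μ : Measure E} {L : ℝ≥0}

lemma integrable_mul_inner_gradient {y z : E → ℝ} (hy : Integrable y μ) (hz : LipschitzWith L z)
    (e : E) : Integrable (fun x => y x * ⟪∇ z x, e⟫) μ :=
  hy.mul_bdd (measurable_gradient z).inner_const.aestronglyMeasurable
    (.of_forall fun x => abs_inner_gradient_le hz e x)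

variable [μ.IsAddHaarMeasure] {z : ℕ → E → ℝ}

lemma tendsto_integral_mul_inner_gradient_of_isLipschitz {w : E → ℝ} (hw : IsLipschitz w)
    (hwc : HasCompactSupport w) (hz : ∀ k, LipschitzWith L (z k))
    (hz0 : ∀ x, Tendsto (fun k => z k x) atTop (𝓝 0)) (e : E) :
    Tendsto (fun k => ∫ x, w x * ⟪∇ (z k) x, e⟫ ∂μ) atTop (𝓝 0) := by
  have hibp : ∀ k, ∫ x, w x * ⟪∇ (z k) x, e⟫ ∂μ = - ∫ x, ⟪∇ w x, e⟫ * z k x ∂μ := fun k => by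
    rw [← integral_inner_gradient_mul ⟨L, hz k⟩ hw hwc e]
    simp only [mul_comm]
  obtain ⟨B, hB⟩ := (hz0 0).abs.bddAbove_range
  obtain ⟨R, hR⟩ := hwc.isCompact.isBounded.exists_norm_le
  have hzB : ∀ k, ∀ x ∈ tsupport w, |z k x| ≤ B + L * R := fun k x hx => by
    have hdist := (hz k).dist_le_mul x 0
    rw [dist_zero_right, Real.dist_eq] at hdist
    have hLR : L * ‖x‖ ≤ L * R := by gcongr; exact hR x hx
    have htri : |z k x| ≤ |z k x - z k 0| + |z k 0| := by
      simpa using abs_add_le (z k x - z k 0) (z k 0)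
    linarith [hB ⟨k, rfl⟩]
  simp_rw [hibp]
  rw [← neg_zero, ← integral_zero E ℝ (μ := μ)]
  refine (tendsto_integral_of_dominated_convergence
    (fun x => ‖⟪∇ w x, e⟫‖ * (B + L * R))
    (fun k => ((measurable_gradient w).inner_const.mul
      (hz k).continuous.measurable).aestronglyMeasurable)
    (((hw.integrable_gradient hwc).inner_const e).norm.mul_const _)
    (fun k => .of_forall fun x => ?_) (.of_forall fun x => ?_)).neg
  · by_cases hx : x ∈ tsupport w
    · rw [Pi.mul_apply, norm_mul]
      gcongr
      exact hzB k x hx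
    · simp only [Pi.mul_apply, gradient_eq_zero_of_notMem_tsupport hx, inner_zero_left, zero_mul,
        norm_zero, le_refl]
  · simpa using (hz0 x).const_mul ⟪∇ w x, e⟫

lemma tendsto_integral_mul_inner_gradient {y : E → ℝ} (hy : Integrable y μ)
    (hz : ∀ k, LipschitzWith L (z k)) (hz0 : ∀ x, Tendsto (fun k => z k x) atTop (𝓝 0)) (e : E) :
    Tendsto (fun k => ∫ x, y x * ⟪∇ (z k) x, e⟫ ∂μ) atTop (𝓝 0) := by
  rw [Metric.tendsto_atTop]
  intro δ hδ
  have : 0 < L * ‖e‖ + 1 := by positivity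
  obtain ⟨w, hw, hwc, hyw⟩ :=
    exists_isLipschitz_integral_abs_sub_le hy (ε := δ / 2 / (L * ‖e‖ + 1)) (by positivity)
  obtain ⟨k₀, hk₀⟩ := Metric.tendsto_atTop.1
    (tendsto_integral_mul_inner_gradient_of_isLipschitz (μ := μ) hw hwc hz hz0 e) (δ / 2)
    (by positivity)
  refine ⟨k₀, fun k hk => ?_⟩
  have hwi : Integrable w μ := hw.integrable hwc
  have hywi : Integrable (fun x => y x - w x) μ := hy.sub hwi
  have hdiff : |∫ x, (y x - w x) * ⟪∇ (z k) x, e⟫ ∂μ| ≤ δ / 2 := by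
    calc |∫ x, (y x - w x) * ⟪∇ (z k) x, e⟫ ∂μ|
        ≤ ∫ x, |(y x - w x) * ⟪∇ (z k) x, e⟫| ∂μ := abs_integral_le_integral_abs
      _ ≤ ∫ x, |y x - w x| * (L * ‖e‖ + 1) ∂μ := by
          refine integral_mono (integrable_mul_inner_gradient hywi (hz k) e).abs
            (hywi.abs.mul_const _) fun x => ?_
          dsimp only
          rw [abs_mul]
          gcongr
          linarith [abs_inner_gradient_le (hz k) e x]
      _ = (∫ x, |y x - w x| ∂μ) * (L * ‖e‖ + 1) := integral_mul_const _ _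
      _ ≤ δ / 2 / (L * ‖e‖ + 1) * (L * ‖e‖ + 1) := by gcongr
      _ = δ / 2 := by field_simp
  have hsplit : ∫ x, y x * ⟪∇ (z k) x, e⟫ ∂μ =
      ∫ x, (y x - w x) * ⟪∇ (z k) x, e⟫ ∂μ + ∫ x, w x * ⟪∇ (z k) x, e⟫ ∂μ := by
    rw [← integral_add (integrable_mul_inner_gradient hywi (hz k) e)
      (integrable_mul_inner_gradient hwi (hz k) e)]
    simp only [← add_mul, sub_add_cancel]
  have hsmall := hk₀ k hk
  rw [Real.dist_eq, sub_zero] at hsmall ⊢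
  rw [hsplit]
  exact (abs_add_le _ _).trans_lt (by linarith)

lemma tendsto_integral_inner_gradient {Y : E → E} (hY : Integrable Y μ)
    (hz : ∀ k, LipschitzWith L (z k)) (hz0 : ∀ x, Tendsto (fun k => z k x) atTop (𝓝 0)) :
    Tendsto (fun k => ∫ x, ⟪Y x, ∇ (z k) x⟫ ∂μ) atTop (𝓝 0) := by
  let b := stdOrthonormalBasis ℝ E
  have hYb : ∀ i, Integrable (fun x => ⟪Y x, b i⟫) μ := fun i => hY.inner_const (b i)
  have hsum := tendsto_finsetSum Finset.univ fun i _ =>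
    tendsto_integral_mul_inner_gradient (hYb i) hz hz0 (b i)
  rw [Finset.sum_const_zero] at hsum
  refine hsum.congr fun k => ?_
  rw [← integral_finsetSum _ fun i _ => integrable_mul_inner_gradient (hYb i) (hz k) (b i)]
  refine integral_congr_ae (.of_forall fun x => ?_)
  dsimp only
  rw [← b.sum_inner_mul_inner (Y x)]
  simp only [real_inner_comm]

end WeakConvergence

section Seminorms

variable {E : Type*} [NormedAddCommGroup E]

section FiniteDimensional

variable [NormedSpace ℝ E] [FiniteDimensional ℝ E] (p : Seminorm ℝ E)

lemma isLipschitz_seminorm : IsLipschitz p := by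
  have hcont : Continuous p := continuousOn_univ.1 (p.convexOn.continuousOn isOpen_univ)
  obtain ⟨C, -, hpC⟩ := Seminorm.bound_of_continuous_normedSpace p hcont
  refine ⟨_, LipschitzWith.of_dist_le' (K := C) fun x y => ?_⟩
  rw [Real.dist_eq, dist_eq_norm]
  exact (abs_sub_map_le_sub p x y).trans (hpC _)

lemma exists_mul_norm_le_seminorm (hp : ∀ x, x ≠ 0 → 0 < p x) :
    ∃ c, 0 < c ∧ ∀ x, c * ‖x‖ ≤ p x := by
  rcases subsingleton_or_nontrivial E with _ | _
  · exact ⟨1, one_pos, fun x => by simp [Subsingleton.elim x 0]⟩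
  obtain ⟨z, hz, hmin⟩ := (isCompact_sphere (0 : E) 1).exists_isMinOn
    (NormedSpace.sphere_nonempty.2 zero_le_one) (isLipschitz_seminorm p).continuous.continuousOn
  refine ⟨p z, hp z (ne_zero_of_mem_unit_sphere ⟨z, hz⟩), fun x => ?_⟩
  rcases eq_or_ne x 0 with rfl | hx
  · simp
  have hle : p z ≤ p (‖x‖⁻¹ • x) := hmin (by simp [norm_smul, norm_ne_zero_iff.2 hx])
  rw [map_smul_eq_mul, norm_inv, norm_norm, ← div_eq_inv_mul,
    le_div_iff₀ (norm_pos_iff.2 hx)] at hle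
  exact hle

end FiniteDimensional

section Gradient

variable [InnerProductSpace ℝ E] [CompleteSpace E] (p : Seminorm ℝ E)

lemma inner_gradient_seminorm_le (x y : E) : ⟪∇ p x, y⟫ ≤ p y := by
  rw [inner_gradient_left]
  by_cases hd : DifferentiableAt ℝ p x
  · have hderiv : HasDerivWithinAt (fun t : ℝ => p (x + t • y)) (fderiv ℝ p x y) (Ioi 0) 0 :=
      (hd.hasFDerivAt.hasLineDerivAt y).hasDerivWithinAt
    refine le_of_tendsto ((hasDerivWithinAt_iff_tendsto_slope' (by simp)).1 hderiv) ?_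
    filter_upwards [self_mem_nhdsWithin] with t (ht : 0 < t)
    have htri := map_add_le_add p x (t • y)
    rw [map_smul_eq_mul, Real.norm_of_nonneg ht.le] at htri
    rw [slope_def_field, zero_smul, add_zero, sub_zero, div_le_iff₀ ht]
    linarith
  · simp [fderiv_zero_of_not_differentiableAt hd]

lemma inner_gradient_seminorm_self {x : E} (hd : DifferentiableAt ℝ p x) :
    ⟪∇ p x, x⟫ = p x := by
  rw [inner_gradient_left]
  have hline : HasDerivAt (fun t : ℝ => p (x + t • x)) (fderiv ℝ p x x) 0 :=
    hd.hasFDerivAt.hasLineDerivAt x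
  have haffine : HasDerivAt (fun t : ℝ => p x + t * p x) (p x) 0 := by
    simpa using ((hasDerivAt_id (0 : ℝ)).mul_const (p x)).const_add (p x)
  refine hline.unique (haffine.congr_of_eventuallyEq ?_)
  filter_upwards [lt_mem_nhds (show (-1 : ℝ) < 0 by norm_num)] with t ht
  rw [show x + t • x = (1 + t) • x by rw [add_smul, one_smul], map_smul_eq_mul,
    Real.norm_of_nonneg (by linarith)]
  ring

lemma gradient_seminorm_smul (c : ℝ) (x : E) : c • ∇ p (c • x) = |c| • ∇ p x := by
  refine ext_inner_right ℝ fun v => ?_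
  rw [real_inner_smul_left, real_inner_smul_left, inner_gradient_left, inner_gradient_left]
  calc c * fderiv ℝ p (c • x) v = fderiv ℝ (fun y => p (c • y)) x v := by
        rw [fderiv_comp_smul, smul_apply, smul_eq_mul]
    _ = fderiv ℝ (|c| • ⇑p) x v := by
        congr 3
        funext y
        exact map_smul_eq_mul p c y
    _ = |c| * fderiv ℝ p x v := by
        rw [fderiv_const_smul_field, Pi.smul_apply, smul_apply, smul_eq_mul]

end Gradient

end Seminorms

lemma rpow_add_mul_sub_le_rpow {a b q : ℝ} (ha : 0 ≤ a) (hb : 0 ≤ b) (hq : 1 ≤ q) :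
    a ^ q + q * a ^ (q - 1) * (b - a) ≤ b ^ q := by
  rcases ha.eq_or_lt with rfl | ha
  · rcases hq.eq_or_lt with rfl | hq
    · simp
    · rw [Real.zero_rpow (by linarith), Real.zero_rpow (by linarith)]
      simpa using Real.rpow_nonneg hb q
  · have hbernoulli := one_add_mul_self_le_rpow_one_add (s := b / a - 1) (p := q)
      (by linarith [div_nonneg hb ha.le]) hq
    rw [add_sub_cancel, Real.div_rpow hb ha.le, le_div_iff₀ (Real.rpow_pos_of_pos ha q)]
      at hbernoulli
    calc a ^ q + q * a ^ (q - 1) * (b - a) = (1 + q * (b / a - 1)) * a ^ q := by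
          rw [Real.rpow_sub ha, Real.rpow_one]
          field_simp
      _ ≤ b ^ q := hbernoulli

namespace MinkowskiNorm

variable {n : ℕ} (N : MinkowskiNorm n)

/-- A Minkowski norm as a Mathlib seminorm, which gives access to the general API. -/
def toSeminorm : Seminorm ℝ (En n) :=
  .of N.F
    (fun ξ η => by
      have hmid := N.convexOn.2 (mem_univ ξ) (mem_univ η) (show (0 : ℝ) ≤ 1 / 2 by norm_num)
        (show (0 : ℝ) ≤ 1 / 2 by norm_num) (by norm_num)
      rw [← smul_add, N.homog _ (by norm_num), smul_eq_mul, smul_eq_mul] at hmid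
      linarith)
    (fun c ξ => by
      rcases le_total 0 c with hc | hc
      · rw [N.homog c hc, Real.norm_of_nonneg hc]
      · rw [← N.even, ← neg_smul, N.homog _ (neg_nonneg.2 hc), Real.norm_of_nonpos hc])

lemma nonneg (ξ : En n) : 0 ≤ N.F ξ := apply_nonneg N.toSeminorm ξ

lemma map_zero : N.F 0 = 0 := _root_.map_zero N.toSeminorm

lemma eq_zero_iff {ξ : En n} : N.F ξ = 0 ↔ ξ = 0 :=
  ⟨fun h => by_contra fun hξ => (N.pos ξ hξ).ne' h, fun h => h ▸ N.map_zero⟩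

lemma map_add_le (ξ η : En n) : N.F (ξ + η) ≤ N.F ξ + N.F η := map_add_le_add N.toSeminorm ξ η

lemma isLipschitz : IsLipschitz N.F := isLipschitz_seminorm N.toSeminorm

protected lemma continuous : Continuous N.F := N.isLipschitz.continuous

lemma exists_le_mul_norm : ∃ C, 0 < C ∧ ∀ ξ, N.F ξ ≤ C * ‖ξ‖ :=
  Seminorm.bound_of_continuous_normedSpace N.toSeminorm N.continuous

lemma exists_mul_norm_le : ∃ c, 0 < c ∧ ∀ ξ, c * ‖ξ‖ ≤ N.F ξ :=
  exists_mul_norm_le_seminorm N.toSeminorm N.pos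

lemma measurable_comp_gradient (f : En n → ℝ) : Measurable fun x => N.F (∇ f x) :=
  N.continuous.measurable.comp (measurable_gradient f)

lemma inner_gradient_le (ξ η : En n) : ⟪∇ N.F ξ, η⟫ ≤ N.F η :=
  inner_gradient_seminorm_le N.toSeminorm ξ η

lemma inner_gradient_self (ξ : En n) : ⟪∇ N.F ξ, ξ⟫ = N.F ξ := by
  rcases eq_or_ne ξ 0 with rfl | hξ
  · rw [inner_zero_right, N.map_zero]
  · exact inner_gradient_seminorm_self N.toSeminorm
      ((N.smooth.differentiableOn (by simp)).differentiableAt (isOpen_compl_singleton.mem_nhds hξ))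

lemma rpow_add_inner_le_rpow {q : ℝ} (hq : 1 ≤ q) (ξ η : En n) :
    N.F ξ ^ q + q * N.F ξ ^ (q - 1) * ⟪∇ N.F ξ, η - ξ⟫ ≤ N.F η ^ q := by
  refine le_trans ?_ (rpow_add_mul_sub_le_rpow (N.nonneg ξ) (N.nonneg η) hq)
  rw [inner_sub_right, N.inner_gradient_self]
  have := Real.rpow_nonneg (N.nonneg ξ) (q - 1)
  gcongr
  exact N.inner_gradient_le ξ η

lemma bddAbove_polarF (x : En n) : BddAbove {c : ℝ | ∃ ξ : En n, ξ ≠ 0 ∧ c = ⟪ξ, x⟫ / N.F ξ} := by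
  obtain ⟨c, hc, hcF⟩ := N.exists_mul_norm_le
  refine ⟨c⁻¹ * ‖x‖, ?_⟩
  rintro _ ⟨ξ, hξ, rfl⟩
  rw [div_le_iff₀ (N.pos ξ hξ), mul_right_comm]
  refine (real_inner_le_norm ξ x).trans ?_
  gcongr
  rw [inv_mul_eq_div, le_div_iff₀' hc]
  exact hcF ξ

lemma inner_le_mul_polarF (ξ x : En n) : ⟪ξ, x⟫ ≤ N.F ξ * polarF N x := by
  rcases eq_or_ne ξ 0 with rfl | hξ
  · rw [inner_zero_left, N.map_zero, zero_mul]
  · exact (div_le_iff₀' (N.pos ξ hξ)).1 (le_csSup (N.bddAbove_polarF x) ⟨ξ, hξ, rfl⟩)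

lemma polarF_le {x : En n} {a : ℝ} (ha : 0 ≤ a) (h : ∀ ξ, ⟪ξ, x⟫ ≤ N.F ξ * a) :
    polarF N x ≤ a := by
  refine Real.sSup_le ?_ ha
  rintro _ ⟨ξ, hξ, rfl⟩
  exact (div_le_iff₀' (N.pos ξ hξ)).2 (h ξ)

lemma polarF_nonneg (x : En n) : 0 ≤ polarF N x := by
  rcases eq_or_ne x 0 with rfl | hx
  · exact Real.sSup_nonneg fun _ ⟨ξ, _, hξ⟩ => by rw [hξ, inner_zero_right, zero_div]
  · exact (mul_nonneg_iff_of_pos_left (N.pos x hx)).1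
      (real_inner_self_nonneg.trans (N.inner_le_mul_polarF x x))

/-- The polar norm `polarF N` as a seminorm. -/
def polar : Seminorm ℝ (En n) :=
  .ofSMulLE (polarF N)
    (le_antisymm (N.polarF_le le_rfl fun ξ => by simp) (N.polarF_nonneg 0))
    (fun x y => N.polarF_le (add_nonneg (N.polarF_nonneg x) (N.polarF_nonneg y)) fun ξ => by
      rw [inner_add_right, mul_add]
      exact add_le_add (N.inner_le_mul_polarF ξ x) (N.inner_le_mul_polarF ξ y))
    (fun c x => N.polarF_le (mul_nonneg (norm_nonneg c) (N.polarF_nonneg x)) fun ξ => by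
      have h := N.inner_le_mul_polarF (c • ξ) x
      rw [show N.F (c • ξ) = ‖c‖ * N.F ξ from map_smul_eq_mul N.toSeminorm c ξ] at h
      rw [real_inner_smul_right, ← real_inner_smul_left]
      linarith)

lemma inner_le (ξ x : En n) : ⟪ξ, x⟫ ≤ N.F ξ * N.polar x := N.inner_le_mul_polarF ξ x

lemma polar_pos {x : En n} (hx : x ≠ 0) : 0 < N.polar x :=
  (pos_iff_pos_of_mul_pos ((real_inner_self_pos.2 hx).trans_le (N.inner_le x x))).1 (N.pos x hx)

lemma exists_mul_norm_le_polar : ∃ c, 0 < c ∧ ∀ x, c * ‖x‖ ≤ N.polar x :=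
  exists_mul_norm_le_seminorm N.polar fun _ => N.polar_pos

lemma polar_gradient_le_one (ξ : En n) : N.polar (∇ N.F ξ) ≤ 1 :=
  N.polarF_le zero_le_one fun η => by
    rw [real_inner_comm, mul_one]
    exact N.inner_gradient_le ξ η

lemma apply_gradient_polar {x : En n} (hx : x ≠ 0) (hd : DifferentiableAt ℝ N.polar x) :
    N.F (∇ N.polar x) = 1 := by
  refine le_antisymm ?_ ?_
  · rw [← N.inner_gradient_self, real_inner_comm]
    exact (inner_gradient_seminorm_le N.polar x _).trans (N.polar_gradient_le_one _)
  · refine le_of_mul_le_mul_right ?_ (N.polar_pos hx)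
    rw [one_mul, ← inner_gradient_seminorm_self N.polar hd]
    simpa only [inner_gradient_seminorm_self N.polar hd] using N.inner_le (∇ N.polar x) x

end MinkowskiNorm

lemma locallyLipschitzOn_congr {X Y : Type*} [PseudoEMetricSpace X] [PseudoEMetricSpace Y]
    {s : Set X} {f g : X → Y} (hf : LocallyLipschitzOn s f) (h : EqOn g f s) :
    LocallyLipschitzOn s g := fun x hx => by
  obtain ⟨L, t, ht, hL⟩ := hf hx
  refine ⟨L, t ∩ s, inter_mem ht self_mem_nhdsWithin, fun y hy z hz => ?_⟩
  rw [h hy.2, h hz.2]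
  exact hL hy.1 hz.1

lemma IsLipschitz.comp_locallyLipschitzOn {X : Type*} [PseudoEMetricSpace X] {s : Set X}
    {φ : ℝ → ℝ} {f : X → ℝ} (hφ : IsLipschitz φ) (hf : LocallyLipschitzOn s f) :
    LocallyLipschitzOn s fun x => φ (f x) := fun x hx => by
  obtain ⟨C, hC⟩ := hφ
  obtain ⟨L, t, ht, hL⟩ := hf hx
  exact ⟨C * L, t, ht, hC.comp_lipschitzOnWith hL⟩

lemma ae_differentiableAt_of_locallyLipschitzOn {E : Type*} [NormedAddCommGroup E]
    [NormedSpace ℝ E] [FiniteDimensional ℝ E] [MeasurableSpace E] [BorelSpace E]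
    {μ : Measure E} [μ.IsAddHaarMeasure] {Ω K : Set E} {u : E → ℝ} (hΩ : IsOpen Ω)
    (hu : LocallyLipschitzOn Ω u) (hK : IsCompact K) (hKΩ : K ⊆ Ω) :
    ∀ᵐ x ∂μ, x ∈ K → DifferentiableAt ℝ u x := by
  have : ProperSpace E := FiniteDimensional.proper ℝ E
  obtain ⟨w, ⟨L, hw⟩, U, hU, hKU, -, hwu⟩ := exists_isLipschitz_eqOn_nhds hΩ hu hK hKΩ
  filter_upwards [hw.ae_differentiableAt (μ := μ)] with x hx hxK
  exact hx.congr_of_eventuallyEq (hwu.symm.eventuallyEq_of_mem (hU.mem_nhds (hKU hxK)))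

section EnergyIncrement

variable {n : ℕ} (N : MinkowskiNorm n) {Ω K : Set (En n)} {u η : En n → ℝ}

namespace MinkowskiNorm

/-- The integrand of the change of the level-set inverse mean curvature flow functional
`w ↦ ∫ F(∇w) + w F(∇u)` when `w` passes from `u` to `u + η`. -/
def energyIncrement (u η : En n → ℝ) (x : En n) : ℝ :=
  N.F (∇ u x + ∇ η x) - N.F (∇ u x) + η x * N.F (∇ u x)

lemma integrableOn_comp_gradient (hΩ : IsOpen Ω) (hu : LocallyLipschitzOn Ω u)
    (hK : IsCompact K) (hKΩ : K ⊆ Ω) : IntegrableOn (fun x => N.F (∇ u x)) K := by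
  obtain ⟨w, ⟨L, hw⟩, U, hU, hKU, -, hwu⟩ := exists_isLipschitz_eqOn_nhds hΩ hu hK hKΩ
  obtain ⟨C, hC, hNC⟩ := N.exists_le_mul_norm
  refine Measure.integrableOn_of_bounded (M := C * L) hK.measure_lt_top.ne
    (N.measurable_comp_gradient u).aestronglyMeasurable ?_
  filter_upwards [ae_restrict_mem hK.measurableSet] with x hx
  rw [Real.norm_of_nonneg (N.nonneg _),
    ← (hwu.eventuallyEq_of_mem (hU.mem_nhds (hKU hx))).gradient_eq]
  exact (hNC _).trans (by gcongr; exact norm_gradient_le_of_lipschitzWith hw x)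

lemma ae_energyIncrement_eq_zero (u : En n → ℝ) (hη : IsLipschitz η) :
    ∀ᵐ x, η x = 0 → N.energyIncrement u η x = 0 := by
  filter_upwards [hη.ae_gradient_eq_zero] with x hx h0
  rw [energyIncrement, hx h0, h0]
  simp

lemma integrable_energyIncrement (hΩ : IsOpen Ω) (hu : LocallyLipschitzOn Ω u)
    (hK : IsCompact K) (hKΩ : K ⊆ Ω) (hη : IsLipschitz η) (hη0 : ∀ x ∉ K, η x = 0) :
    Integrable (N.energyIncrement u η) := by
  have hu' := N.integrableOn_comp_gradient hΩ hu hK hKΩ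
  have huη := N.integrableOn_comp_gradient hΩ (hu.add (hη.locallyLipschitzOn Ω)) hK hKΩ
  have hincr : IntegrableOn (N.energyIncrement u η) K := by
    refine ((huη.sub hu').add
      (hu'.continuousOn_mul hη.continuous.continuousOn hK)).congr ?_
    filter_upwards [ae_restrict_mem hK.measurableSet,
      ae_restrict_of_ae (ae_differentiableAt_of_locallyLipschitzOn hΩ hu hK hKΩ),
      ae_restrict_of_ae hη.ae_differentiableAt] with x hx hux hηx
    simp only [energyIncrement, Pi.add_apply, Pi.sub_apply, gradient_fun_add (hux hx) hηx]
  refine (integrableOn_iff_integrable_of_support_subset fun x hx => ?_).1 hincr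
  by_contra hxK
  have hη0' : ∀ᶠ y in 𝓝 x, η y = 0 := by
    filter_upwards [hK.isClosed.isOpen_compl.mem_nhds hxK] with y hy using hη0 y hy
  have hgrad : ∇ η x = 0 := by
    rw [Filter.EventuallyEq.gradient_eq (f₁ := η) (f := fun _ => 0) hη0', gradient_fun_const]
  exact hx (by simp [energyIncrement, hgrad, hη0 x hxK])

lemma setIntegral_sub_setIntegral_eq_integral_energyIncrement {φ : En n → ℝ} (hΩ : IsOpen Ω)
    (hu : LocallyLipschitzOn Ω u) (hK : IsCompact (closure K)) (hKΩ : closure K ⊆ Ω)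
    (hη : IsLipschitz η) (hη0 : ∀ x ∉ K, η x = 0) (hφ : ∀ x ∈ Ω, φ x = u x + η x) :
    (∫ x in K, (N.F (∇ φ x) + φ x * N.F (∇ u x))) -
      ∫ x in K, (N.F (∇ u x) + u x * N.F (∇ u x)) = ∫ x, N.energyIncrement u η x := by
  have huη := hu.add (hη.locallyLipschitzOn Ω)
  have hφlip : LocallyLipschitzOn Ω φ := locallyLipschitzOn_congr huη hφ
  have hFu := N.integrableOn_comp_gradient hΩ hu hK hKΩ
  have hint {w : En n → ℝ} (hw : LocallyLipschitzOn Ω w) :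
      IntegrableOn (fun x => N.F (∇ w x) + w x * N.F (∇ u x)) K :=
    ((N.integrableOn_comp_gradient hΩ hw hK hKΩ).add
      (hFu.continuousOn_mul (hw.continuousOn.mono hKΩ) hK)).mono_set subset_closure
  have hmem : ∀ᵐ x ∂volume.restrict K, x ∈ closure K :=
    ae_mono (Measure.restrict_mono_set _ subset_closure)
      (ae_restrict_mem isClosed_closure.measurableSet)
  rw [← integral_sub (hint hφlip) (hint hu), ← setIntegral_eq_integral_of_ae_compl_eq_zero
    ((N.ae_energyIncrement_eq_zero u hη).mono fun x hx hxK => hx (hη0 x hxK))]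
  refine integral_congr_ae ?_
  filter_upwards [hmem,
    ae_restrict_of_ae (ae_differentiableAt_of_locallyLipschitzOn hΩ hu hK hKΩ),
    ae_restrict_of_ae hη.ae_differentiableAt] with x hx hux hηx
  have hφnhds : φ =ᶠ[𝓝 x] fun y => u y + η y := by
    filter_upwards [hΩ.mem_nhds (hKΩ hx)] with y hy using hφ y hy
  rw [hφnhds.gradient_eq, gradient_fun_add (hux hx) hηx, hφ x (hKΩ hx), energyIncrement]
  ring

end MinkowskiNorm

lemma isWeakSolIAMCF_iff {N : MinkowskiNorm n} (hΩ : IsOpen Ω) :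
    IsWeakSolIAMCF N Ω u ↔ LocallyLipschitzOn Ω u ∧
      ∀ K, IsCompact K → K ⊆ Ω → ∀ η, IsLipschitz η → (∀ x ∉ K, η x = 0) →
        0 ≤ ∫ x, N.energyIncrement u η x := by
  refine ⟨fun hu => ⟨hu.1, fun K hK hKΩ η hη hη0 => ?_⟩,
    fun hu => ⟨hu.1, fun K hK hKΩ φ hφ hφu => ?_⟩⟩
  · have hcl := hK.isClosed.closure_eq
    rw [← N.setIntegral_sub_setIntegral_eq_integral_energyIncrement hΩ hu.1 (K := K)
      (by rwa [hcl]) (by rwa [hcl]) hη hη0 (φ := fun x => u x + η x) fun _ _ => rfl, sub_nonneg]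
    exact hu.2 K (by rwa [hcl]) (by rwa [hcl]) _
      (LocallyLipschitzOn.add hu.1 (hη.locallyLipschitzOn Ω)) fun x hx => by simp [hη0 x hx.2]
  · let η : En n → ℝ := Ω.indicator (φ - u)
    have hη0 : ∀ x ∉ K, η x = 0 := fun x hx =>
      indicator_apply_eq_zero.2 fun hxΩ => sub_eq_zero.2 (hφu x ⟨hxΩ, hx⟩)
    have hηlip : LocallyLipschitzOn Ω η :=
      locallyLipschitzOn_congr (LocallyLipschitzOn.sub hφ hu.1) fun x hx => by simp [η, hx]
    have hη0' : ∀ x ∉ closure K, η x = 0 := fun x hx => hη0 x fun h => hx (subset_closure h)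
    have hη : IsLipschitz η :=
      isLipschitz_of_locallyLipschitzOn_of_eq_zero_off hΩ hηlip hK hKΩ hη0'
    rw [← sub_nonneg, N.setIntegral_sub_setIntegral_eq_integral_energyIncrement hΩ hu.1 hK hKΩ
      hη hη0 fun x hx => by simp [η, hx]]
    exact hu.2 _ hK hKΩ η hη hη0'

end EnergyIncrement

section Uniqueness

lemma isCompact_setOf_mem_and_le {X : Type*} [TopologicalSpace X] {S : Set X} {G : X → ℝ}
    (hS : IsClosed S) (hG : ContinuousOn G S) (hlim : Tendsto G (cocompact X) atBot) (c : ℝ) :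
    IsCompact {x | x ∈ S ∧ c ≤ G x} := by
  obtain ⟨T, hT, hTG⟩ := mem_cocompact.1 (hlim.eventually_lt_atBot c)
  refine hT.of_isClosed_subset (hG.preimage_isClosed_of_isClosed hS isClosed_Ici) fun x hx => ?_
  by_contra hxT
  exact absurd hx.2 (not_le.2 (hTG hxT))

/-- The truncated comparison function of the uniqueness argument: it is positive somewhere as soon
as `v` exceeds `u` somewhere, for `σ < 1` close to `1` and `t` large. -/
def truncatedGap {X : Type*} (u v : X → ℝ) (σ t : ℝ) (x : X) : ℝ :=
  min (v x) t - σ⁻¹ * u x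

lemma exists_truncatedGap_pos {X : Type*} {u v : X → ℝ} {x : X} (h : u x < v x) :
    ∃ σ t, 0 < σ ∧ σ < 1 ∧ 0 ≤ t ∧ 0 < truncatedGap u v σ t x := by
  have hcont : ContinuousAt (fun σ : ℝ => v x - σ⁻¹ * u x) 1 := by fun_prop (disch := norm_num)
  have hgap : ∀ᶠ σ in 𝓝[<] (1 : ℝ), 0 < v x - σ⁻¹ * u x :=
    nhdsWithin_le_nhds (hcont.eventually (lt_mem_nhds (by simpa using h)))
  have hpos : ∀ᶠ σ in 𝓝[<] (1 : ℝ), 0 < σ := nhdsWithin_le_nhds (lt_mem_nhds one_pos)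
  obtain ⟨σ, hσ, hσ0, hσ1⟩ := (hgap.and (hpos.and self_mem_nhdsWithin)).exists
  refine ⟨σ, max (v x) 0, hσ0, hσ1, le_max_right _ _, ?_⟩
  rwa [truncatedGap, min_eq_left (le_max_left _ _)]

section Topology

variable {X : Type*} [TopologicalSpace X] {Ω : Set X} {u v : X → ℝ} {σ t : ℝ}

lemma tendsto_truncatedGap (hσ : 0 < σ) (hu : Tendsto u (cocompact X) atTop) :
    Tendsto (truncatedGap u v σ t) (cocompact X) atBot := by
  refine tendsto_atBot_mono (fun x => sub_le_sub_right (min_le_right (v x) t) _) ?_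
  simpa only [sub_eq_add_neg, Function.comp_def] using tendsto_atBot_add_const_left _ t
    (tendsto_neg_atTop_atBot.comp (hu.const_mul_atTop (inv_pos.2 hσ)))

lemma exists_isCompact_superlevel (hΩ : IsOpen Ω) (hσ : 0 < σ) (ht : 0 ≤ t) {ε : ℝ} (hε : 0 < ε)
    (hu : ContinuousOn u (closure Ω)) (hv : ContinuousOn v (closure Ω))
    (hu0 : ∀ x ∈ frontier Ω, u x = 0) (hv0 : ∀ x ∈ frontier Ω, v x = 0)
    (hlim : Tendsto u (cocompact X) atTop) {x₀ : X} (hx₀ : x₀ ∈ Ω)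
    (hpos : 0 < truncatedGap u v σ t x₀) :
    ∃ c, IsCompact {x | x ∈ closure Ω ∧ c ≤ truncatedGap u v σ t x} ∧
      {x | x ∈ closure Ω ∧ c ≤ truncatedGap u v σ t x} ⊆ Ω ∧
      (∃ x ∈ closure Ω, c < truncatedGap u v σ t x) ∧
      ∀ x ∈ closure Ω, truncatedGap u v σ t x ≤ c + ε := by
  set G := truncatedGap u v σ t
  have hG : ContinuousOn G (closure Ω) := (hv.inf continuousOn_const).sub (hu.const_mul _)
  have hcompact := isCompact_setOf_mem_and_le isClosed_closure hG (tendsto_truncatedGap hσ hlim)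
  obtain ⟨xm, ⟨hxm, hxm0⟩, hmax⟩ := (hcompact (G x₀)).exists_isMaxOn
    ⟨x₀, subset_closure hx₀, le_rfl⟩ (hG.mono fun x hx => hx.1)
  have hGxm : ∀ x ∈ closure Ω, G x ≤ G xm := fun x hx =>
    (le_total (G x₀) (G x)).elim (fun h => hmax ⟨hx, h⟩) fun h => h.trans hxm0
  have hm : 0 < G xm := hpos.trans_le hxm0
  have hc : 0 < max (G xm / 2) (G xm - ε) := lt_max_of_lt_left (half_pos hm)
  refine ⟨max (G xm / 2) (G xm - ε), hcompact _, fun x hx => ?_,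
    ⟨xm, hxm, max_lt (half_lt_self hm) (sub_lt_self _ hε)⟩, fun x hx => ?_⟩
  · by_contra hxΩ
    have hxf : x ∈ frontier Ω := by rw [hΩ.frontier_eq]; exact ⟨hx.1, hxΩ⟩
    have hG0 : G x = 0 := by simp [G, truncatedGap, hu0 x hxf, hv0 x hxf, ht]
    exact absurd hx.2 (not_le.2 (hG0 ▸ hc))
  · linarith [hGxm x hx, le_max_right (G xm / 2) (G xm - ε)]

end Topology

section Bump

lemma isLipschitz_indicator_superlevel {X : Type*} [MetricSpace X] [ProperSpace X] {Ω : Set X}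
    {g : X → ℝ} {c : ℝ} (hΩ : IsOpen Ω) (hg : LocallyLipschitzOn Ω g)
    (hK : IsCompact {x | x ∈ closure Ω ∧ c ≤ g x}) (hKΩ : {x | x ∈ closure Ω ∧ c ≤ g x} ⊆ Ω) :
    IsLipschitz ({x | x ∈ closure Ω ∧ c ≤ g x}.indicator fun x => g x - c) := by
  refine isLipschitz_of_locallyLipschitzOn_of_eq_zero_off hΩ (locallyLipschitzOn_congr
    (((IsLipschitz.const 0).max ⟨1, .id⟩).comp_locallyLipschitzOn
      ((IsLipschitz.sub ⟨1, .id⟩ (IsLipschitz.const c)).comp_locallyLipschitzOn hg))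
    fun x hx => ?_) hK hKΩ fun x hx => indicator_of_notMem hx _
  by_cases hc : c ≤ g x
  · simp [indicator, subset_closure hx, hc]
  · simp [indicator, hc, (not_le.1 hc).le]

variable {E : Type*} [NormedAddCommGroup E] [InnerProductSpace ℝ E]

lemma gradient_indicator_superlevel [CompleteSpace E] {Ω : Set E} {g : E → ℝ} {c : ℝ}
    (hΩ : IsOpen Ω) (hg : ContinuousOn g Ω) {x : E} (hx : x ∈ Ω) (hcx : c < g x) :
    ∇ ({x | x ∈ closure Ω ∧ c ≤ g x}.indicator fun x => g x - c) x = ∇ g x := by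
  have hev : {x | x ∈ closure Ω ∧ c ≤ g x}.indicator (fun x => g x - c) =ᶠ[𝓝 x]
      fun y => g y - c := by
    filter_upwards [hΩ.mem_nhds hx, (hg.continuousAt (hΩ.mem_nhds hx)).eventually
      (lt_mem_nhds hcx)] with y hy hcy
    exact indicator_of_mem (s := {x | x ∈ closure Ω ∧ c ≤ g x}) ⟨subset_closure hy, hcy.le⟩ _
  rw [hev.gradient_eq, gradient, fderiv_sub_const, gradient]

variable [FiniteDimensional ℝ E] [MeasurableSpace E] [BorelSpace E] {μ : Measure E}
  [μ.IsAddHaarMeasure]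

lemma locallyLipschitzOn_truncatedGap {X : Type*} [PseudoEMetricSpace X] {Ω : Set X} {u v : X → ℝ}
    (hu : LocallyLipschitzOn Ω u) (hv : LocallyLipschitzOn Ω v) (σ t : ℝ) :
    LocallyLipschitzOn Ω (truncatedGap u v σ t) :=
  ((IsLipschitz.min ⟨1, .id⟩ (IsLipschitz.const t)).comp_locallyLipschitzOn hv).sub
    ((IsLipschitz.const_mul ⟨1, .id⟩ σ⁻¹).comp_locallyLipschitzOn hu)

lemma ae_gradient_truncatedGap {Ω K : Set E} {u v : E → ℝ} (hΩ : IsOpen Ω)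
    (hu : LocallyLipschitzOn Ω u) (hv : LocallyLipschitzOn Ω v) (hK : IsCompact K) (hKΩ : K ⊆ Ω)
    (σ t : ℝ) :
    ∀ᵐ x ∂μ, x ∈ K →
      ∇ (truncatedGap u v σ t) x = (if v x < t then ∇ v x else 0) - σ⁻¹ • ∇ u x := by
  have : ProperSpace E := FiniteDimensional.proper ℝ E
  obtain ⟨w, hw, U, hU, hKU, -, hwv⟩ := exists_isLipschitz_eqOn_nhds hΩ hv hK hKΩ
  filter_upwards [hw.ae_gradient_min (IsLipschitz.const t), (hw.min (.const t)).ae_differentiableAt,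
    ae_differentiableAt_of_locallyLipschitzOn hΩ hu hK hKΩ] with x hmin hdiff hux hx
  have hev : w =ᶠ[𝓝 x] v := hwv.eventuallyEq_of_mem (hU.mem_nhds (hKU hx))
  have hgap : truncatedGap u v σ t =ᶠ[𝓝 x] fun y => min (w y) t - σ⁻¹ * u y := by
    filter_upwards [hev] with y hy
    rw [truncatedGap, hy]
  rw [hgap.gradient_eq, gradient_fun_sub hdiff ((hux hx).const_mul _), hmin, hev.eq_of_nhds,
    hev.gradient_eq, gradient_fun_const, gradient_fun_const_mul σ⁻¹ (hux hx)]

end Bump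

section PointwiseInequality

variable {n : ℕ} (N : MinkowskiNorm n)

/- The three competitors `v - d`, `u + σ d` and `u + σ d² / 2` are weighted so that the terms
`F a - F b` without a sign cancel; here `ξ = ∇v`, `σ b = ∇u` and `a - b = ∇d`. -/
lemma le_neg_weighted_increments {ξ a b : En n} {σ δ d : ℝ} (hσ : 0 < σ) (hδ : 0 ≤ δ)
    (hd0 : 0 ≤ d) (hd1 : d ≤ 1) (ha : a = ξ ∨ a = 0) :
    d * (δ * N.F a + (1 - σ * (1 + δ) - σ * d / 2) * N.F b) ≤
      -((1 + δ) * (N.F (ξ + (-1 : ℝ) • (a - b)) - N.F ξ + -1 * d * N.F ξ) +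
        (1 + δ) / σ * (N.F (σ • b + σ • (a - b)) - N.F (σ • b) + σ * d * N.F (σ • b)) +
        1 / σ * (N.F (σ • b + (σ * d) • (a - b)) - N.F (σ • b) +
          σ / 2 * (d * d) * N.F (σ • b))) := by
  have hminus : N.F (ξ + (-1 : ℝ) • (a - b)) - N.F ξ + -1 * d * N.F ξ ≤
      N.F b - N.F a - d * N.F a := by
    rcases ha with rfl | rfl
    · rw [show a + (-1 : ℝ) • (a - b) = b by module]
      linarith
    · rw [show ξ + (-1 : ℝ) • (0 - b) = ξ + b by module, N.map_zero]
      linarith [N.map_add_le ξ b, mul_nonneg hd0 (N.nonneg ξ)]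
  have hplus : N.F (σ • b + σ • (a - b)) - N.F (σ • b) + σ * d * N.F (σ • b) =
      σ * (N.F a - N.F b + σ * d * N.F b) := by
    rw [show σ • b + σ • (a - b) = σ • a by module, N.homog σ hσ.le, N.homog σ hσ.le]
    ring
  have hsquare : N.F (σ • b + (σ * d) • (a - b)) - N.F (σ • b) + σ / 2 * (d * d) * N.F (σ • b) ≤
      σ * (d * (N.F a - N.F b) + σ * (d * d / 2) * N.F b) := by
    rw [show σ • b + (σ * d) • (a - b) = σ • ((1 - d) • b + d • a) by module, N.homog σ hσ.le,
      N.homog σ hσ.le]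
    have hconv := N.map_add_le ((1 - d) • b) (d • a)
    rw [N.homog _ (sub_nonneg.2 hd1), N.homog _ hd0] at hconv
    linarith [mul_le_mul_of_nonneg_left hconv hσ.le]
  have hminus' := mul_le_mul_of_nonneg_left hminus (show 0 ≤ 1 + δ by linarith)
  have hsquare' := mul_le_mul_of_nonneg_left hsquare (show 0 ≤ 1 / σ by positivity)
  have hplus' : (1 + δ) / σ * (N.F (σ • b + σ • (a - b)) - N.F (σ • b) + σ * d * N.F (σ • b)) =
      (1 + δ) * (N.F a - N.F b + σ * d * N.F b) := by
    rw [hplus]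
    field_simp
  rw [← mul_assoc (1 / σ) σ, one_div_mul_cancel hσ.ne', one_mul] at hsquare'
  linarith

end PointwiseInequality

variable {n : ℕ} {N : MinkowskiNorm n} {Ω K : Set (En n)} {u v d : En n → ℝ} {σ δ t : ℝ}

/-- The weighted sum of the energy increments of the competitors `v - d` for `v`, and `u + σ d`
and `u + σ d² / 2` for `u`. -/
def weightedIncrement (N : MinkowskiNorm n) (u v d : En n → ℝ) (σ δ : ℝ) (x : En n) : ℝ :=
  (1 + δ) * N.energyIncrement v (fun x => -1 * d x) x +
    (1 + δ) / σ * N.energyIncrement u (fun x => σ * d x) x +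
    1 / σ * N.energyIncrement u (fun x => σ / 2 * (d x * d x)) x

lemma integrable_weightedIncrement_and_integral_nonneg (hΩ : IsOpen Ω) (hu : IsWeakSolIAMCF N Ω u)
    (hv : IsWeakSolIAMCF N Ω v) (hK : IsCompact K) (hKΩ : K ⊆ Ω) (hσ : 0 < σ) (hδ : 0 ≤ δ)
    (hd : IsLipschitz d) (hdK : ∀ x ∉ K, d x = 0) :
    Integrable (weightedIncrement N u v d σ δ) ∧ 0 ≤ ∫ x, weightedIncrement N u v d σ δ x := by
  rw [isWeakSolIAMCF_iff hΩ] at hu hv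
  have hd2 : IsLipschitz fun x => d x * d x := hd.mul_hasCompactSupport hd (.intro hK hdK)
  have hmul (c : ℝ) : ∀ x ∉ K, c * d x = 0 := fun x hx => by rw [hdK x hx, mul_zero]
  have hsq : ∀ x ∉ K, σ / 2 * (d x * d x) = 0 := fun x hx => by simp [hdK x hx]
  have i₁ := (N.integrable_energyIncrement hΩ hv.1 hK hKΩ (hd.const_mul (-1))
    (hmul _)).const_mul (1 + δ)
  have i₂ := (N.integrable_energyIncrement hΩ hu.1 hK hKΩ (hd.const_mul σ)
    (hmul _)).const_mul ((1 + δ) / σ)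
  have i₃ := (N.integrable_energyIncrement hΩ hu.1 hK hKΩ (hd2.const_mul (σ / 2))
    hsq).const_mul (1 / σ)
  have h₁ := hv.2 K hK hKΩ _ (hd.const_mul (-1)) (hmul _)
  have h₂ := hu.2 K hK hKΩ _ (hd.const_mul σ) (hmul _)
  have h₃ := hu.2 K hK hKΩ _ (hd2.const_mul (σ / 2)) hsq
  refine ⟨(i₁.add i₂).add i₃, ?_⟩
  calc 0 ≤ (1 + δ) * ∫ x, N.energyIncrement v (fun x => -1 * d x) x := by positivity
    _ ≤ _ := le_add_of_nonneg_right (by positivity :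
        0 ≤ (1 + δ) / σ * ∫ x, N.energyIncrement u (fun x => σ * d x) x)
    _ ≤ _ := le_add_of_nonneg_right (by positivity :
        0 ≤ 1 / σ * ∫ x, N.energyIncrement u (fun x => σ / 2 * (d x * d x)) x)
    _ = ∫ x, weightedIncrement N u v d σ δ x := by
        rw [← integral_const_mul, ← integral_const_mul, ← integral_const_mul,
          ← integral_add i₁ i₂]
        exact (integral_add (i₁.add i₂) i₃).symm

lemma ae_le_neg_weightedIncrement (hd : IsLipschitz d) (hd0 : ∀ x, 0 ≤ d x) (hd1 : ∀ x, d x ≤ 1)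
    (hσ : 0 < σ) (hδ : 0 ≤ δ)
    (hgrad : ∀ᵐ x, 0 < d x → ∇ d x = (if v x < t then ∇ v x else 0) - σ⁻¹ • ∇ u x) :
    ∀ᵐ x, d x * (δ * N.F (if v x < t then ∇ v x else 0) +
      (1 - σ * (1 + δ) - σ * d x / 2) * N.F (σ⁻¹ • ∇ u x)) ≤ -weightedIncrement N u v d σ δ x := by
  filter_upwards [hd.ae_gradient_eq_zero, hd.ae_differentiableAt, hgrad] with x hzero hdx hx
  have hsq : ∇ (fun y => σ / 2 * (d y * d y)) x = (σ * d x) • ∇ d x := by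
    rw [gradient_fun_const_mul (f := fun y => d y * d y) _ (hdx.mul hdx),
      gradient_fun_mul hdx hdx, ← add_smul, smul_smul]
    congr 1
    ring
  simp only [weightedIncrement, MinkowskiNorm.energyIncrement, gradient_fun_const_mul _ hdx, hsq]
  rcases (hd0 x).eq_or_lt with h0 | hpos
  · simp [← h0, hzero h0.symm]
  · have hu : ∇ u x = σ • σ⁻¹ • ∇ u x := (smul_inv_smul₀ hσ.ne' _).symm
    rw [hx hpos, hu, inv_smul_smul₀ hσ.ne']
    exact le_neg_weighted_increments N hσ hδ (hd0 x) (hd1 x) (ite_eq_or_eq _ _ _)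

lemma ae_gradient_eq_zero_of_bump (hΩ : IsOpen Ω) (hu : IsWeakSolIAMCF N Ω u)
    (hv : IsWeakSolIAMCF N Ω v) (hK : IsCompact K) (hKΩ : K ⊆ Ω) (hσ0 : 0 < σ) (hσ1 : σ < 1)
    (hd : IsLipschitz d) (hdK : ∀ x ∉ K, d x = 0) (hd0 : ∀ x, 0 ≤ d x)
    (hdσ : ∀ x, d x ≤ (1 - σ) / 2)
    (hgrad : ∀ᵐ x, 0 < d x → ∇ d x = (if v x < t then ∇ v x else 0) - σ⁻¹ • ∇ u x) :
    ∀ᵐ x, ∇ d x = 0 := by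
  set δ := (1 - σ) / 2 with hδ
  have hδ0 : 0 < δ := by linarith
  have hκ (x : En n) : 0 < 1 - σ * (1 + δ) - σ * d x / 2 := by nlinarith [hdσ x]
  obtain ⟨hint, hnonneg⟩ := integrable_weightedIncrement_and_integral_nonneg hΩ hu hv hK hKΩ hσ0
    hδ0.le hd hdK
  have hle := ae_le_neg_weightedIncrement (N := N) hd hd0
    (fun x => (hdσ x).trans (by linarith)) hσ0 hδ0.le hgrad
  have hlow (x : En n) : 0 ≤ d x * (δ * N.F (if v x < t then ∇ v x else 0) +
      (1 - σ * (1 + δ) - σ * d x / 2) * N.F (σ⁻¹ • ∇ u x)) :=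
    mul_nonneg (hd0 x) (add_nonneg (mul_nonneg hδ0.le (N.nonneg _))
      (mul_nonneg (hκ x).le (N.nonneg _)))
  have hneg : 0 ≤ᵐ[volume] fun x => -weightedIncrement N u v d σ δ x :=
    hle.mono fun x hx => (hlow x).trans hx
  have hzero := (integral_eq_zero_iff_of_nonneg_ae hneg hint.neg).1 (le_antisymm
    (by rw [integral_neg]; linarith) (integral_nonneg_of_ae hneg))
  filter_upwards [hle, hzero, hgrad, hd.ae_gradient_eq_zero] with x hx hx0 hdx hd0x
  rcases (hd0 x).eq_or_lt with h0 | hpos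
  · exact hd0x h0.symm
  have hsum := (mul_eq_zero.1 (le_antisymm (hx.trans hx0.le) (hlow x))).resolve_left hpos.ne'
  rw [add_eq_zero_iff_of_nonneg (mul_nonneg hδ0.le (N.nonneg _))
    (mul_nonneg (hκ x).le (N.nonneg _)), mul_eq_zero, mul_eq_zero,
    or_iff_right hδ0.ne', or_iff_right (hκ x).ne', N.eq_zero_iff, N.eq_zero_iff] at hsum
  rw [hdx hpos, hsum.1, hsum.2, sub_zero]

theorem weakSolIAMCF_le (hn : 0 < n) (hΩ : IsOpen Ω)
    (hu : IsWeakSolIAMCF N Ω u) (hv : IsWeakSolIAMCF N Ω v)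
    (hucont : ContinuousOn u (closure Ω)) (hvcont : ContinuousOn v (closure Ω))
    (hu0 : ∀ x ∈ frontier Ω, u x = 0) (hv0 : ∀ x ∈ frontier Ω, v x = 0)
    (hlim : Tendsto u (cocompact (En n)) atTop) : ∀ x ∈ Ω, v x ≤ u x := by
  by_contra! ⟨x₀, hx₀, hlt⟩
  have : Nonempty (Fin n) := ⟨⟨0, hn⟩⟩
  obtain ⟨σ, t, hσ0, hσ1, ht, hpos⟩ := exists_truncatedGap_pos hlt
  obtain ⟨c, hK, hKΩ, ⟨xm, hxm, hcxm⟩, hmax⟩ := exists_isCompact_superlevel hΩ hσ0 ht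
    (half_pos (sub_pos.2 hσ1)) hucont hvcont hu0 hv0 hlim hx₀ hpos
  have hgap : LocallyLipschitzOn Ω (truncatedGap u v σ t) :=
    locallyLipschitzOn_truncatedGap hu.1 hv.1 σ t
  set K := {x | x ∈ closure Ω ∧ c ≤ truncatedGap u v σ t x}
  set d := K.indicator fun x => truncatedGap u v σ t x - c
  have hd : IsLipschitz d := isLipschitz_indicator_superlevel hΩ hgap hK hKΩ
  have hdK : ∀ x ∉ K, d x = 0 := fun x hx => indicator_of_notMem hx _
  have hd0 : ∀ x, 0 ≤ d x := indicator_nonneg fun x hx => sub_nonneg.2 hx.2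
  have hdσ : ∀ x, d x ≤ (1 - σ) / 2 := fun x =>
    indicator_apply_le' (fun hx => by linarith [hmax x hx.1]) fun _ => by linarith
  have hgrad : ∀ᵐ x, 0 < d x → ∇ d x = (if v x < t then ∇ v x else 0) - σ⁻¹ • ∇ u x := by
    filter_upwards [ae_gradient_truncatedGap hΩ hu.1 hv.1 hK hKΩ σ t] with x hx hdx
    have hxK : x ∈ K := by_contra fun h => hdx.ne' (hdK x h)
    have hcx : c < truncatedGap u v σ t x := by
      simpa only [d, indicator_of_mem hxK, sub_pos] using hdx
    rw [← hx hxK]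
    exact gradient_indicator_superlevel hΩ hgap.continuousOn (hKΩ hxK) hcx
  have hdzero := eq_zero_of_ae_gradient_eq_zero hd (.intro hK hdK) hd0
    (ae_gradient_eq_zero_of_bump hΩ hu hv hK hKΩ hσ0 hσ1 hd hdK hd0 hdσ hgrad) xm
  have hxmK : xm ∈ K := ⟨hxm, hcxm.le⟩
  exact (sub_pos.2 hcxm).ne' ((indicator_of_mem hxmK _).symm.trans hdzero)

end Uniqueness

section TouchingWulffShapes

lemma exists_abs_sub_sub_inner_gradient_le {E : Type*} [NormedAddCommGroup E]
    [InnerProductSpace ℝ E] [FiniteDimensional ℝ E] {g : E → ℝ} {U S : Set E} (hU : IsOpen U)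
    (hg : ContDiffOn ℝ 2 g U) (hS : IsCompact S) (hSU : S ⊆ U) :
    ∃ δ B : ℝ, 0 < δ ∧ 0 < B ∧ ∀ ν ∈ S, ∀ w : E, ‖w‖ ≤ δ →
      |g (ν + w) - g ν - ⟪∇ g ν, w⟫| ≤ B * ‖w‖ ^ 2 := by
  have : ProperSpace E := FiniteDimensional.proper ℝ E
  obtain ⟨δ, hδ, hδU⟩ := hS.exists_cthickening_subset_open hU hSU
  have hfderiv : LocallyLipschitzOn (cthickening δ S) (fderiv ℝ g) := by
    intro x hx
    obtain ⟨C, t, ht, hC⟩ := ((hg.fderiv_of_isOpen (m := 1) hU (by norm_num)).contDiffAt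
      (hU.mem_nhds (hδU hx))).exists_lipschitzOnWith
    exact ⟨C, t, mem_nhdsWithin_of_mem_nhds ht, hC⟩
  obtain ⟨L, hL⟩ := hfderiv.exists_lipschitzOnWith_of_compact hS.cthickening
  refine ⟨δ, L + 1, hδ, by positivity, fun ν hν w hw => ?_⟩
  have hball : closedBall ν ‖w‖ ⊆ cthickening δ S := fun x hx =>
    mem_cthickening_of_dist_le x ν δ S hν ((mem_closedBall.1 hx).trans hw)
  have hνball : ν ∈ closedBall ν ‖w‖ := mem_closedBall_self (norm_nonneg w)
  have hdiff : ∀ x ∈ closedBall ν ‖w‖,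
      HasFDerivWithinAt g (fderiv ℝ g x) (closedBall ν ‖w‖) x := fun x hx =>
    ((hg.differentiableOn two_ne_zero).differentiableAt
      (hU.mem_nhds (hδU (hball hx)))).hasFDerivAt.hasFDerivWithinAt
  have hbound : ∀ x ∈ closedBall ν ‖w‖, ‖fderiv ℝ g x - fderiv ℝ g ν‖ ≤ L * ‖w‖ := fun x hx =>
    (hL.norm_sub_le (hball hx) (hball hνball)).trans
      (mul_le_mul_of_nonneg_left (mem_closedBall_iff_norm.1 hx) L.2)
  have hmean := (convex_closedBall ν ‖w‖).norm_image_sub_le_of_norm_hasFDerivWithin_le' hdiff hbound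
    hνball (y := ν + w) (by simp)
  rw [Real.norm_eq_abs, add_sub_cancel_left, ← inner_gradient_left] at hmean
  nlinarith [sq_nonneg ‖w‖]

variable {n : ℕ} (N : MinkowskiNorm n)

lemma MinkowskiNorm.exists_norm_sub_gradient_le_of_polar_le_one :
    ∃ M, 0 < M ∧ ∀ z ξ, N.polar z ≤ 1 → ‖z - ∇ N.F ξ‖ ≤ M := by
  obtain ⟨c, hc, hlow⟩ := N.exists_mul_norm_le_polar
  have hball (z : En n) (hz : N.polar z ≤ 1) : ‖z‖ ≤ c⁻¹ := by
    rw [← mul_one c⁻¹, ← div_eq_inv_mul, le_div_iff₀' hc]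
    exact (hlow z).trans hz
  exact ⟨c⁻¹ + c⁻¹, by positivity, fun z ξ hz => (norm_sub_le _ _).trans
    (add_le_add (hball z hz) (hball _ (N.polar_gradient_le_one ξ)))⟩

/- Uniform strict convexity of the polar ball at `∇ F ν`: test `⟪η, z⟫ ≤ F η` with
`η = ν + s (z - ∇ F ν)` for a small `s`, and expand `F η` to second order. -/
lemma MinkowskiNorm.exists_mul_norm_sub_gradient_sq_le {S : Set (En n)} (hS : IsCompact S)
    (h0 : ∀ ν ∈ S, ν ≠ 0) :
    ∃ c, 0 < c ∧ ∀ ν ∈ S, ∀ z, N.polar z ≤ 1 → c * ‖z - ∇ N.F ν‖ ^ 2 ≤ N.F ν - ⟪ν, z⟫ := by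
  obtain ⟨δ, B, hδ, hB, htaylor⟩ := exists_abs_sub_sub_inner_gradient_le isOpen_compl_singleton
    (N.smooth.of_le (WithTop.coe_le_coe.2 le_top)) hS h0
  obtain ⟨M, hM, hnorm⟩ := N.exists_norm_sub_gradient_le_of_polar_le_one
  set s := min (1 / (2 * B)) (δ / M)
  have hs : 0 < s := by positivity
  have hsB : s * B ≤ 1 / 2 := by
    linarith [(le_div_iff₀ (by positivity)).1 (min_le_left (1 / (2 * B)) (δ / M))]
  have hsM : s * M ≤ δ := (le_div_iff₀ hM).1 (min_le_right _ _)
  refine ⟨s / 2, by positivity, fun ν hν z hz => ?_⟩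
  set d := z - ∇ N.F ν with hd
  have hsmall : ‖s • d‖ ≤ δ := by
    rw [norm_smul, Real.norm_of_nonneg hs.le]
    exact (mul_le_mul_of_nonneg_left (hnorm z ν hz) hs.le).trans hsM
  have hupper := (abs_le.1 (htaylor ν hν _ hsmall)).2
  rw [real_inner_smul_right, real_inner_comm, norm_smul, mul_pow, Real.norm_eq_abs, sq_abs]
    at hupper
  have hlower : ⟪ν, z⟫ + s * ⟪d, z⟫ ≤ N.F (ν + s • d) := by
    rw [← real_inner_smul_left, ← inner_add_left]
    exact (N.inner_le _ z).trans (mul_le_of_le_one_right (N.nonneg _) hz)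
  have hsq : ‖d‖ ^ 2 = ⟪d, z⟫ - ⟪d, ∇ N.F ν⟫ := by
    rw [← real_inner_self_eq_norm_sq, ← inner_sub_right, ← hd]
  nlinarith [mul_le_mul_of_nonneg_right hsB (mul_nonneg hs.le (sq_nonneg ‖d‖))]

variable {N}

lemma nonneg_of_polar_sub_le {f : En n → ℝ} {y x : En n} {δ B c M r : ℝ}
    (htaylor : ∀ w : En n, ‖w‖ ≤ δ → |f (y + w) - f y - ⟪∇ f y, w⟫| ≤ B * ‖w‖ ^ 2)
    (hstrict : ∀ z, N.polar z ≤ 1 → c * ‖z - ∇ N.F (∇ f y)‖ ^ 2 ≤ N.F (∇ f y) - ⟪∇ f y, z⟫)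
    (hnorm : ∀ z ξ, N.polar z ≤ 1 → ‖z - ∇ N.F ξ‖ ≤ M) (hr : 0 < r) (hrM : r * M ≤ δ)
    (hrB : r * B ≤ c) (hy : 0 ≤ f y) (hx : N.polar (x - (y + r • ∇ N.F (∇ f y))) ≤ r) :
    0 ≤ f x := by
  set ν := ∇ f y
  set z := r⁻¹ • (y + r • ∇ N.F ν - x) with hz
  have hz1 : N.polar z ≤ 1 := by
    rw [hz, map_smul_eq_mul, map_sub_rev, Real.norm_of_nonneg (inv_nonneg.2 hr.le)]
    exact inv_mul_le_one_of_le₀ hx hr.le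
  have hxz : y + r • (∇ N.F ν - z) = x := by
    rw [smul_sub, hz, smul_inv_smul₀ hr.ne']
    abel
  have hsmall : ‖r • (∇ N.F ν - z)‖ ≤ δ := by
    rw [norm_smul, Real.norm_of_nonneg hr.le, norm_sub_rev]
    exact (mul_le_mul_of_nonneg_left (hnorm z ν hz1) hr.le).trans hrM
  have hlower := (abs_le.1 (htaylor _ hsmall)).1
  rw [hxz, real_inner_smul_right, norm_smul, mul_pow, Real.norm_eq_abs, sq_abs, inner_sub_right,
    real_inner_comm, N.inner_gradient_self, norm_sub_rev] at hlower
  nlinarith [mul_le_mul_of_nonneg_left (hstrict z hz1) hr.le,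
    mul_le_mul_of_nonneg_right hrB (mul_nonneg hr.le (sq_nonneg ‖z - ∇ N.F ν‖))]

lemma isCompact_frontier_of_isBounded_compl {X : Type*} [PseudoMetricSpace X] [ProperSpace X]
    {Ω : Set X} (hΩ : IsOpen Ω) (hbd : Bornology.IsBounded Ωᶜ) : IsCompact (frontier Ω) :=
  isCompact_of_isClosed_isBounded isClosed_frontier (hbd.subset fun x hx => by
    rw [hΩ.frontier_eq] at hx
    exact hx.2)

/- Interior sphere condition for the complement, with Wulff shapes of a common radius. -/
lemma exists_touching_wulff (N : MinkowskiNorm n) {Ω : Set (En n)} (hΩ : IsOpen Ω)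
    (hsmooth : HasSmoothBoundary Ω) (hbd : Bornology.IsBounded Ωᶜ) {r₀ : ℝ} (hr₀ : 0 < r₀) :
    ∃ r, 0 < r ∧ r ≤ r₀ ∧ ∀ y ∈ frontier Ω, ∃ x₀, N.polar (y - x₀) ≤ r ∧
      ∀ x, N.polar (x - x₀) ≤ r → x ∉ Ω := by
  obtain ⟨f, hf, hfΩ, hf0⟩ := hsmooth
  have hmem (x : En n) : x ∈ Ω ↔ f x < 0 := Set.ext_iff.1 hfΩ x
  have hfr := isCompact_frontier_of_isBounded_compl hΩ hbd
  have hgrad : Continuous (∇ f) :=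
    (InnerProductSpace.toDual ℝ (En n)).symm.continuous.comp (hf.continuous_fderiv (by simp))
  obtain ⟨c, hc, hstrict⟩ := N.exists_mul_norm_sub_gradient_sq_le (hfr.image hgrad) <| by
    rintro _ ⟨y, hy, rfl⟩
    simpa only [gradient, ne_eq, map_eq_zero_iff _ (LinearIsometryEquiv.injective _)] using hf0 y hy
  obtain ⟨δ, B, hδ, hB, htaylor⟩ := exists_abs_sub_sub_inner_gradient_le isOpen_univ
    (hf.of_le (WithTop.coe_le_coe.2 le_top)).contDiffOn hfr (subset_univ _)
  obtain ⟨M, hM, hnorm⟩ := N.exists_norm_sub_gradient_le_of_polar_le_one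
  set r := min r₀ (min (δ / M) (c / B))
  have hr : 0 < r := by positivity
  have hrM : r * M ≤ δ := (le_div_iff₀ hM).1 ((min_le_right _ _).trans (min_le_left _ _))
  have hrB : r * B ≤ c := (le_div_iff₀ hB).1 ((min_le_right _ _).trans (min_le_right _ _))
  refine ⟨r, hr, min_le_left _ _, fun y hy => ⟨y + r • ∇ N.F (∇ f y), ?_, fun x hx => ?_⟩⟩
  · rw [sub_add_cancel_left, map_neg_eq_map, map_smul_eq_mul, Real.norm_of_nonneg hr.le]
    exact mul_le_of_le_one_right hr.le (N.polar_gradient_le_one _)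
  · have hfy : 0 ≤ f y := not_lt.1 fun h => (hΩ.frontier_eq ▸ hy).2 ((hmem y).2 h)
    rw [hmem, not_lt]
    exact nonneg_of_polar_sub_le (htaylor y hy) (hstrict _ ⟨y, hy, rfl⟩) hnorm hr hrM hrB hfy hx

end TouchingWulffShapes

section Energy

variable {n : ℕ} (N : MinkowskiNorm n) {q : ℝ} {f : En n → ℝ}

namespace MinkowskiNorm

/-- The anisotropic `p`-energy `∫ F(∇v)^p` over the whole space. -/
def pEnergy (p : ℝ) (v : En n → ℝ) : ℝ := ∫ x, N.F (∇ v x) ^ p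

lemma rpow_nonneg (ξ : En n) (q : ℝ) : 0 ≤ N.F ξ ^ q := Real.rpow_nonneg (N.nonneg ξ) q

lemma exists_rpow_gradient_le (hq : 0 ≤ q) (hf : IsLipschitz f) :
    ∃ A, ∀ x, N.F (∇ f x) ^ q ≤ A := by
  obtain ⟨C, hC, hF⟩ := N.exists_le_mul_norm
  obtain ⟨D, -, hg⟩ := hf.exists_norm_gradient_le
  refine ⟨(C * D) ^ q, fun x => Real.rpow_le_rpow (N.nonneg _) ((hF _).trans ?_) hq⟩
  gcongr
  exact hg x

lemma integrable_mul_rpow_gradient (hq : 0 ≤ q) (hf : IsLipschitz f) {η : En n → ℝ}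
    (hη : Integrable η) : Integrable fun x => η x * N.F (∇ f x) ^ q := by
  obtain ⟨A, hA⟩ := N.exists_rpow_gradient_le hq hf
  refine hη.mul_bdd (c := A) ((N.measurable_comp_gradient f).pow_const q).aestronglyMeasurable
    (.of_forall fun x => ?_)
  rw [Real.norm_of_nonneg (N.rpow_nonneg _ _)]
  exact hA x

lemma integrable_rpow_gradient (hq : 0 < q) (hf : IsLipschitz f) (hc : HasCompactSupport (∇ f)) :
    Integrable fun x => N.F (∇ f x) ^ q := by
  obtain ⟨A, hA⟩ := N.exists_rpow_gradient_le hq.le hf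
  refine integrable_of_ae_norm_le_of_hasCompactSupport (A := A)
    ((N.measurable_comp_gradient f).pow_const q).aestronglyMeasurable (.of_forall fun x => ?_)
    (hc.comp_left (g := fun ξ => N.F ξ ^ q) (by rw [N.map_zero, Real.zero_rpow hq.ne']))
  rw [Real.norm_of_nonneg (N.rpow_nonneg _ _)]
  exact hA x

variable {w : ℕ → En n → ℝ} {u : En n → ℝ} {L : ℝ≥0}

lemma exists_tendsto_zero_integral_mul_rpow_gradient_add_le (hq : 1 ≤ q)
    (hw : ∀ k, LipschitzWith L (w k)) (hu : ∀ x, Tendsto (fun k => w k x) atTop (𝓝 (u x)))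
    {η : En n → ℝ} (hη : Integrable η) (hη0 : ∀ x, 0 ≤ η x) :
    ∃ e : ℕ → ℝ, Tendsto e atTop (𝓝 0) ∧ ∀ k,
      (∫ x, η x * N.F (∇ u x) ^ q) + e k ≤ ∫ x, η x * N.F (∇ (w k) x) ^ q := by
  have hul : LipschitzWith L u := lipschitzWith_of_tendsto hw hu
  obtain ⟨D, -, hDF⟩ := N.isLipschitz.exists_norm_gradient_le
  -- The subgradient of the convex integrand at `∇ u`, which pairs to zero with `∇ (w k - u)`.
  let Y : En n → En n := fun x => (η x * N.F (∇ u x) ^ (q - 1)) • q • ∇ N.F (∇ u x)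
  have hY : Integrable Y :=
    (N.integrable_mul_rpow_gradient (by linarith) ⟨L, hul⟩ hη).smul_bdd (C := ‖q‖ * D)
      (((measurable_gradient N.F).comp (measurable_gradient u)).const_smul q).aestronglyMeasurable
      (.of_forall fun x => by rw [norm_smul]; gcongr; exact hDF _)
  have hdiff (k : ℕ) : LipschitzWith (L + L) fun x => w k x - u x := (hw k).sub hul
  refine ⟨_, tendsto_integral_inner_gradient hY hdiff fun x => by
    simpa using (hu x).sub_const (u x), fun k => ?_⟩
  have hYk : Integrable fun x => ⟪Y x, ∇ (fun y => w k y - u y) x⟫ :=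
    (hY.norm.mul_const _).mono'
      (hY.aestronglyMeasurable.inner (measurable_gradient _).aestronglyMeasurable)
      (.of_forall fun x => (norm_inner_le_norm _ _).trans (mul_le_mul_of_nonneg_left
        (norm_gradient_le_of_lipschitzWith (hdiff k) x) (norm_nonneg _)))
  have hηu := N.integrable_mul_rpow_gradient (zero_le_one.trans hq) ⟨L, hul⟩ hη
  rw [← integral_add hηu hYk]
  refine integral_mono_ae (hηu.add hYk)
    (N.integrable_mul_rpow_gradient (zero_le_one.trans hq) ⟨L, hw k⟩ hη) ?_
  filter_upwards [(hw k).ae_differentiableAt, hul.ae_differentiableAt] with x hwx hux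
  have hconv := mul_le_mul_of_nonneg_left (N.rpow_add_inner_le_rpow hq (∇ u x) (∇ (w k) x)) (hη0 x)
  rw [gradient_fun_sub hwx hux]
  refine le_trans (le_of_eq ?_) hconv
  simp only [Y, real_inner_smul_left]
  ring

lemma pEnergy_le_of_tendsto (hq : 1 ≤ q) (hw : ∀ k, LipschitzWith L (w k))
    (hu : ∀ x, Tendsto (fun k => w k x) atTop (𝓝 (u x))) {K : Set (En n)} (hK : IsCompact K)
    {c : ℝ} (hc : ∀ k, ∀ x ∉ K, w k x = c) {l : ℝ}
    (hl : Tendsto (fun k => N.pEnergy q (w k)) atTop (𝓝 l)) : N.pEnergy q u ≤ l := by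
  have hcu (x : En n) (hx : x ∉ K) : u x = c :=
    tendsto_nhds_unique (hu x) (by simp [hc _ x hx])
  have hindicator {f : En n → ℝ} (hf : ∀ x ∉ K, f x = c) :
      ∫ x, K.indicator 1 x * N.F (∇ f x) ^ q = N.pEnergy q f := by
    refine integral_congr_ae (.of_forall fun x => ?_)
    by_cases hx : x ∈ K
    · simp [hx]
    · simp [hx, gradient_eq_zero_of_eqOn_const hK.isClosed.isOpen_compl hf hx, N.map_zero,
        Real.zero_rpow (by linarith : q ≠ 0)]
  obtain ⟨e, he, hle⟩ := N.exists_tendsto_zero_integral_mul_rpow_gradient_add_le hq hw hu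
    (η := K.indicator 1) ((integrableOn_const hK.measure_lt_top.ne).integrable_indicator
      hK.measurableSet) fun x => indicator_nonneg (fun _ _ => zero_le_one) x
  simp only [hindicator hcu, hindicator (hc _)] at hle
  simpa using le_of_tendsto_of_tendsto' (he.const_add (N.pEnergy q u)) hl hle

end MinkowskiNorm

end Energy

lemma exists_isMinOn_of_lipschitzWith {X : Type*} [PseudoMetricSpace X]
    [TopologicalSpace.SeparableSpace X] {𝒜 : Set (X → ℝ)} (hne : 𝒜.Nonempty) {L : ℝ≥0} {B b : ℝ}
    (hL : ∀ v ∈ 𝒜, LipschitzWith L v) (hB : ∀ v ∈ 𝒜, ∀ x, |v x| ≤ B)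
    (hclosed : ∀ (w : ℕ → X → ℝ) (u : X → ℝ), (∀ k, w k ∈ 𝒜) →
      (∀ x, Tendsto (fun k => w k x) atTop (𝓝 (u x))) → u ∈ 𝒜)
    {J : (X → ℝ) → ℝ} (hb : ∀ v ∈ 𝒜, b ≤ J v)
    (hJ : ∀ (w : ℕ → X → ℝ) (u : X → ℝ), (∀ k, w k ∈ 𝒜) →
      (∀ x, Tendsto (fun k => w k x) atTop (𝓝 (u x))) → ∀ l,
      Tendsto (fun k => J (w k)) atTop (𝓝 l) → J u ≤ l) :
    ∃ v ∈ 𝒜, IsMinOn J 𝒜 v := by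
  have hbdd : BddBelow (J '' 𝒜) := ⟨b, by rintro _ ⟨v, hv, rfl⟩; exact hb v hv⟩
  obtain ⟨s, -, hs, hmem⟩ := exists_seq_tendsto_sInf (hne.image J) hbdd
  choose w hw hws using hmem
  obtain ⟨u, t, ht, htu⟩ := exists_subseq_tendsto_of_lipschitzWith (fun k => hL _ (hw k))
    fun x => ⟨B, fun k => hB _ (hw k) x⟩
  have hlim : Tendsto (fun k => J (w (t k))) atTop (𝓝 (sInf (J '' 𝒜))) := by
    simp only [hws]
    exact hs.comp ht.tendsto_atTop
  exact ⟨u, hclosed _ u (fun k => hw (t k)) htu, fun v hv =>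
    (hJ _ u (fun k => hw (t k)) htu _ hlim).trans (csInf_le hbdd ⟨v, hv, rfl⟩)⟩

section LogLipschitz

variable {X : Type*} [PseudoMetricSpace X] {M M' : ℝ≥0} {v w : X → ℝ}

/-- `log v` is `M`-Lipschitz, phrased multiplicatively so that zeros of `v` cause no trouble. -/
def LogLipschitzWith (M : ℝ≥0) (v : X → ℝ) : Prop :=
  ∀ x y, v x ≤ Real.exp (M * dist x y) * v y

namespace LogLipschitzWith

lemma const {c : ℝ} (hc : 0 ≤ c) : LogLipschitzWith M fun _ : X => c := fun _ _ =>
  le_mul_of_one_le_left hc (Real.one_le_exp (by positivity))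

protected lemma max (hv : LogLipschitzWith M v) (hw : LogLipschitzWith M w) :
    LogLipschitzWith M fun x => max (v x) (w x) := fun x y => by
  rw [mul_max_of_nonneg _ _ (Real.exp_pos _).le]
  exact max_le_max (hv x y) (hw x y)

protected lemma min (hv : LogLipschitzWith M v) (hw : LogLipschitzWith M w) :
    LogLipschitzWith M fun x => min (v x) (w x) := fun x y => by
  rw [mul_min_of_nonneg _ _ (Real.exp_pos _).le]
  exact min_le_min (hv x y) (hw x y)

lemma of_tendsto {z : ℕ → X → ℝ} (hz : ∀ k, LogLipschitzWith M (z k))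
    (hv : ∀ x, Tendsto (fun k => z k x) atTop (𝓝 (v x))) : LogLipschitzWith M v := fun x y =>
  le_of_tendsto_of_tendsto' (hv x) ((hv y).const_mul _) fun k => hz k x y

lemma lipschitzWith (hv : LogLipschitzWith M v) {B : ℝ≥0} (h0 : ∀ x, 0 ≤ v x)
    (hB : ∀ x, v x ≤ B) : LipschitzWith (B * M) v := by
  refine LipschitzWith.of_le_add_mul _ fun x y => ?_
  have hexp : v x * Real.exp (-(M * dist x y)) ≤ v y := by
    rw [Real.exp_neg, ← div_eq_mul_inv, div_le_iff₀' (Real.exp_pos _)]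
    exact hv x y
  have hlin : v x * (1 - M * dist x y) ≤ v x * Real.exp (-(M * dist x y)) :=
    mul_le_mul_of_nonneg_left (Real.one_sub_le_exp_neg _) (h0 x)
  have hbound : v x * (M * dist x y) ≤ B * (M * dist x y) := by gcongr; exact hB x
  push_cast
  linarith

end LogLipschitzWith

end LogLipschitz

section Competitors

variable {n : ℕ} {N : MinkowskiNorm n} {Ω : Set (En n)} {p R ε : ℝ} {M : ℝ≥0} {v w : En n → ℝ}

lemma MinkowskiNorm.isCompact_polar_le (N : MinkowskiNorm n) (R : ℝ) :
    IsCompact {x | N.polar x ≤ R} := by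
  obtain ⟨c, hc, hlow⟩ := N.exists_mul_norm_le_polar
  refine isCompact_of_isClosed_isBounded
    (isClosed_le (isLipschitz_seminorm N.polar).continuous continuous_const)
    (isBounded_closedBall (x := (0 : En n)) (r := R / c) |>.subset fun x hx => ?_)
  rw [mem_closedBall_zero_iff, le_div_iff₀' hc]
  exact (hlow x).trans hx

/-- Admissible functions for the capacity-type problem in the exterior domain `Ω`, truncated at
polar radius `R` with outer boundary value `ε`. The bounds `ε / 2` and `2` are not attained by
minimizers; they only provide compactness together with the logarithmic Lipschitz bound. -/
structure IsCompetitor (N : MinkowskiNorm n) (Ω : Set (En n)) (R ε : ℝ) (M : ℝ≥0)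
    (v : En n → ℝ) : Prop where
  half_le : ∀ x, ε / 2 ≤ v x
  le_two : ∀ x, v x ≤ 2
  eq_one : ∀ x ∉ Ω, v x = 1
  eq_outer : ∀ x, R ≤ N.polar x → v x = ε
  logLipschitzWith : LogLipschitzWith M v

namespace IsCompetitor

lemma lipschitzWith (h : IsCompetitor N Ω R ε M v) (hε : 0 < ε) : LipschitzWith (2 * M) v :=
  h.logLipschitzWith.lipschitzWith (fun x => (half_pos hε).le.trans (h.half_le x)) h.le_two

lemma isLipschitz (h : IsCompetitor N Ω R ε M v) (hε : 0 < ε) : IsLipschitz v :=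
  ⟨_, h.lipschitzWith hε⟩

lemma of_tendsto {z : ℕ → En n → ℝ} (hz : ∀ k, IsCompetitor N Ω R ε M (z k))
    (hv : ∀ x, Tendsto (fun k => z k x) atTop (𝓝 (v x))) : IsCompetitor N Ω R ε M v where
  half_le x := ge_of_tendsto' (hv x) fun k => (hz k).half_le x
  le_two x := le_of_tendsto' (hv x) fun k => (hz k).le_two x
  eq_one x hx := tendsto_nhds_unique (hv x) (by simp [(hz _).eq_one x hx])
  eq_outer x hx := tendsto_nhds_unique (hv x) (by simp [(hz _).eq_outer x hx])
  logLipschitzWith := .of_tendsto (fun k => (hz k).logLipschitzWith) hv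

protected lemma max (hv : IsCompetitor N Ω R ε M v) (hw : LogLipschitzWith M w)
    (h_two : ∀ x, w x ≤ 2) (h_one : ∀ x ∉ Ω, w x ≤ 1) (h_outer : ∀ x, R ≤ N.polar x → w x ≤ ε) :
    IsCompetitor N Ω R ε M fun x => max (v x) (w x) where
  half_le x := (hv.half_le x).trans (le_max_left _ _)
  le_two x := max_le (hv.le_two x) (h_two x)
  eq_one x hx := by rw [hv.eq_one x hx, max_eq_left (h_one x hx)]
  eq_outer x hx := by rw [hv.eq_outer x hx, max_eq_left (h_outer x hx)]
  logLipschitzWith := hv.logLipschitzWith.max hw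

protected lemma min (hv : IsCompetitor N Ω R ε M v) (hw : LogLipschitzWith M w)
    (h_half : ∀ x, ε / 2 ≤ w x) (h_one : ∀ x ∉ Ω, 1 ≤ w x)
    (h_outer : ∀ x, R ≤ N.polar x → ε ≤ w x) :
    IsCompetitor N Ω R ε M fun x => min (v x) (w x) where
  half_le x := le_min (hv.half_le x) (h_half x)
  le_two x := (min_le_left _ _).trans (hv.le_two x)
  eq_one x hx := by rw [hv.eq_one x hx, min_eq_left (h_one x hx)]
  eq_outer x hx := by rw [hv.eq_outer x hx, min_eq_left (h_outer x hx)]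
  logLipschitzWith := hv.logLipschitzWith.min hw

lemma hasCompactSupport_sub_const (h : IsCompetitor N Ω R ε M v) :
    HasCompactSupport fun x => v x - ε :=
  .intro (N.isCompact_polar_le R) fun x hx => sub_eq_zero.2 (h.eq_outer x (not_le.1 hx).le)

lemma hasCompactSupport_sub (hv : IsCompetitor N Ω R ε M v) (hw : IsCompetitor N Ω R ε M w) :
    HasCompactSupport fun x => v x - w x :=
  .intro (N.isCompact_polar_le R) fun x hx => by
    rw [hv.eq_outer x (not_le.1 hx).le, hw.eq_outer x (not_le.1 hx).le, sub_self]

lemma hasCompactSupport_gradient (h : IsCompetitor N Ω R ε M v) : HasCompactSupport (∇ v) :=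
  .intro (N.isCompact_polar_le R) fun _ hx => gradient_eq_zero_of_eqOn_const
    (N.isCompact_polar_le R).isClosed.isOpen_compl
    (fun y hy => h.eq_outer y (not_le.1 (notMem_ofPred_iff.1 hy)).le) hx

lemma integrable_sub_const (h : IsCompetitor N Ω R ε M v) (hε : 0 < ε) :
    Integrable fun x => v x - ε :=
  ((h.isLipschitz hε).sub (.const ε)).integrable h.hasCompactSupport_sub_const

lemma norm_sub_const_le_indicator (h : IsCompetitor N Ω R ε M v) (hε : 0 < ε) (hε1 : ε ≤ 1)
    (x : En n) : ‖v x - ε‖ ≤ {x | N.polar x ≤ R}.indicator (fun _ => (2 : ℝ)) x := by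
  by_cases hx : x ∈ {y | N.polar y ≤ R}
  · rw [indicator_of_mem hx, Real.norm_eq_abs, abs_le]
    constructor <;> linarith [h.half_le x, h.le_two x]
  · rw [indicator_of_notMem hx, h.eq_outer x (not_le.1 (notMem_ofPred_iff.1 hx)).le, sub_self,
      norm_zero]

lemma integrable_indicator_polar_le (N : MinkowskiNorm n) (R : ℝ) :
    Integrable ({x | N.polar x ≤ R}.indicator fun _ => (2 : ℝ)) :=
  (integrableOn_const (N.isCompact_polar_le R).measure_lt_top.ne).integrable_indicator
    (N.isCompact_polar_le R).measurableSet

lemma tendsto_integral_sub_const {z : ℕ → En n → ℝ} (hz : ∀ k, IsCompetitor N Ω R ε M (z k))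
    (hv : ∀ x, Tendsto (fun k => z k x) atTop (𝓝 (v x))) (hε : 0 < ε) (hε1 : ε ≤ 1) :
    Tendsto (fun k => ∫ x, (z k x - ε)) atTop (𝓝 (∫ x, (v x - ε))) :=
  tendsto_integral_of_dominated_convergence _
    (fun k => ((hz k).integrable_sub_const hε).aestronglyMeasurable)
    (integrable_indicator_polar_le N R)
    (fun k => .of_forall ((hz k).norm_sub_const_le_indicator hε hε1))
    (.of_forall fun x => (hv x).sub_const ε)

lemma pEnergy_le_of_tendsto {z : ℕ → En n → ℝ} (hz : ∀ k, IsCompetitor N Ω R ε M (z k))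
    (hv : ∀ x, Tendsto (fun k => z k x) atTop (𝓝 (v x))) (hε : 0 < ε) (hp : 1 ≤ p) {l : ℝ}
    (hl : Tendsto (fun k => N.pEnergy p (z k)) atTop (𝓝 l)) : N.pEnergy p v ≤ l :=
  N.pEnergy_le_of_tendsto hp (fun k => (hz k).lipschitzWith hε) hv (N.isCompact_polar_le R)
    (fun k x hx => (hz k).eq_outer x (not_le.1 hx).le) hl

lemma abs_le_two (h : IsCompetitor N Ω R ε M v) (hε : 0 < ε) (x : En n) : |v x| ≤ 2 := by
  rw [abs_of_nonneg ((half_pos hε).le.trans (h.half_le x))]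
  exact h.le_two x

lemma integrable_rpow_gradient (h : IsCompetitor N Ω R ε M v) (hε : 0 < ε) (hp : 0 < p) :
    Integrable fun x => N.F (∇ v x) ^ p :=
  N.integrable_rpow_gradient hp (h.isLipschitz hε) h.hasCompactSupport_gradient

end IsCompetitor

/-- Minimizers of the `p`-energy among competitors that have the largest integral among all
minimizers. The second condition selects one minimizer without appealing to strict convexity. -/
structure IsMaximalMinimizer (N : MinkowskiNorm n) (Ω : Set (En n)) (p R ε : ℝ) (M : ℝ≥0)
    (v : En n → ℝ) : Prop where
  isCompetitor : IsCompetitor N Ω R ε M v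
  pEnergy_le : ∀ w, IsCompetitor N Ω R ε M w → N.pEnergy p v ≤ N.pEnergy p w
  integral_le : ∀ w, IsCompetitor N Ω R ε M w → N.pEnergy p w ≤ N.pEnergy p v →
    ∫ x, (w x - ε) ≤ ∫ x, (v x - ε)

lemma exists_isMaximalMinimizer (hp : 1 ≤ p) (hε : 0 < ε) (hε1 : ε ≤ 1)
    (hne : ∃ v, IsCompetitor N Ω R ε M v) : ∃ v, IsMaximalMinimizer N Ω p R ε M v := by
  obtain ⟨v₀, hv₀, hmin⟩ := exists_isMinOn_of_lipschitzWith (J := N.pEnergy p) (b := 0)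
    (𝒜 := {v | IsCompetitor N Ω R ε M v}) hne (fun v hv => hv.lipschitzWith hε)
    (fun v hv => hv.abs_le_two hε) (fun _ _ hw hu => .of_tendsto hw hu)
    (fun v _ => integral_nonneg fun x => N.rpow_nonneg _ _)
    (fun w u hw hu l hl => IsCompetitor.pEnergy_le_of_tendsto hw hu hε hp hl)
  have hclosed (w : ℕ → En n → ℝ) (u : En n → ℝ)
      (hw : ∀ k, IsCompetitor N Ω R ε M (w k) ∧ N.pEnergy p (w k) ≤ N.pEnergy p v₀)
      (hu : ∀ x, Tendsto (fun k => w k x) atTop (𝓝 (u x))) :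
      IsCompetitor N Ω R ε M u ∧ N.pEnergy p u ≤ N.pEnergy p v₀ := by
    have hconst (k : ℕ) : N.pEnergy p (w k) = N.pEnergy p v₀ :=
      (hw k).2.antisymm (hmin (hw k).1)
    refine ⟨.of_tendsto (fun k => (hw k).1) hu, ?_⟩
    refine IsCompetitor.pEnergy_le_of_tendsto (fun k => (hw k).1) hu hε hp ?_
    simp only [hconst, tendsto_const_nhds]
  obtain ⟨v, hv, hmax⟩ := exists_isMinOn_of_lipschitzWith (J := fun v => -∫ x, (v x - ε))
    (b := -∫ x, {x | N.polar x ≤ R}.indicator (fun _ => (2 : ℝ)) x)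
    (𝒜 := {v | IsCompetitor N Ω R ε M v ∧ N.pEnergy p v ≤ N.pEnergy p v₀})
    ⟨v₀, hv₀, le_rfl⟩ (fun v hv => hv.1.lipschitzWith hε) (fun v hv => hv.1.abs_le_two hε) hclosed
    (fun v hv => neg_le_neg (integral_mono (hv.1.integrable_sub_const hε)
      (IsCompetitor.integrable_indicator_polar_le N R) fun x =>
        (le_abs_self _).trans (hv.1.norm_sub_const_le_indicator hε hε1 x)))
    (fun w u hw hu l hl => (tendsto_nhds_unique
      (IsCompetitor.tendsto_integral_sub_const (fun k => (hw k).1) hu hε hε1).neg hl).le)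
  exact ⟨v, hv.1, fun w hw => hv.2.trans (hmin hw), fun w hw hwv =>
    neg_le_neg_iff.1 (hmax ⟨hw, hwv.trans hv.2⟩)⟩

end Competitors

lemma LogLipschitzWith.div_rpow_neg {X : Type*} [PseudoMetricSpace X] {f : X → ℝ} {C M : ℝ≥0}
    {s a : ℝ} (hf : LipschitzWith C f) (hs : 0 < s) (hfs : ∀ x, s ≤ f x) (ha : 0 ≤ a)
    (hM : a * C / s ≤ M) : LogLipschitzWith M fun x => (f x / s) ^ (-a) := fun x y => by
  have hfx : 0 < f x := hs.trans_le (hfs x)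
  have hfy : 0 < f y := hs.trans_le (hfs y)
  have hgrowth : f y ≤ f x * Real.exp (C * dist x y / s) := by
    have hlip := hf.le_add_mul y x
    have hexp := mul_le_mul_of_nonneg_left (Real.add_one_le_exp (C * dist x y / s)) hfx.le
    have hscale : C * dist x y ≤ f x * (C * dist x y / s) := by
      rw [mul_div_left_comm]
      exact le_mul_of_one_le_right (by positivity) ((one_le_div hs).2 (hfs x))
    rw [dist_comm] at hlip
    linarith
  have hratio : f y / s * Real.exp (-(C * dist x y / s)) ≤ f x / s := by
    rw [Real.exp_neg, ← div_eq_mul_inv, div_le_iff₀ (Real.exp_pos _), div_mul_eq_mul_div]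
    gcongr
  calc (f x / s) ^ (-a) ≤ (f y / s * Real.exp (-(C * dist x y / s))) ^ (-a) :=
        Real.rpow_le_rpow_of_nonpos (by positivity) hratio (by linarith)
    _ = Real.exp (a * C / s * dist x y) * (f y / s) ^ (-a) := by
        rw [Real.mul_rpow (by positivity) (by positivity), ← Real.exp_mul, mul_comm]
        congr 2
        ring
    _ ≤ Real.exp (M * dist x y) * (f y / s) ^ (-a) := by gcongr

namespace MinkowskiNorm

variable {n : ℕ} (N : MinkowskiNorm n)

section Barrier

variable {x₀ x : En n} {s a : ℝ}

/-- The radial barrier around `x₀`: it equals `1` on the Wulff shape of radius `s` and decays like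
the power `-a` of the polar distance to `x₀` outside. -/
def barrier (x₀ : En n) (s a : ℝ) (x : En n) : ℝ := (max (N.polar (x - x₀)) s / s) ^ (-a)

lemma barrier_eq_one (hs : 0 < s) (hx : N.polar (x - x₀) ≤ s) : N.barrier x₀ s a x = 1 := by
  rw [barrier, max_eq_right hx, div_self hs.ne', Real.one_rpow]

lemma barrier_of_le (hx : s ≤ N.polar (x - x₀)) :
    N.barrier x₀ s a x = (N.polar (x - x₀) / s) ^ (-a) := by
  rw [barrier, max_eq_left hx]

lemma barrier_pos (hs : 0 < s) (x : En n) : 0 < N.barrier x₀ s a x := by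
  have : 0 < max (N.polar (x - x₀)) s := lt_max_of_lt_right hs
  rw [barrier]
  positivity

lemma barrier_le_one (hs : 0 < s) (ha : 0 ≤ a) (x : En n) : N.barrier x₀ s a x ≤ 1 :=
  Real.rpow_le_one_of_one_le_of_nonpos ((one_le_div hs).2 (le_max_right _ _)) (by linarith)

lemma lipschitzWith_max_polar_sub {L : ℝ≥0} (hL : LipschitzWith L N.polar) (x₀ : En n) (s : ℝ) :
    LipschitzWith L fun x => max (N.polar (x - x₀)) s :=
  LipschitzWith.max_const (LipschitzWith.of_dist_le_mul fun x y => by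
    simpa using hL.dist_le_mul (x - x₀) (y - x₀)) s

lemma logLipschitzWith_barrier {L M : ℝ≥0} (hL : LipschitzWith L N.polar) (hs : 0 < s)
    (ha : 0 ≤ a) (hM : a * L / s ≤ M) : LogLipschitzWith M (N.barrier x₀ s a) :=
  .div_rpow_neg (N.lipschitzWith_max_polar_sub hL x₀ s) hs (fun _ => le_max_right _ _) ha hM

lemma isLipschitz_barrier (hs : 0 < s) (ha : 0 ≤ a) : IsLipschitz (N.barrier x₀ s a) := by
  obtain ⟨L, hL⟩ := isLipschitz_seminorm N.polar
  exact ⟨_, (N.logLipschitzWith_barrier hL hs ha (Real.le_coe_toNNReal _)).lipschitzWith (B := 1)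
    (fun x => (N.barrier_pos hs x).le) (N.barrier_le_one hs ha)⟩

lemma ae_differentiableAt_polar_sub (x₀ : En n) :
    ∀ᵐ x, DifferentiableAt ℝ N.polar (x - x₀) :=
  (measurePreserving_sub_right volume x₀).quasiMeasurePreserving.ae
    (isLipschitz_seminorm N.polar).ae_differentiableAt

lemma gradient_barrier (hs : 0 < s) (hx : s < N.polar (x - x₀))
    (hd : DifferentiableAt ℝ N.polar (x - x₀)) :
    ∇ (N.barrier x₀ s a) x =
      (-(a * N.barrier x₀ s a x / N.polar (x - x₀))) • ∇ N.polar (x - x₀) := by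
  have hpos : 0 < N.polar (x - x₀) := hs.trans hx
  have hpower : HasDerivAt (fun t : ℝ => (t / s) ^ (-a))
      (-(a * N.barrier x₀ s a x / N.polar (x - x₀))) (N.polar (x - x₀)) := by
    refine (((hasDerivAt_id' (N.polar (x - x₀))).div_const s).rpow_const (p := -a)
      (.inl (by positivity))).congr_deriv ?_
    rw [N.barrier_of_le hx.le, Real.rpow_sub_one (by positivity)]
    field_simp
  have hlocal : N.barrier x₀ s a =ᶠ[𝓝 x] fun y => (N.polar (y + -x₀) / s) ^ (-a) := by
    have hcont : Continuous fun y => N.polar (y - x₀) :=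
      (isLipschitz_seminorm N.polar).continuous.comp (continuous_sub_right x₀)
    filter_upwards [hcont.continuousAt.eventually (lt_mem_nhds hx)] with y hy
    rw [N.barrier_of_le hy.le, sub_eq_add_neg]
  rw [hlocal.gradient_eq, gradient_comp_add_right (fun y => (N.polar y / s) ^ (-a)),
    ← sub_eq_add_neg, gradient_comp hpower hd]

lemma inner_gradient_barrier (hs : 0 < s) (hx : s < N.polar (x - x₀))
    (hd : DifferentiableAt ℝ N.polar (x - x₀)) :
    ⟪∇ (N.barrier x₀ s a) x, x - x₀⟫ = -(a * N.barrier x₀ s a x) := by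
  have : N.polar (x - x₀) ≠ 0 := (hs.trans hx).ne'
  rw [N.gradient_barrier hs hx hd, real_inner_smul_left, inner_gradient_seminorm_self N.polar hd]
  field_simp

lemma apply_gradient_barrier (hs : 0 < s) (ha : 0 ≤ a) (hx : s < N.polar (x - x₀))
    (hd : DifferentiableAt ℝ N.polar (x - x₀)) :
    N.F (∇ (N.barrier x₀ s a) x) = a * N.barrier x₀ s a x / N.polar (x - x₀) := by
  have hpos : 0 < N.polar (x - x₀) := hs.trans hx
  have hne : x - x₀ ≠ 0 := fun h => hpos.ne' (by rw [h, _root_.map_zero])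
  have := N.barrier_pos (x₀ := x₀) (a := a) hs x
  rw [N.gradient_barrier hs hx hd, neg_smul, N.even, N.homog _ (by positivity),
    N.apply_gradient_polar hne hd, mul_one]

lemma inner_gradient_barrier_mul_add (hs : 0 < s) (hx : s < N.polar (x - x₀))
    (hd : DifferentiableAt ℝ N.polar (x - x₀))
    (hb : DifferentiableAt ℝ (N.barrier x₀ s a) x) {f : En n → ℝ} (hf : DifferentiableAt ℝ f x) :
    ⟪x - x₀, ∇ (fun y => N.barrier x₀ s a y * f y) x⟫ + a * (N.barrier x₀ s a x * f x) =
      N.barrier x₀ s a x * ⟪∇ f x, x - x₀⟫ := by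
  rw [gradient_fun_mul hb hf, real_inner_comm, inner_add_left, real_inner_smul_left,
    real_inner_smul_left, N.inner_gradient_barrier hs hx hd]
  ring

/-- The factor relating the weight of the flux `F(∇w)^{p-1} ∇F(∇w)` of `w = barrier x₀ s a` to the
barrier with exponent `(a + 1)(p - 1) + 1`. -/
def fluxConst (s a p : ℝ) : ℝ := p * (a / s) ^ (p - 1) / s

lemma fluxConst_mul_barrier {p : ℝ} (hs : 0 < s) (ha : 0 ≤ a) (hx : s < N.polar (x - x₀)) :
    fluxConst s a p * N.barrier x₀ s ((a + 1) * (p - 1) + 1) x =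
      p * (a * N.barrier x₀ s a x / N.polar (x - x₀)) ^ (p - 1) / N.polar (x - x₀) := by
  have hpos : 0 < N.polar (x - x₀) := hs.trans hx
  rw [fluxConst, N.barrier_of_le hx.le, N.barrier_of_le hx.le]
  set t := N.polar (x - x₀) / s with ht
  have ht0 : 0 < t := by positivity
  have hpolar : N.polar (x - x₀) = s * t := by rw [ht]; field_simp
  have hbase : a * t ^ (-a) / (s * t) = a / s * t ^ (-a - 1) := by
    rw [Real.rpow_sub_one ht0.ne']
    field_simp
  rw [hpolar, hbase, Real.mul_rpow (by positivity) (by positivity), ← Real.rpow_mul ht0.le,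
    show -((a + 1) * (p - 1) + 1) = (-a - 1) * (p - 1) - 1 by ring, Real.rpow_sub_one ht0.ne']
  field_simp

end Barrier

section Comparison

lemma rpow_sub_rpow_le_of_inner_eq {p : ℝ} (hp : 1 ≤ p) {ξ η y : En n} (hy : 0 < N.polar y)
    (hξ : ⟪ξ, y⟫ = -(N.F ξ * N.polar y)) :
    N.F ξ ^ p - N.F η ^ p ≤ -(p * N.F ξ ^ (p - 1) / N.polar y) * ⟪ξ - η, y⟫ := by
  have htangent := rpow_add_mul_sub_le_rpow (N.nonneg ξ) (N.nonneg η) hp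
  have hdual : -⟪η, y⟫ ≤ N.F η * N.polar y := by
    simpa [inner_neg_left, N.even] using N.inner_le (-η) y
  have hdiff : N.F ξ - N.F η ≤ -⟪ξ - η, y⟫ / N.polar y := by
    rw [le_div_iff₀ hy, inner_sub_left, hξ]
    linarith
  have hcoef : 0 ≤ p * N.F ξ ^ (p - 1) := mul_nonneg (by linarith) (N.rpow_nonneg _ _)
  calc N.F ξ ^ p - N.F η ^ p ≤ p * N.F ξ ^ (p - 1) * (N.F ξ - N.F η) := by linarith
    _ ≤ p * N.F ξ ^ (p - 1) * (-⟪ξ - η, y⟫ / N.polar y) := by gcongr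
    _ = -(p * N.F ξ ^ (p - 1) / N.polar y) * ⟪ξ - η, y⟫ := by ring

variable {x₀ : En n} {s a p : ℝ} {v w : En n → ℝ}

lemma rpow_gradient_barrier_sub_le (hp : 1 ≤ p) (ha : 0 ≤ a) (hs : 0 < s) {x : En n}
    (hx : s < N.polar (x - x₀)) (hd : DifferentiableAt ℝ N.polar (x - x₀))
    (hw : w =ᶠ[𝓝 x] N.barrier x₀ s a)
    (hb : DifferentiableAt ℝ (N.barrier x₀ s ((a + 1) * (p - 1) + 1)) x)
    (hvx : DifferentiableAt ℝ v x) (hwx : DifferentiableAt ℝ w x) :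
    N.F (∇ w x) ^ p - N.F (∇ v x) ^ p ≤ -fluxConst s a p *
      (⟪x - x₀, ∇ (fun y => N.barrier x₀ s ((a + 1) * (p - 1) + 1) y * (w y - v y)) x⟫ +
        ((a + 1) * (p - 1) + 1) *
          (N.barrier x₀ s ((a + 1) * (p - 1) + 1) x * (w x - v x))) := by
  have hpos : 0 < N.polar (x - x₀) := hs.trans hx
  have hF : N.F (∇ w x) = a * N.barrier x₀ s a x / N.polar (x - x₀) := by
    rw [hw.gradient_eq, N.apply_gradient_barrier hs ha hx hd]
  have haligned : ⟪∇ w x, x - x₀⟫ = -(N.F (∇ w x) * N.polar (x - x₀)) := by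
    rw [hF, hw.gradient_eq, N.inner_gradient_barrier hs hx hd]
    field_simp
  refine (N.rpow_sub_rpow_le_of_inner_eq hp hpos haligned (η := ∇ v x)).trans_eq ?_
  rw [N.inner_gradient_barrier_mul_add hs hx hd hb (f := fun y => w y - v y) (hwx.sub hvx),
    gradient_fun_sub hwx hvx, hF, ← N.fluxConst_mul_barrier hs ha hx]
  ring

lemma ae_rpow_gradient_sub_le (hp : 1 < p) (ha : 0 < a) (hs : 0 < s) (hv : IsLipschitz v)
    (hw : IsLipschitz w) (hc : HasCompactSupport fun x => w x - v x)
    (hbar : ∀ x, w x ≠ v x → s < N.polar (x - x₀) ∧ w =ᶠ[𝓝 x] N.barrier x₀ s a) :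
    ∀ᵐ x, N.F (∇ w x) ^ p - N.F (∇ v x) ^ p ≤ -fluxConst s a p *
      (⟪x - x₀, ∇ (fun y => N.barrier x₀ s ((a + 1) * (p - 1) + 1) y * (w y - v y)) x⟫ +
        ((a + 1) * (p - 1) + 1) *
          (N.barrier x₀ s ((a + 1) * (p - 1) + 1) x * (w x - v x))) := by
  have hbL : IsLipschitz (N.barrier x₀ s ((a + 1) * (p - 1) + 1)) :=
    N.isLipschitz_barrier hs (by have := sub_pos.2 hp; positivity)
  filter_upwards [N.ae_differentiableAt_polar_sub x₀, hbL.ae_differentiableAt,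
    hv.ae_differentiableAt, hw.ae_differentiableAt, hw.ae_gradient_eq hv,
    (hbL.mul_hasCompactSupport (hw.sub hv) hc).ae_gradient_eq_zero]
    with x hd hb hvx hwx hgrad hzero
  by_cases hwv : w x = v x
  · rw [hgrad hwv, hzero (by rw [hwv, sub_self, mul_zero]), hwv]
    simp
  · obtain ⟨hx, hloc⟩ := hbar x hwv
    exact N.rpow_gradient_barrier_sub_le hp.le ha.le hs hx hd hloc hb hvx hwx

/- The barrier solves the Euler–Lagrange equation up to the sign of `(a + 1)(p - 1) + 1 - n`.
Testing with the difference weighted by another barrier makes the resulting error a multiple of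
`∫ (w - v)` with that weight, by the divergence theorem for the field `x - x₀`. -/
lemma eq_of_pEnergy_le_of_eq_barrier (hp : 1 < p) (ha : 0 < a) (hs : 0 < s) (hv : IsLipschitz v)
    (hw : IsLipschitz w) (hvc : HasCompactSupport (∇ v)) (hwc : HasCompactSupport (∇ w))
    (hc : HasCompactSupport fun x => w x - v x)
    (hbar : ∀ x, w x ≠ v x → s < N.polar (x - x₀) ∧ w =ᶠ[𝓝 x] N.barrier x₀ s a)
    (hE : N.pEnergy p v ≤ N.pEnergy p w) (hne : (a + 1) * (p - 1) + 1 - n ≠ 0)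
    (hsign : ∀ x, 0 ≤ ((a + 1) * (p - 1) + 1 - n) * (w x - v x)) : w = v := by
  set m := (a + 1) * (p - 1) + 1
  have : 0 < p - 1 := sub_pos.2 hp
  have hbL : IsLipschitz (N.barrier x₀ s m) := N.isLipschitz_barrier hs (by positivity)
  set g : En n → ℝ := fun x => N.barrier x₀ s m x * (w x - v x) with hg
  have hgL : IsLipschitz g := hbL.mul_hasCompactSupport (hw.sub hv) hc
  have hgc : HasCompactSupport g := hc.mul_left
  have hg_int : Integrable g := hgL.integrable hgc
  have hinner : Integrable fun x => ⟪x - x₀, ∇ g x⟫ :=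
    integrable_inner_sub_gradient hgL hgc x₀
  have hwE := N.integrable_rpow_gradient (by linarith : 0 < p) hw hwc
  have hvE := N.integrable_rpow_gradient (by linarith : 0 < p) hv hvc
  have hK : 0 < fluxConst s a p := by rw [fluxConst]; positivity
  have hcompare : N.pEnergy p w - N.pEnergy p v ≤ -fluxConst s a p * ((m - n) * ∫ x, g x) := by
    calc N.pEnergy p w - N.pEnergy p v = ∫ x, (N.F (∇ w x) ^ p - N.F (∇ v x) ^ p) :=
          (integral_sub hwE hvE).symm
      _ ≤ ∫ x, -fluxConst s a p * (⟪x - x₀, ∇ g x⟫ + m * g x) :=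
          integral_mono_ae (hwE.sub hvE) ((hinner.add (hg_int.const_mul m)).const_mul _)
            (N.ae_rpow_gradient_sub_le hp ha hs hv hw hc hbar)
      _ = -fluxConst s a p * ((m - n) * ∫ x, g x) := by
          rw [integral_const_mul, integral_add hinner (hg_int.const_mul m),
            integral_inner_sub_gradient hgL hgc, integral_const_mul, finrank_euclideanSpace_fin]
          ring
  have hle : ∫ x, (m - n) * g x ≤ 0 := by
    rw [integral_const_mul]
    nlinarith
  funext x
  by_contra hx
  refine hle.not_gt ((hgL.const_mul (m - n)).continuous
    |>.integral_pos_of_hasCompactSupport_nonneg_nonzero hgc.mul_left (fun y => ?_) (x := x) ?_)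
  · rw [hg, mul_left_comm]
    exact mul_nonneg (N.barrier_pos hs y).le (hsign y)
  · exact mul_ne_zero hne (mul_ne_zero (N.barrier_pos hs x).ne' (sub_ne_zero.2 hx))

end Comparison

end MinkowskiNorm

section MaximalMinimizers

variable {n : ℕ} {N : MinkowskiNorm n} {Ω : Set (En n)} {p R ε : ℝ} {M : ℝ≥0} {v w : En n → ℝ}

namespace IsMaximalMinimizer

lemma eq_of_ge (h : IsMaximalMinimizer N Ω p R ε M v) (hε : 0 < ε)
    (hw : IsCompetitor N Ω R ε M w) (hge : ∀ x, v x ≤ w x)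
    (hE : N.pEnergy p w ≤ N.pEnergy p v) : w = v := by
  have hv := h.isCompetitor
  have hle : ∫ x, (w x - v x) ≤ 0 := by
    have hmax := h.integral_le w hw hE
    rw [← sub_nonpos, ← integral_sub (hw.integrable_sub_const hε) (hv.integrable_sub_const hε)]
      at hmax
    simpa only [sub_sub_sub_cancel_right] using hmax
  funext x
  by_contra hx
  exact hle.not_gt (((hw.isLipschitz hε).sub (hv.isLipschitz hε)).continuous
    |>.integral_pos_of_hasCompactSupport_nonneg_nonzero (hw.hasCompactSupport_sub hv)
      (fun y => sub_nonneg.2 (hge y)) (x := x) (sub_ne_zero.2 hx))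

lemma ae_gradient_eq_zero_of_one_le (h : IsMaximalMinimizer N Ω p R ε M v) (hε : 0 < ε)
    (hε1 : ε ≤ 1) (hp : 0 < p) : ∀ᵐ x, 1 ≤ v x → ∇ v x = 0 := by
  have hvL := h.isCompetitor.isLipschitz hε
  have hmin : IsCompetitor N Ω R ε M fun x => min (v x) 1 :=
    h.isCompetitor.min (.const zero_le_one) (fun _ => by linarith) (fun _ _ => le_rfl)
      fun _ _ => hε1
  have hgrad : ∀ᵐ x, ∇ (fun y => min (v y) 1) x = if v x < 1 then ∇ v x else 0 := by
    simpa only [gradient_fun_const] using hvL.ae_gradient_min (.const 1)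
  have hv_int := h.isCompetitor.integrable_rpow_gradient hε hp
  have hmin_int := hmin.integrable_rpow_gradient hε hp
  have hnonneg : 0 ≤ᵐ[volume] fun x => N.F (∇ v x) ^ p - N.F (∇ (fun y => min (v y) 1) x) ^ p := by
    filter_upwards [hgrad] with x hx
    rw [hx]
    split_ifs
    · simp
    · simpa [N.map_zero, hp.ne'] using N.rpow_nonneg _ _
  have hzero := (integral_eq_zero_iff_of_nonneg_ae hnonneg (hv_int.sub hmin_int)).1
    (le_antisymm (by
      rw [integral_sub hv_int hmin_int]
      exact sub_nonpos.2 (h.pEnergy_le _ hmin)) (integral_nonneg_of_ae hnonneg))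
  filter_upwards [hgrad, hzero] with x hx hzx hvx
  simp only [hx, if_neg hvx.not_gt, N.map_zero, Real.zero_rpow hp.ne', sub_zero,
    Pi.zero_apply] at hzx
  exact N.eq_zero_iff.1 ((Real.rpow_eq_zero (N.nonneg _) hp.ne').1 hzx)

lemma le_one [Nontrivial (En n)] (h : IsMaximalMinimizer N Ω p R ε M v) (hε : 0 < ε)
    (hε1 : ε ≤ 1) (hp : 0 < p) (x : En n) : v x ≤ 1 := by
  have hvL := h.isCompetitor.isLipschitz hε
  have hexcess : max (v x) 1 - 1 = 0 := by
    refine eq_zero_of_ae_gradient_eq_zero (μ := volume) (g := fun y => max (v y) 1 - 1)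
      ((hvL.max (.const 1)).sub (.const 1)) ?_ (fun y => sub_nonneg.2 (le_max_right _ _)) ?_ x
    · refine .intro (N.isCompact_polar_le R) fun y hy => ?_
      rw [h.isCompetitor.eq_outer y (not_le.1 hy).le, max_eq_right hε1, sub_self]
    · filter_upwards [hvL.ae_gradient_max (.const 1), (hvL.max (.const 1)).ae_differentiableAt,
        h.ae_gradient_eq_zero_of_one_le hε hε1 hp] with y hy hd h1
      rw [gradient_fun_sub hd (differentiableAt_const _), hy]
      simp only [gradient_fun_const, sub_zero]
      split_ifs with hlt
      · rfl
      · exact h1 (not_lt.1 hlt)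
  exact (le_max_left _ _).trans (sub_eq_zero.1 hexcess).le

lemma outer_le (h : IsMaximalMinimizer N Ω p R ε M v) (hε : 0 < ε) (hε1 : ε ≤ 1) (hp : 0 < p)
    (x : En n) : ε ≤ v x := by
  have hmax : IsCompetitor N Ω R ε M fun x => max (v x) ε :=
    h.isCompetitor.max (.const hε.le) (fun _ => by linarith) (fun _ _ => hε1) fun _ _ => le_rfl
  rw [← h.eq_of_ge hε hmax (fun x => le_max_left _ _) ?_]
  · exact le_max_right _ _
  · refine integral_mono_ae (hmax.integrable_rpow_gradient hε hp)
      (h.isCompetitor.integrable_rpow_gradient hε hp) ?_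
    filter_upwards [(h.isCompetitor.isLipschitz hε).ae_gradient_max (.const ε)] with x hx
    rw [hx]
    split_ifs
    · simpa [N.map_zero, hp.ne'] using N.rpow_nonneg _ _
    · rfl

end IsMaximalMinimizer

end MaximalMinimizers

section BarrierBounds

variable {n : ℕ} {N : MinkowskiNorm n} {Ω : Set (En n)} {x₀ x : En n} {p s a b R₀ R r : ℝ}
  {L M : ℝ≥0} {v : En n → ℝ}

lemma MinkowskiNorm.barrier_le_rpow (hs : 0 < s) (ha : 0 ≤ a) (hsR : s ≤ R)
    (hx : R ≤ N.polar (x - x₀)) : N.barrier x₀ s a x ≤ (R / s) ^ (-a) := by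
  have : 0 < R := hs.trans_le hsR
  rw [N.barrier_of_le (hsR.trans hx)]
  exact Real.rpow_le_rpow_of_nonpos (by positivity) (by gcongr) (by linarith)

lemma MinkowskiNorm.rpow_le_barrier (hs : 0 < s) (ha : 0 ≤ a) (hsR : s ≤ R)
    (hx : N.polar (x - x₀) ≤ R) : (R / s) ^ (-a) ≤ N.barrier x₀ s a x := by
  have : 0 < max (N.polar (x - x₀)) s := lt_max_of_lt_right hs
  exact Real.rpow_le_rpow_of_nonpos (by positivity) (by gcongr; exact max_le hx hsR) (by linarith)

lemma rpow_neg_le_one (hR₀ : 0 < R₀) (hR : R₀ ≤ R) (ha : 0 ≤ a) : (R / R₀) ^ (-a) ≤ 1 :=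
  Real.rpow_le_one_of_one_le_of_nonpos ((one_le_div hR₀).2 hR) (by linarith)

lemma isCompetitor_max_barrier (hL : LipschitzWith L N.polar) (hΩ : ∀ x ∉ Ω, N.polar x ≤ R₀)
    (hR₀ : 0 < R₀) (hR : R₀ ≤ R) (ha : 0 ≤ a) (hM : a * L / R₀ ≤ M) :
    IsCompetitor N Ω R ((R / R₀) ^ (-a)) M
      fun x => max (N.barrier 0 R₀ a x) ((R / R₀) ^ (-a)) := by
  have hε : 0 < (R / R₀) ^ (-a) := by have := hR₀.trans_le hR; positivity
  have hε1 := rpow_neg_le_one hR₀ hR ha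
  refine ⟨fun x => le_max_of_le_right (by linarith),
    fun x => (max_le (N.barrier_le_one hR₀ ha x) hε1).trans one_le_two, fun x hx => ?_,
    fun x hx => max_eq_right (N.barrier_le_rpow hR₀ ha hR (by rwa [sub_zero])),
    (N.logLipschitzWith_barrier hL hR₀ ha hM).max (.const hε.le)⟩
  rw [N.barrier_eq_one hR₀ (by rw [sub_zero]; exact hΩ x hx), max_eq_left hε1]

theorem IsMaximalMinimizer.le_max_barrier [Nontrivial (En n)] (hL : LipschitzWith L N.polar)
    (hΩ : ∀ x ∉ Ω, N.polar x ≤ R₀) (hR₀ : 0 < R₀) (hR : R₀ ≤ R) (ha : 0 < a)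
    (hM : a * L / R₀ ≤ M) (hp : 1 < p) (han : (a + 1) * (p - 1) + 1 < n)
    (h : IsMaximalMinimizer N Ω p R ((R / R₀) ^ (-a)) M v) (x : En n) :
    v x ≤ max (N.barrier 0 R₀ a x) ((R / R₀) ^ (-a)) := by
  have hp0 : 0 < p := zero_lt_one.trans hp
  have hv := h.isCompetitor
  have hW := isCompetitor_max_barrier hL hΩ hR₀ hR ha.le hM
  have hε : 0 < (R / R₀) ^ (-a) := by have := hR₀.trans_le hR; positivity
  have hε1 := rpow_neg_le_one hR₀ hR ha.le
  set W : En n → ℝ := fun x => max (N.barrier 0 R₀ a x) ((R / R₀) ^ (-a))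
  have hw := hv.min hW.logLipschitzWith hW.half_le (fun x hx => (hW.eq_one x hx).ge)
    fun x hx => (hW.eq_outer x hx).ge
  have hpolar : Continuous N.polar := (isLipschitz_seminorm N.polar).continuous
  have heq := N.eq_of_pEnergy_le_of_eq_barrier (x₀ := 0) hp ha hR₀ (hv.isLipschitz hε)
    (hw.isLipschitz hε) hv.hasCompactSupport_gradient hw.hasCompactSupport_gradient
    (hw.hasCompactSupport_sub hv) (fun y hy => ?_) (h.pEnergy_le _ hw) (by linarith)
    fun y => mul_nonneg_of_nonpos_of_nonpos (by linarith) (sub_nonpos.2 (min_le_left _ _))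
  · rw [← congrFun heq x]
    exact min_le_right _ _
  have hlt : W y < v y := by
    by_contra hle
    exact hy (min_eq_left (not_lt.1 hle))
  have hinner : R₀ < N.polar y := by
    by_contra hle
    refine hlt.not_ge ((h.le_one hε hε1 hp0 y).trans (le_max_of_le_left ?_))
    rw [N.barrier_eq_one hR₀ (by rw [sub_zero]; exact not_lt.1 hle)]
  have houter : N.polar y < R := by
    by_contra hle
    exact hlt.ne (by rw [hv.eq_outer y (not_lt.1 hle), hW.eq_outer y (not_lt.1 hle)])
  refine ⟨by rwa [sub_zero], ?_⟩
  filter_upwards [hpolar.continuousAt.eventually (gt_mem_nhds houter),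
    (hW.isLipschitz hε).continuous.continuousAt.eventually_lt
      (hv.isLipschitz hε).continuous.continuousAt hlt] with z hz hzlt
  rw [min_eq_right hzlt.le]
  exact max_eq_left (N.rpow_le_barrier hR₀ ha.le hR (by rw [sub_zero]; exact hz.le))

/-- The complement of `Ω` lies in the Wulff shape of radius `R₀ / 2`, and every boundary point of
`Ω` belongs to a Wulff shape of radius `r` contained in the complement. -/
structure HasTouchingWulff (N : MinkowskiNorm n) (Ω : Set (En n)) (R₀ r : ℝ) : Prop where
  isOpen : IsOpen Ω
  radius_pos : 0 < r
  radius_le : r ≤ R₀ / 2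
  polar_lt : ∀ x ∉ Ω, N.polar x < R₀ / 2
  exists_touching : ∀ y ∈ frontier Ω, ∃ x₀, N.polar (y - x₀) ≤ r ∧
    ∀ x, N.polar (x - x₀) ≤ r → x ∉ Ω

lemma HasTouchingWulff.outer_pos (hΩ : HasTouchingWulff N Ω R₀ r) : 0 < R₀ := by
  linarith [hΩ.radius_pos, hΩ.radius_le]

lemma HasTouchingWulff.barrier_le_outer (hΩ : HasTouchingWulff N Ω R₀ r) (hR : R₀ ≤ R)
    (hb : 0 ≤ b) (hab : a ≤ b) (hx₀ : x₀ ∉ Ω) (hx : R ≤ N.polar x) :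
    N.barrier x₀ r b x ≤ (R / R₀) ^ (-a) := by
  have hr := hΩ.radius_pos
  have hR₀ := hΩ.outer_pos
  have hratio : R / R₀ ≤ max (N.polar (x - x₀)) r / r := by
    have hdist : R - R₀ / 2 ≤ max (N.polar (x - x₀)) r := le_max_of_le_left <| by
      linarith [hΩ.polar_lt x₀ hx₀, le_map_add_map_sub N.polar x x₀, map_sub_rev N.polar x x₀]
    rw [div_le_div_iff₀ hR₀ hr]
    nlinarith [hΩ.radius_le]
  calc N.barrier x₀ r b x ≤ (R / R₀) ^ (-b) :=
        Real.rpow_le_rpow_of_nonpos (div_pos (hR₀.trans_le hR) hR₀) hratio (by linarith)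
    _ ≤ (R / R₀) ^ (-a) :=
        Real.rpow_le_rpow_of_exponent_le ((one_le_div hR₀).2 hR) (by linarith)

theorem IsMaximalMinimizer.barrier_le (hΩ : HasTouchingWulff N Ω R₀ r)
    (hL : LipschitzWith L N.polar) (hR : R₀ ≤ R) (hb : 0 < b) (hab : a ≤ b)
    (hM : b * L / r ≤ M) (hp : 1 < p) (hbn : n < (b + 1) * (p - 1) + 1)
    (h : IsMaximalMinimizer N Ω p R ((R / R₀) ^ (-a)) M v)
    (hx₀ : ∀ x, N.polar (x - x₀) ≤ r → x ∉ Ω) (x : En n) : N.barrier x₀ r b x ≤ v x := by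
  have hr := hΩ.radius_pos
  have hv := h.isCompetitor
  have hε : 0 < (R / R₀) ^ (-a) := by
    have := hΩ.outer_pos
    have := this.trans_le hR
    positivity
  have hbar1 := N.barrier_le_one (x₀ := x₀) hr hb.le
  have hx₀Ω : x₀ ∉ Ω := hx₀ x₀ (by rw [sub_self, map_zero]; exact hr.le)
  have hw := hv.max (N.logLipschitzWith_barrier (x₀ := x₀) hL hr hb.le hM)
    (fun x => (hbar1 x).trans one_le_two) (fun x _ => hbar1 x)
    fun x hx => hΩ.barrier_le_outer hR hb.le hab hx₀Ω hx
  have heq := N.eq_of_pEnergy_le_of_eq_barrier (x₀ := x₀) hp hb hr (hv.isLipschitz hε)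
    (hw.isLipschitz hε) hv.hasCompactSupport_gradient hw.hasCompactSupport_gradient
    (hw.hasCompactSupport_sub hv) (fun y hy => ?_) (h.pEnergy_le _ hw) (by linarith)
    fun y => mul_nonneg (by linarith) (sub_nonneg.2 (le_max_left _ _))
  · rw [← congrFun heq x]
    exact le_max_right _ _
  have hlt : v y < N.barrier x₀ r b y := by
    by_contra hle
    exact hy (max_eq_left (not_lt.1 hle))
  constructor
  · by_contra hle
    exact hlt.not_ge ((hbar1 y).trans_eq (hv.eq_one y (hx₀ y (not_lt.1 hle))).symm)
  · filter_upwards [(hv.isLipschitz hε).continuous.continuousAt.eventually_lt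
      (N.isLipschitz_barrier hr hb.le).continuous.continuousAt hlt] with z hz
    exact max_eq_right hz.le

end BarrierBounds

section HarnackPropagation

namespace MinkowskiNorm

variable {n : ℕ} (N : MinkowskiNorm n) {p c : ℝ} {f g : En n → ℝ}

lemma pEnergy_comp_add_right (p : ℝ) (f : En n → ℝ) (h : En n) :
    N.pEnergy p (fun x => f (x + h)) = N.pEnergy p f := by
  simp only [pEnergy, gradient_comp_add_right]
  exact integral_add_right_eq_self (fun x => N.F (∇ f x) ^ p) h

lemma rpow_gradient_const_mul (hc : 0 ≤ c) (hf : IsLipschitz f) :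
    (fun x => N.F (∇ (fun y => c * f y) x) ^ p) =ᵐ[volume] fun x => c ^ p * N.F (∇ f x) ^ p := by
  filter_upwards [hf.ae_differentiableAt] with x hx
  rw [gradient_fun_const_mul c hx, N.homog c hc, Real.mul_rpow hc (N.nonneg _)]

lemma pEnergy_const_mul (hc : 0 ≤ c) (hf : IsLipschitz f) :
    N.pEnergy p (fun x => c * f x) = c ^ p * N.pEnergy p f := by
  rw [pEnergy, integral_congr_ae (N.rpow_gradient_const_mul hc hf), integral_const_mul, pEnergy]

lemma pEnergy_max_add_pEnergy_min (hf : IsLipschitz f) (hg : IsLipschitz g)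
    (hfi : Integrable fun x => N.F (∇ f x) ^ p) (hgi : Integrable fun x => N.F (∇ g x) ^ p) :
    N.pEnergy p (fun x => max (f x) (g x)) + N.pEnergy p (fun x => min (f x) (g x)) =
      N.pEnergy p f + N.pEnergy p g := by
  have hint (w : En n → ℝ) (hw : ∀ᵐ x, ∇ w x = ∇ f x ∨ ∇ w x = ∇ g x) :
      Integrable fun x => N.F (∇ w x) ^ p := by
    refine (hfi.add hgi).mono' ((N.measurable_comp_gradient w).pow_const p).aestronglyMeasurable ?_
    filter_upwards [hw] with x hx
    rw [Real.norm_of_nonneg (N.rpow_nonneg _ p)]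
    rcases hx with hx | hx <;> rw [hx]
    · exact le_add_of_nonneg_right (N.rpow_nonneg _ p)
    · exact le_add_of_nonneg_left (N.rpow_nonneg _ p)
  have hmax := hint (fun x => max (f x) (g x)) <|
    (hf.ae_gradient_max hg).mono fun x hx => by rw [hx]; split_ifs <;> simp
  have hmin := hint (fun x => min (f x) (g x)) <|
    (hf.ae_gradient_min hg).mono fun x hx => by rw [hx]; split_ifs <;> simp
  simp only [pEnergy]
  rw [← integral_add hmax hmin, ← integral_add hfi hgi]
  refine integral_congr_ae ?_
  filter_upwards [hf.ae_gradient_max hg, hf.ae_gradient_min hg] with x hx hx'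
  rw [hx, hx']
  split_ifs
  · exact add_comm _ _
  · rfl

end MinkowskiNorm

lemma LogLipschitzWith.const_mul_comp_add_right {E : Type*} [SeminormedAddCommGroup E] {M : ℝ≥0}
    {v : E → ℝ} (hv : LogLipschitzWith M v) {c : ℝ} (hc : 0 ≤ c) (h : E) :
    LogLipschitzWith M fun x => c * v (x + h) := fun x y => by
  have := hv (x + h) (y + h)
  rw [dist_add_right] at this
  rw [mul_left_comm]
  exact mul_le_mul_of_nonneg_left this hc

namespace IsMaximalMinimizer

variable {n : ℕ} {N : MinkowskiNorm n} {Ω : Set (En n)} {p R ε : ℝ} {M C : ℝ≥0} {v : En n → ℝ}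

/- Comparing `v` with its scaled translates: if both `max v (l⁻¹ τv)` and `min v (l τ⁻¹v)` are
competitors, then submodularity of the energy makes the first one a minimizer as well, and
maximality gives `τv ≤ l v`. -/
lemma apply_add_le_of_isCompetitor (h : IsMaximalMinimizer N Ω p R ε M v) (hε : 0 < ε)
    (hp : 0 < p) {l : ℝ} (hl : 0 < l) {e : En n}
    (hmax : IsCompetitor N Ω R ε M fun x => max (v x) (l⁻¹ * v (x + e)))
    (hmin : IsCompetitor N Ω R ε M fun x => min (v x) (l * v (x + -e))) (x : En n) :
    v (x + e) ≤ l * v x := by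
  have hv := h.isCompetitor
  have hvL := hv.isLipschitz hε
  have hvi := hv.integrable_rpow_gradient hε hp
  have hscale : l ^ p * N.pEnergy p (fun x => max (v x) (l⁻¹ * v (x + e))) =
      N.pEnergy p fun x => max (l * v x) (v (x + e)) := by
    rw [← N.pEnergy_const_mul hl.le (hmax.isLipschitz hε)]
    simp only [mul_max_of_nonneg _ _ hl.le, mul_inv_cancel_left₀ hl.ne']
  have hshift : N.pEnergy p (fun x => min (v x) (l * v (x + -e))) =
      N.pEnergy p fun x => min (l * v x) (v (x + e)) := by
    rw [← N.pEnergy_comp_add_right p _ e]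
    simp only [add_neg_cancel_right, min_comm]
  have hsubmodular := N.pEnergy_max_add_pEnergy_min (p := p) (hvL.const_mul l)
    (hvL.comp_add_right e) ((hvi.const_mul _).congr (N.rpow_gradient_const_mul hl.le hvL).symm)
    (by simpa only [gradient_comp_add_right] using hvi.comp_add_right e)
  rw [N.pEnergy_const_mul hl.le hvL, N.pEnergy_comp_add_right] at hsubmodular
  have hE : N.pEnergy p (fun x => max (v x) (l⁻¹ * v (x + e))) ≤ N.pEnergy p v := by
    refine le_of_mul_le_mul_left ?_ (Real.rpow_pos_of_pos hl p)
    linarith [h.pEnergy_le _ hmin]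
  rw [← inv_mul_le_iff₀ hl, ← congrFun (h.eq_of_ge hε hmax (fun x => le_max_left _ _) hE) x]
  exact le_max_right _ _

theorem logLipschitzWith_of_boundary [Nontrivial (En n)] (h : IsMaximalMinimizer N Ω p R ε M v)
    (hε : 0 < ε) (hε1 : ε ≤ 1) (hp : 0 < p)
    (h_inner : ∀ x ∉ Ω, ∀ y, 1 ≤ Real.exp (C * dist x y) * v y)
    (h_outer : ∀ x, R ≤ N.polar x → ∀ y, v y ≤ Real.exp (C * dist y x) * ε) :
    LogLipschitzWith C v := by
  have hv := h.isCompetitor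
  have hv1 := h.le_one hε hε1 hp
  have hvε := h.outer_le hε hε1 hp
  intro y x
  obtain ⟨e, rfl⟩ : ∃ e, y = x + e := ⟨y - x, (add_sub_cancel x y).symm⟩
  rw [dist_self_add_left]
  set l := Real.exp (C * ‖e‖)
  have hl0 : 0 < l := Real.exp_pos _
  have hl1 : 1 ≤ l := Real.one_le_exp (by positivity)
  have hshrunk (z : En n) : l⁻¹ * v (z + e) ≤ 1 :=
    mul_le_one₀ (inv_le_one_of_one_le₀ hl1) (hε.le.trans (hvε _)) (hv1 _)
  have hdilated (z : En n) : ε ≤ l * v (z + -e) :=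
    (hvε _).trans (le_mul_of_one_le_left (hε.le.trans (hvε _)) hl1)
  refine h.apply_add_le_of_isCompetitor hε hp hl0
    (hv.max (hv.logLipschitzWith.const_mul_comp_add_right (inv_pos.2 hl0).le e)
      (fun z => (hshrunk z).trans one_le_two) (fun z _ => hshrunk z) fun z hz => ?_)
    (hv.min (hv.logLipschitzWith.const_mul_comp_add_right hl0.le (-e))
      (fun z => (half_le_self hε.le).trans (hdilated z)) (fun z hz => ?_)
      fun z _ => hdilated z) x
  · simpa only [inv_mul_le_iff₀ hl0, dist_self_add_left] using h_outer z hz (z + e)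
  · simpa only [dist_self_add_right, norm_neg] using h_inner z hz (z + -e)

end IsMaximalMinimizer

lemma inter_frontier_nonempty_of_isPreconnected {X : Type*} [TopologicalSpace X] {s u : Set X}
    (hs : IsPreconnected s) (hu : IsOpen u) (hsu : (s ∩ u).Nonempty) (hsu' : (s \ u).Nonempty) :
    (s ∩ frontier u).Nonempty := by
  by_contra hempty
  obtain ⟨x, hxs, hxu⟩ := hsu
  obtain ⟨y, hys, hyu⟩ := hsu'
  have : PreconnectedSpace s := Subtype.preconnectedSpace hs
  rcases isClopen_iff.1 (isClopen_preimage_val hu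
    (disjoint_iff_inter_eq_empty.2 (by rwa [inter_comm, ← not_nonempty_iff_eq_empty]))) with h | h
  · exact (h.subset (show (⟨x, hxs⟩ : s) ∈ _ from hxu) :)
  · exact hyu (h.superset (mem_univ (⟨y, hys⟩ : s)))

namespace HasTouchingWulff

variable {n : ℕ} {N : MinkowskiNorm n} {Ω : Set (En n)} {p R R₀ r a b : ℝ} {L C M : ℝ≥0}
  {v : En n → ℝ}

lemma one_le_exp_mul_of_barrier_le (hΩ : HasTouchingWulff N Ω R₀ r)
    (hL : LipschitzWith L N.polar) (hb : 0 ≤ b) (hC : b * L / r ≤ C) (hv : ∀ x ∉ Ω, v x = 1)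
    (hbar : ∀ x₀, (∀ x, N.polar (x - x₀) ≤ r → x ∉ Ω) → ∀ x, N.barrier x₀ r b x ≤ v x)
    {x : En n} (hx : x ∉ Ω) (y : En n) : 1 ≤ Real.exp (C * dist x y) * v y := by
  by_cases hy : y ∈ Ω
  · obtain ⟨z, hz, hzf⟩ := inter_frontier_nonempty_of_isPreconnected
      (convex_segment x y).isPreconnected hΩ.isOpen
      ⟨y, right_mem_segment ℝ x y, hy⟩ ⟨x, left_mem_segment ℝ x y, hx⟩
    obtain ⟨x₀, hzx₀, hx₀⟩ := hΩ.exists_touching z hzf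
    have hdist : dist z y ≤ dist x y := by
      linarith [dist_add_dist_of_mem_segment hz, dist_nonneg (x := x) (y := z)]
    calc 1 = N.barrier x₀ r b z := (N.barrier_eq_one hΩ.radius_pos hzx₀).symm
      _ ≤ Real.exp (C * dist z y) * N.barrier x₀ r b y :=
        N.logLipschitzWith_barrier hL hΩ.radius_pos hb hC z y
      _ ≤ Real.exp (C * dist x y) * v y :=
        mul_le_mul (by gcongr) (hbar x₀ hx₀ y) (N.barrier_pos hΩ.radius_pos y).le
          (Real.exp_pos _).le
  · rw [hv y hy, mul_one]
    exact Real.one_le_exp (by positivity)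

theorem logLipschitzWith [Nontrivial (En n)] (hΩ : HasTouchingWulff N Ω R₀ r)
    (hL : LipschitzWith L N.polar) (hR : R₀ ≤ R) (ha : 0 < a) (hab : a ≤ b)
    (hC : b * L / r ≤ C) (hCM : C ≤ M) (hp : 1 < p) (han : (a + 1) * (p - 1) + 1 < n)
    (hbn : n < (b + 1) * (p - 1) + 1)
    (h : IsMaximalMinimizer N Ω p R ((R / R₀) ^ (-a)) M v) : LogLipschitzWith C v := by
  have hr := hΩ.radius_pos
  have hR₀ := hΩ.outer_pos
  have hb : 0 < b := ha.trans_le hab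
  have hΩ' (x : En n) (hx : x ∉ Ω) : N.polar x ≤ R₀ := by linarith [hΩ.polar_lt x hx]
  have haC : a * L / R₀ ≤ C := le_trans (by gcongr; linarith [hΩ.radius_le]) hC
  have hε : 0 < (R / R₀) ^ (-a) := by have := hR₀.trans_le hR; positivity
  have hW := isCompetitor_max_barrier (N := N) hL hΩ' hR₀ hR ha.le haC
  have hCM' : (C : ℝ) ≤ M := hCM
  refine h.logLipschitzWith_of_boundary hε (rpow_neg_le_one hR₀ hR ha.le) (zero_lt_one.trans hp)
    (fun x hx => hΩ.one_le_exp_mul_of_barrier_le hL hb.le hC h.isCompetitor.eq_one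
      (fun x₀ => h.barrier_le hΩ hL hR hb hab (hC.trans hCM') hp hbn) hx) fun x hx y => ?_
  rw [← hW.eq_outer x hx]
  exact (h.le_max_barrier hL hΩ' hR₀ hR ha (haC.trans hCM') hp han y).trans
    (hW.logLipschitzWith y x)

end HasTouchingWulff

end HarnackPropagation

section PFlux

namespace MinkowskiNorm

variable {n : ℕ} (N : MinkowskiNorm n) {p r : ℝ}

/-- The gradient of `ξ ↦ F(ξ)ᵖ / p`, i.e. the flux of the anisotropic `p`-Laplacian. -/
def pFlux (p : ℝ) (ξ : En n) : En n := N.F ξ ^ (p - 1) • ∇ N.F ξ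

lemma rpow_add_inner_pFlux_le (hp : 1 ≤ p) (ξ η : En n) :
    N.F ξ ^ p + p * ⟪N.pFlux p ξ, η - ξ⟫ ≤ N.F η ^ p := by
  rw [pFlux, real_inner_smul_left, ← mul_assoc]
  exact N.rpow_add_inner_le_rpow hp ξ η

lemma inner_pFlux_self (hp : p ≠ 0) (ξ : En n) : ⟪N.pFlux p ξ, ξ⟫ = N.F ξ ^ p := by
  rw [pFlux, real_inner_smul_left, N.inner_gradient_self,
    ← Real.rpow_add_one' (N.nonneg ξ) (by rwa [sub_add_cancel]), sub_add_cancel]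

lemma pFlux_neg_smul {c : ℝ} (hc : 0 < c) (p : ℝ) (ξ : En n) :
    N.pFlux p (-c • ξ) = -c ^ (p - 1) • N.pFlux p ξ := by
  have hgrad : -c • ∇ N.F (-c • ξ) = -c • -∇ N.F ξ := by
    have h := gradient_seminorm_smul N.toSeminorm (-c) ξ
    rw [abs_neg, abs_of_pos hc] at h
    rw [neg_smul_neg]
    exact h
  have hF : N.F (-c • ξ) = c * N.F ξ := by rw [neg_smul, N.even, N.homog c hc.le]
  rw [pFlux, pFlux, hF, Real.mul_rpow hc.le (N.nonneg ξ),
    smul_right_injective (En n) (neg_ne_zero.2 hc.ne') hgrad]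
  module

lemma exists_rpow_le (r P : ℝ) :
    ∃ A, ∀ q, 0 ≤ q → q ≤ P → ∀ ξ, ‖ξ‖ ≤ r → N.F ξ ^ q ≤ A := by
  obtain ⟨C, hC, hF⟩ := N.exists_le_mul_norm
  refine ⟨max 1 (C * r) ^ P, fun q hq hqP ξ hξ => ?_⟩
  calc N.F ξ ^ q ≤ max 1 (C * r) ^ q := by
        refine Real.rpow_le_rpow (N.nonneg ξ) (((hF ξ).trans ?_).trans (le_max_right _ _)) hq
        gcongr
    _ ≤ max 1 (C * r) ^ P := Real.rpow_le_rpow_of_exponent_le (le_max_left _ _) hqP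

lemma exists_norm_pFlux_le (r P : ℝ) :
    ∃ A, ∀ p, 1 ≤ p → p ≤ P → ∀ ξ, ‖ξ‖ ≤ r → ‖N.pFlux p ξ‖ ≤ A := by
  obtain ⟨A, hA⟩ := N.exists_rpow_le r (P - 1)
  obtain ⟨D, -, hD⟩ := N.isLipschitz.exists_norm_gradient_le
  refine ⟨A * D, fun p hp hpP ξ hξ => ?_⟩
  have hF := hA (p - 1) (by linarith) (by linarith) ξ hξ
  rw [pFlux, norm_smul, Real.norm_of_nonneg (N.rpow_nonneg _ _)]
  exact mul_le_mul hF (hD ξ) (norm_nonneg _) ((N.rpow_nonneg _ _).trans hF)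

lemma measurable_pFlux (p : ℝ) : Measurable (N.pFlux p) :=
  (N.continuous.measurable.pow_const _).smul (measurable_gradient N.F)

lemma continuous_pFlux (hp : 1 < p) : Continuous (N.pFlux p) := by
  have hF : Continuous fun ξ => N.F ξ ^ (p - 1) :=
    N.continuous.rpow_const fun _ => .inr (by linarith)
  refine continuous_iff_continuousAt.2 fun ξ => ?_
  rcases eq_or_ne ξ 0 with rfl | hξ
  · obtain ⟨D, -, hD⟩ := N.isLipschitz.exists_norm_gradient_le
    have hzero : N.F 0 ^ (p - 1) = 0 := by rw [N.map_zero, Real.zero_rpow (by linarith)]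
    have hlim : Tendsto (fun ξ => N.F ξ ^ (p - 1)) (𝓝 0) (𝓝 0) := hzero ▸ hF.tendsto 0
    rw [ContinuousAt, pFlux, hzero, zero_smul]
    exact hlim.zero_smul_isBoundedUnder_le (isBoundedUnder_of ⟨D, hD⟩)
  · have hopen : IsOpen ({0}ᶜ : Set (En n)) := isOpen_compl_singleton
    have hfderiv := (N.smooth.continuousOn_fderiv_of_isOpen hopen (by simp)).continuousAt
      (hopen.mem_nhds hξ)
    exact hF.continuousAt.smul
      ((InnerProductSpace.toDual ℝ (En n)).symm.continuous.continuousAt.comp hfderiv)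

lemma integrable_inner_pFlux (hp : 1 ≤ p) {X Y : En n → En n} (hX : Measurable X)
    (hr : ∀ x, ‖X x‖ ≤ r) (hY : Integrable Y) : Integrable fun x => ⟪N.pFlux p (X x), Y x⟫ := by
  obtain ⟨A, hA⟩ := N.exists_norm_pFlux_le r p
  refine (hY.norm.const_mul A).mono'
    (((N.measurable_pFlux p).comp hX).aestronglyMeasurable.inner hY.aestronglyMeasurable)
    (.of_forall fun x => (norm_inner_le_norm _ _).trans ?_)
  gcongr
  exact hA p hp le_rfl _ (hr x)

end MinkowskiNorm

end PFlux

section FirstVariation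

namespace MinkowskiNorm

variable {n : ℕ} (N : MinkowskiNorm n) {p : ℝ} {v ψ : En n → ℝ}

lemma pEnergy_add_const_mul_le (hp : 1 ≤ p) (hv : IsLipschitz v) (hvc : HasCompactSupport (∇ v))
    (hψ : IsLipschitz ψ) (hψc : HasCompactSupport ψ) (t : ℝ) :
    N.pEnergy p (fun x => v x + t * ψ x) ≤
      N.pEnergy p v + p * t * ∫ x, ⟪N.pFlux p (∇ v x + t • ∇ ψ x), ∇ ψ x⟫ := by
  obtain ⟨A, -, hA⟩ := hv.exists_norm_gradient_le
  obtain ⟨B, -, hB⟩ := hψ.exists_norm_gradient_le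
  have hgrad : ∀ᵐ x, ∇ (fun y => v y + t * ψ y) x = ∇ v x + t • ∇ ψ x := by
    filter_upwards [hv.ae_differentiableAt, hψ.ae_differentiableAt] with x hvx hψx
    rw [gradient_fun_add hvx (hψx.const_mul t), gradient_fun_const_mul t hψx]
  have hflux : Integrable fun x => ⟪N.pFlux p (∇ v x + t • ∇ ψ x), ∇ ψ x⟫ := by
    refine N.integrable_inner_pFlux (r := A + ‖t‖ * B) hp
      ((measurable_gradient v).add ((measurable_gradient ψ).const_smul t))
      (fun x => (norm_add_le _ _).trans (add_le_add (hA x) ?_)) (hψ.integrable_gradient hψc)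
    rw [norm_smul]
    gcongr
    exact hB x
  have hvint := N.integrable_rpow_gradient (by linarith : 0 < p) hv hvc
  simp only [pEnergy]
  rw [← integral_const_mul, ← integral_add hvint (hflux.const_mul _)]
  refine integral_mono_of_nonneg (.of_forall fun x => N.rpow_nonneg _ _)
    (hvint.add (hflux.const_mul _)) ?_
  filter_upwards [hgrad] with x hx
  have hconv := N.rpow_add_inner_pFlux_le hp (∇ v x + t • ∇ ψ x) (∇ v x)
  rw [sub_add_cancel_left, inner_neg_right, real_inner_smul_right] at hconv
  simp only [hx]
  linarith

lemma tendsto_integral_inner_pFlux_add_smul (hp : 1 < p) (hv : IsLipschitz v)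
    (hψ : IsLipschitz ψ) (hψc : HasCompactSupport ψ) :
    Tendsto (fun t : ℝ => ∫ x, ⟪N.pFlux p (∇ v x + t • ∇ ψ x), ∇ ψ x⟫) (𝓝 0)
      (𝓝 (∫ x, ⟪N.pFlux p (∇ v x), ∇ ψ x⟫)) := by
  obtain ⟨A, -, hA⟩ := hv.exists_norm_gradient_le
  obtain ⟨B, -, hB⟩ := hψ.exists_norm_gradient_le
  obtain ⟨D, hD⟩ := N.exists_norm_pFlux_le (A + B) p
  refine tendsto_integral_filter_of_dominated_convergence (fun x => D * ‖∇ ψ x‖)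
    (.of_forall fun t => ?_) ?_ ((hψ.integrable_gradient hψc).norm.const_mul D)
    (.of_forall fun x => ?_)
  · exact (((N.measurable_pFlux p).comp ((measurable_gradient v).add
      ((measurable_gradient ψ).const_smul t))).inner (measurable_gradient ψ)).aestronglyMeasurable
  · filter_upwards [closedBall_mem_nhds (0 : ℝ) one_pos] with t ht
    refine .of_forall fun x => (norm_inner_le_norm _ _).trans ?_
    gcongr
    refine hD p hp.le le_rfl _ ((norm_add_le _ _).trans (add_le_add (hA x) ?_))
    rw [norm_smul, ← one_mul B]
    exact mul_le_mul (mem_closedBall_zero_iff.1 ht) (hB x) (norm_nonneg _) zero_le_one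
  · have hcont : Continuous fun t : ℝ => ⟪N.pFlux p (∇ v x + t • ∇ ψ x), ∇ ψ x⟫ :=
      ((N.continuous_pFlux hp).comp (by fun_prop)).inner continuous_const
    exact hcont.tendsto' 0 _ (by rw [zero_smul, add_zero])

theorem integral_inner_pFlux_nonneg (hp : 1 < p) (hv : IsLipschitz v)
    (hvc : HasCompactSupport (∇ v)) (hψ : IsLipschitz ψ) (hψc : HasCompactSupport ψ)
    (hmin : ∀ᶠ t in 𝓝[>] (0 : ℝ), N.pEnergy p v ≤ N.pEnergy p fun x => v x + t * ψ x) :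
    0 ≤ ∫ x, ⟪N.pFlux p (∇ v x), ∇ ψ x⟫ := by
  refine ge_of_tendsto ((N.tendsto_integral_inner_pFlux_add_smul hp hv hψ hψc).mono_left
    (nhdsWithin_le_nhds (s := Ioi 0))) ?_
  filter_upwards [hmin, self_mem_nhdsWithin] with t ht (ht0 : 0 < t)
  have hle := ht.trans (N.pEnergy_add_const_mul_le hp.le hv hvc hψ hψc t)
  exact (mul_nonneg_iff_of_pos_left (by positivity : 0 < p * t)).1 (by linarith)

end MinkowskiNorm

end FirstVariation

section EulerLagrange

lemma LogLipschitzWith.add_of_lipschitzWith {X : Type*} [PseudoMetricSpace X] {C D L : ℝ≥0}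
    {v ψ : X → ℝ} {A m : ℝ} (hv : LogLipschitzWith C v) (hψ : LipschitzWith L ψ)
    (hA : ∀ x, |ψ x| ≤ A) (hm0 : 0 ≤ m) (hm : ∀ x, m ≤ v x + ψ x) (hsmall : C * A + L ≤ D * m) :
    LogLipschitzWith (C + D) fun x => v x + ψ x := fun x y => by
  obtain ⟨d, hd⟩ : ∃ d, d = dist x y := ⟨_, rfl⟩
  have hd0 : 0 ≤ d := hd ▸ dist_nonneg
  obtain ⟨e, he⟩ : ∃ e, e = Real.exp (C * d) := ⟨_, rfl⟩
  have he1 : 1 ≤ e := he ▸ Real.one_le_exp (by positivity)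
  have hvxy : v x ≤ e * v y := by rw [he, hd]; exact hv x y
  have hψxy : ψ x ≤ ψ y + L * d := by
    have := (abs_le.1 ((Real.dist_eq _ _).symm.trans_le (hψ.dist_le_mul x y))).2
    rw [hd]; linarith
  have hexp : e - 1 ≤ C * d * e := by
    have := mul_le_mul_of_nonneg_left (Real.one_sub_le_exp_neg (C * d)) (zero_le_one.trans he1)
    rw [Real.exp_neg, ← he, mul_inv_cancel₀ (by positivity)] at this
    linarith
  have hneg : -(C * d * e * A) ≤ (e - 1) * ψ y := by
    have := mul_le_mul hexp (hA y) (abs_nonneg _) (by positivity)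
    have hψy := mul_le_mul_of_nonneg_left (neg_abs_le (ψ y)) (sub_nonneg.2 he1)
    linarith
  have hsum : d * e * (C * A + L) ≤ e * (D * d) * (v y + ψ y) := by
    calc d * e * (C * A + L) ≤ d * e * (D * (v y + ψ y)) := by
          gcongr
          exact hsmall.trans (by gcongr; exact hm y)
      _ = e * (D * d) * (v y + ψ y) := by ring
  have hLd : L * d ≤ d * e * L := by nlinarith [mul_nonneg L.coe_nonneg hd0]
  have hpos : 0 ≤ v y + ψ y := hm0.trans (hm y)
  calc v x + ψ x ≤ e * (1 + D * d) * (v y + ψ y) := by linarith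
    _ ≤ Real.exp ((C + D : ℝ≥0) * dist x y) * (v y + ψ y) := by
        rw [← hd, NNReal.coe_add, add_mul, Real.exp_add, ← he]
        gcongr
        linarith [Real.add_one_le_exp (D * d)]

variable {n : ℕ} {N : MinkowskiNorm n} {Ω U : Set (En n)} {p R ε : ℝ} {C D : ℝ≥0}
  {u v ψ ζ : En n → ℝ} {x : En n}

lemma IsCompetitor.eventually_add_const_mul (h : IsCompetitor N Ω R ε (C + D) v) (hε : 0 < ε)
    (hlow : ∀ x, ε ≤ v x) (hup : ∀ x, v x ≤ 1) (hC : LogLipschitzWith C v) (hD : 0 < D)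
    (hψ : IsLipschitz ψ) (hψc : HasCompactSupport ψ)
    (hψ0 : ∀ x ∉ Ω ∩ {x | N.polar x < R}, ψ x = 0) :
    ∀ᶠ t in 𝓝[>] (0 : ℝ), IsCompetitor N Ω R ε (C + D) fun x => v x + t * ψ x := by
  obtain ⟨A, hA⟩ := hψ.exists_abs_le hψc
  obtain ⟨L, hL⟩ := hψ
  have hsmall : ∀ c δ : ℝ, 0 < δ → ∀ᶠ t in 𝓝[>] (0 : ℝ), t * c ≤ δ := fun c δ hδ =>
    ((continuous_mul_const c).tendsto' 0 0 (zero_mul c)).mono_left nhdsWithin_le_nhds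
      |>.eventually_le_const hδ
  filter_upwards [hsmall A (ε / 2) (by positivity), hsmall A 1 one_pos,
    hsmall (C * A + L) (D * (ε / 2)) (by positivity), self_mem_nhdsWithin]
    with t htε ht1 htD (ht : 0 < t)
  have htψ : ∀ x, |t * ψ x| ≤ t * A := fun x => by
    rw [abs_mul, abs_of_pos ht]
    gcongr
    exact hA x
  have hhalf : ∀ x, ε / 2 ≤ v x + t * ψ x := fun x => by
    linarith [(abs_le.1 (htψ x)).1, hlow x]
  have hψL : LipschitzWith (t.toNNReal * L) fun x => t * ψ x :=
    LipschitzWith.of_dist_le_mul fun x y => by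
      rw [Real.dist_eq, ← mul_sub, abs_mul, abs_of_pos ht, NNReal.coe_mul,
        Real.coe_toNNReal t ht.le, mul_assoc]
      gcongr
      exact hL.dist_le_mul x y
  refine ⟨hhalf, fun x => by linarith [(abs_le.1 (htψ x)).2, hup x], fun x hx => ?_,
    fun x hx => ?_, hC.add_of_lipschitzWith hψL htψ (by positivity) hhalf ?_⟩
  · simp [h.eq_one x hx, hψ0 x fun hxU => hx hxU.1]
  · simp [h.eq_outer x hx, hψ0 x fun hxU => hx.not_gt hxU.2]
  · rw [NNReal.coe_mul, Real.coe_toNNReal t ht.le]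
    linarith

theorem IsMaximalMinimizer.integral_inner_pFlux_eq_zero [Nontrivial (En n)]
    (h : IsMaximalMinimizer N Ω p R ε (C + D) v) (hε : 0 < ε) (hε1 : ε ≤ 1) (hp : 1 < p)
    (hC : LogLipschitzWith C v) (hD : 0 < D) (hψ : IsLipschitz ψ) (hψc : HasCompactSupport ψ)
    (hψ0 : ∀ x ∉ Ω ∩ {x | N.polar x < R}, ψ x = 0) :
    ∫ x, ⟪N.pFlux p (∇ v x), ∇ ψ x⟫ = 0 := by
  have hp0 : 0 < p := by linarith
  have hnonneg : ∀ φ, IsLipschitz φ → HasCompactSupport φ →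
      (∀ x ∉ Ω ∩ {x | N.polar x < R}, φ x = 0) → 0 ≤ ∫ x, ⟪N.pFlux p (∇ v x), ∇ φ x⟫ := by
    intro φ hφ hφc hφ0
    refine N.integral_inner_pFlux_nonneg hp (h.isCompetitor.isLipschitz hε)
      h.isCompetitor.hasCompactSupport_gradient hφ hφc ?_
    exact (h.isCompetitor.eventually_add_const_mul hε (h.outer_le hε hε1 hp0)
      (h.le_one hε hε1 hp0) hC hD hφ hφc hφ0).mono fun t ht => h.pEnergy_le _ ht
  have hneg := hnonneg (fun x => -1 * ψ x) (hψ.const_mul (-1)) hψc.mul_left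
    fun x hx => by rw [hψ0 x hx, mul_zero]
  have hgrad : ∫ x, ⟪N.pFlux p (∇ v x), ∇ (fun y => -1 * ψ y) x⟫ =
      -∫ x, ⟪N.pFlux p (∇ v x), ∇ ψ x⟫ := by
    rw [← integral_neg]
    refine integral_congr_ae (hψ.ae_differentiableAt.mono fun x hx => ?_)
    simp only [gradient_fun_const_mul (-1) hx, neg_one_smul, inner_neg_right]
  exact le_antisymm (by linarith [hgrad ▸ hneg]) (hnonneg ψ hψ hψc hψ0)

/-- `u` is a weak solution of `div(F(∇u)ᵖ⁻¹ F_ξ(∇u)) = F(∇u)ᵖ` in `U`, tested against Lipschitz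
functions of compact support vanishing off `U`. -/
def IsPSolution (N : MinkowskiNorm n) (p : ℝ) (U : Set (En n)) (u : En n → ℝ) : Prop :=
  ∀ ζ, IsLipschitz ζ → HasCompactSupport ζ → (∀ x ∉ U, ζ x = 0) →
    ∫ x, (⟪N.pFlux p (∇ u x), ∇ ζ x⟫ + ζ x * N.F (∇ u x) ^ p) = 0

lemma inner_pFlux_gradient_exp (hp : 1 < p) (hu : DifferentiableAt ℝ u x)
    (hζ : DifferentiableAt ℝ ζ x) :
    ⟪N.pFlux p (∇ (fun y => Real.exp (-u y / (p - 1))) x), ∇ (fun y => Real.exp (u y) * ζ y) x⟫ =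
      -(p - 1)⁻¹ ^ (p - 1) * (⟪N.pFlux p (∇ u x), ∇ ζ x⟫ + ζ x * N.F (∇ u x) ^ p) := by
  have hp1 : 0 < p - 1 := by linarith
  have hv : ∇ (fun y => Real.exp (-u y / (p - 1))) x =
      -(Real.exp (-u x / (p - 1)) * (p - 1)⁻¹) • ∇ u x := by
    rw [gradient_comp (φ := fun s => Real.exp (-s / (p - 1)))
      (((hasDerivAt_neg (u x)).div_const (p - 1)).exp) hu]
    congr 1
    ring
  have hψ : ∇ (fun y => Real.exp (u y) * ζ y) x =
      Real.exp (u x) • (∇ ζ x + ζ x • ∇ u x) := by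
    rw [gradient_fun_mul hu.exp hζ, gradient_comp (φ := Real.exp) (Real.hasDerivAt_exp _) hu]
    module
  have hpow : (Real.exp (-u x / (p - 1)) * (p - 1)⁻¹) ^ (p - 1) * Real.exp (u x) =
      (p - 1)⁻¹ ^ (p - 1) := by
    rw [Real.mul_rpow (Real.exp_pos _).le (by positivity), ← Real.exp_mul,
      div_mul_cancel₀ _ hp1.ne', mul_right_comm, ← Real.exp_add, neg_add_cancel, Real.exp_zero,
      one_mul]
  rw [hv, hψ, N.pFlux_neg_smul (by positivity), real_inner_smul_left, real_inner_smul_right,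
    inner_add_right, real_inner_smul_right, N.inner_pFlux_self (by linarith), ← mul_assoc, neg_mul,
    hpow]

lemma isPSolution_of_integral_inner_pFlux_exp (hp : 1 < p) (hu : IsLipschitz u) {B : ℝ}
    (hB : ∀ x, u x ≤ B)
    (hEL : ∀ ψ, IsLipschitz ψ → HasCompactSupport ψ → (∀ x ∉ U, ψ x = 0) →
      ∫ x, ⟪N.pFlux p (∇ (fun y => Real.exp (-u y / (p - 1))) x), ∇ ψ x⟫ = 0) :
    IsPSolution N p U u := by
  intro ζ hζ hζc hζ0
  have hexp : IsLipschitz fun x => Real.exp (u x) := by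
    obtain ⟨L, hL⟩ := hu
    have hlog : LogLipschitzWith L fun x => Real.exp (u x) := fun x y => by
      rw [← Real.exp_add]
      have := (abs_le.1 (Real.dist_eq (u x) (u y) ▸ hL.dist_le_mul x y)).2
      exact Real.exp_le_exp.2 (by linarith)
    exact ⟨_, hlog.lipschitzWith (B := (Real.exp B).toNNReal) (fun x => (Real.exp_pos _).le)
      fun x => (Real.exp_le_exp.2 (hB x)).trans (Real.le_coe_toNNReal _)⟩
  have hzero := hEL (fun x => Real.exp (u x) * ζ x) (hexp.mul_hasCompactSupport hζ hζc)
    hζc.mul_left fun x hx => by rw [hζ0 x hx, mul_zero]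
  have hcongr := integral_congr_ae (μ := volume)
    ((hu.ae_differentiableAt.and hζ.ae_differentiableAt).mono fun x hx =>
      inner_pFlux_gradient_exp (N := N) hp hx.1 hx.2)
  rw [hcongr, integral_const_mul] at hzero
  have hc : 0 < (p - 1)⁻¹ ^ (p - 1) := Real.rpow_pos_of_pos (inv_pos.2 (by linarith)) _
  exact (mul_eq_zero.1 hzero).resolve_left (neg_ne_zero.2 hc.ne')

lemma LogLipschitzWith.lipschitzWith_neg_mul_log {X : Type*} [PseudoMetricSpace X] {v : X → ℝ}
    (hv : LogLipschitzWith C v) (hpos : ∀ x, 0 < v x) (c : ℝ≥0) :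
    LipschitzWith (c * C) fun x => -(c * Real.log (v x)) := by
  have hlog : ∀ x y, Real.log (v x) ≤ C * dist x y + Real.log (v y) := fun x y => by
    rw [← Real.log_exp (C * dist x y), ← Real.log_mul (Real.exp_ne_zero _) (hpos y).ne']
    exact Real.log_le_log (hpos x) (hv x y)
  refine LipschitzWith.of_le_add_mul _ fun x y => ?_
  have := mul_le_mul_of_nonneg_left (hlog y x) c.coe_nonneg
  rw [dist_comm, NNReal.coe_mul]
  linarith

end EulerLagrange

section ApproximateSolutions

variable {n : ℕ} {N : MinkowskiNorm n} {Ω : Set (En n)} {p R R₀ r : ℝ} {L : ℝ≥0} {v : En n → ℝ}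

lemma half_log_le_neg_mul_log {a m : ℝ} (hp : 1 < p) (ha : a * (p - 1) = 1 / 2) (hm : 0 < m)
    {t : ℝ} (ht : 0 < t) (hle : t ≤ m ^ (-a)) :
    1 / 2 * Real.log m ≤ -((p - 1) * Real.log t) := by
  have hlog := Real.log_le_log ht hle
  rw [Real.log_rpow hm] at hlog
  have := mul_le_mul_of_nonneg_left hlog (sub_nonneg.2 hp.le)
  linear_combination this - Real.log m * ha

/-- The properties shared by the approximate solutions on `Ω ∩ {x | N.polar x < R}`; the logarithm
is the barrier forcing growth at infinity. -/
structure IsApproxSolution (N : MinkowskiNorm n) (Ω : Set (En n)) (R₀ : ℝ) (K : ℝ≥0) (p R : ℝ)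
    (u : En n → ℝ) : Prop where
  lipschitzWith : LipschitzWith K u
  eq_zero : ∀ x ∉ Ω, u x = 0
  half_log_le : ∀ x, N.polar x ≤ R → 1 / 2 * Real.log (max (N.polar x) R₀ / R₀) ≤ u x
  isPSolution : IsPSolution N p (Ω ∩ {x | N.polar x < R}) u

theorem IsMaximalMinimizer.isApproxSolution [Nontrivial (En n)] {K C : ℝ≥0} {a : ℝ}
    (hΩ : HasTouchingWulff N Ω R₀ r) (hL : LipschitzWith L N.polar) (hp : 1 < p) (hR : R₀ ≤ R)
    (ha : a * (p - 1) = 1 / 2) (hM : a * L / R₀ ≤ (C + 1 : ℝ≥0))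
    (han : (a + 1) * (p - 1) + 1 < n) (hK : (p - 1).toNNReal * C = K)
    (h : IsMaximalMinimizer N Ω p R ((R / R₀) ^ (-a)) (C + 1) v) (hC : LogLipschitzWith C v) :
    IsApproxSolution N Ω R₀ K p R fun x => -((p - 1) * Real.log (v x)) := by
  have hp1 : 0 < p - 1 := by linarith
  have hp0 : 0 < p := by linarith
  have ha0 : 0 < a := pos_of_mul_pos_left (ha ▸ one_half_pos) hp1.le
  have hR₀ := hΩ.outer_pos
  have hε : 0 < (R / R₀) ^ (-a) := Real.rpow_pos_of_pos (div_pos (hR₀.trans_le hR) hR₀) _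
  have hε1 := rpow_neg_le_one hR₀ hR ha0.le
  have hlow := h.outer_le hε hε1 hp0
  have hpos : ∀ x, 0 < v x := fun x => hε.trans_le (hlow x)
  have hlip : LipschitzWith K fun x => -((p - 1) * Real.log (v x)) := by
    have := hC.lipschitzWith_neg_mul_log hpos (p - 1).toNNReal
    rwa [hK, Real.coe_toNNReal _ hp1.le] at this
  refine ⟨hlip, fun x hx => ?_, fun x hx => ?_, ?_⟩
  · rw [h.isCompetitor.eq_one x hx, Real.log_one, mul_zero, neg_zero]
  · have hbar := h.le_max_barrier hL (fun y hy => by linarith [hΩ.polar_lt y hy]) hR₀ hR ha0 hM hp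
      han x
    rw [max_eq_left (MinkowskiNorm.rpow_le_barrier hR₀ ha0.le hR (by rwa [sub_zero])),
      MinkowskiNorm.barrier, sub_zero] at hbar
    exact half_log_le_neg_mul_log hp ha (div_pos (hR₀.trans_le (le_max_right _ _)) hR₀) (hpos x)
      hbar
  · refine isPSolution_of_integral_inner_pFlux_exp hp ⟨K, hlip⟩
      (B := -((p - 1) * Real.log ((R / R₀) ^ (-a)))) (fun x => ?_) fun ψ hψ hψc hψ0 => ?_
    · gcongr
      exact hlow x
    · have hexp : (fun y => Real.exp (- -((p - 1) * Real.log (v y)) / (p - 1))) = v := by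
        funext y
        rw [neg_neg, mul_div_cancel_left₀ _ hp1.ne', Real.exp_log (hpos y)]
      rw [hexp]
      exact h.integral_inner_pFlux_eq_zero hε hε1 hp hC one_pos hψ hψc hψ0

theorem HasTouchingWulff.exists_isApproxSolution (hn : 2 ≤ n) (hΩ : HasTouchingWulff N Ω R₀ r) :
    ∃ K, ∀ p R, 1 < p → p < 3 / 2 → R₀ ≤ R → ∃ u, IsApproxSolution N Ω R₀ K p R u := by
  have : Nontrivial (En n) := Module.nontrivial_of_finrank_pos (R := ℝ) (by
    rw [finrank_euclideanSpace_fin]; omega)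
  have hn' : (2 : ℝ) ≤ n := by exact_mod_cast hn
  obtain ⟨L, hL⟩ := isLipschitz_seminorm N.polar
  have hr := hΩ.radius_pos
  have hR₀ := hΩ.outer_pos
  refine ⟨(n * L / r).toNNReal, fun p R hp hp2 hR => ?_⟩
  have hp1 : 0 < p - 1 := by linarith
  have hc : (p - 1).toNNReal ≠ 0 := (Real.toNNReal_pos.2 hp1).ne'
  obtain ⟨a, ha⟩ : ∃ a, a * (p - 1) = 1 / 2 := ⟨1 / 2 / (p - 1), div_mul_cancel₀ _ hp1.ne'⟩
  obtain ⟨b, hb⟩ : ∃ b, b * (p - 1) = n := ⟨n / (p - 1), div_mul_cancel₀ _ hp1.ne'⟩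
  have ha0 : 0 < a := pos_of_mul_pos_left (ha ▸ one_half_pos) hp1.le
  have hab : a ≤ b := le_of_mul_le_mul_right (by linarith) hp1
  have han : (a + 1) * (p - 1) + 1 < n := by linarith
  obtain ⟨C, hC⟩ : ∃ C, C = (n * L / r).toNNReal / (p - 1).toNNReal := ⟨_, rfl⟩
  have hbC : b * L / r = C := by
    rw [hC, NNReal.coe_div, Real.coe_toNNReal _ hp1.le, Real.coe_toNNReal _ (by positivity), ← hb]
    field_simp
  have hM : a * L / R₀ ≤ (C + 1 : ℝ≥0) := by
    have hb0 : 0 < b := ha0.trans_le hab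
    have hle : a * L / R₀ ≤ b * L / r :=
      div_le_div₀ (by positivity) (by gcongr) hr (by linarith [hΩ.radius_le])
    rw [NNReal.coe_add, NNReal.coe_one]
    linarith
  obtain ⟨v, hv⟩ := exists_isMaximalMinimizer hp.le
    (Real.rpow_pos_of_pos (div_pos (hR₀.trans_le hR) hR₀) _) (rpow_neg_le_one hR₀ hR ha0.le)
    ⟨_, isCompetitor_max_barrier hL (fun y hy => by linarith [hΩ.polar_lt y hy]) hR₀ hR ha0.le hM⟩
  exact ⟨_, hv.isApproxSolution hΩ hL hp hR ha hM han (by rw [hC, mul_div_cancel₀ _ hc])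
    (hΩ.logLipschitzWith hL hR ha0 hab hbC.le (le_add_of_nonneg_right zero_le_one) hp han
      (by linarith) hv)⟩

end ApproximateSolutions

section WeightedEnergyInequality

variable {n : ℕ} (N : MinkowskiNorm n) {p : ℝ} {L : ℝ≥0} {U V : Set (En n)}
  {u φ η : En n → ℝ} {x : En n}

namespace MinkowskiNorm

/-- The density `η F(∇u)ᵖ + ⟨F(∇u)ᵖ⁻¹ F_ξ(∇u), ∇η⟩` against which `φ - u` is integrated when the
equation of `u` is tested with `(φ - u) η`. -/
def testDensity (p : ℝ) (u η : En n → ℝ) (x : En n) : ℝ :=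
  η x * N.F (∇ u x) ^ p + ⟪N.pFlux p (∇ u x), ∇ η x⟫

lemma testDensity_eq_zero (p : ℝ) (u : En n → ℝ) (hx : x ∉ tsupport η) :
    N.testDensity p u η x = 0 := by
  rw [testDensity, image_eq_zero_of_notMem_tsupport hx, gradient_eq_zero_of_notMem_tsupport hx,
    zero_mul, inner_zero_right, add_zero]

lemma hasCompactSupport_testDensity (p : ℝ) (u : En n → ℝ) (hηc : HasCompactSupport η) :
    HasCompactSupport (N.testDensity p u η) :=
  .intro hηc fun _ => N.testDensity_eq_zero p u

lemma measurable_testDensity (p : ℝ) (u : En n → ℝ) (hη : IsLipschitz η) :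
    Measurable (N.testDensity p u η) :=
  (hη.continuous.measurable.mul ((N.measurable_comp_gradient u).pow_const p)).add
    (((N.measurable_pFlux p).comp (measurable_gradient u)).inner (measurable_gradient η))

lemma exists_abs_testDensity_le (P : ℝ) (L : ℝ≥0) (hη : IsLipschitz η)
    (hηc : HasCompactSupport η) :
    ∃ A, ∀ p, 1 ≤ p → p ≤ P → ∀ u, LipschitzWith L u → ∀ x, |N.testDensity p u η x| ≤ A := by
  obtain ⟨B, hB⟩ := hη.exists_abs_le hηc
  obtain ⟨D, -, hD⟩ := hη.exists_norm_gradient_le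
  obtain ⟨A₁, hA₁⟩ := N.exists_rpow_le L P
  obtain ⟨A₂, hA₂⟩ := N.exists_norm_pFlux_le L P
  refine ⟨B * A₁ + A₂ * D, fun p hp hpP u hu x => (abs_add_le _ _).trans (add_le_add ?_ ?_)⟩
  · rw [abs_mul, abs_of_nonneg (N.rpow_nonneg _ _)]
    exact mul_le_mul (hB x) (hA₁ p (by linarith) hpP _ (norm_gradient_le_of_lipschitzWith hu x))
      (N.rpow_nonneg _ _) ((abs_nonneg _).trans (hB x))
  · have hflux := hA₂ p hp hpP _ (norm_gradient_le_of_lipschitzWith hu x)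
    exact (abs_real_inner_le_norm _ _).trans
      (mul_le_mul hflux (hD x) (norm_nonneg _) ((norm_nonneg _).trans hflux))

lemma integrable_mul_testDensity (hp : 1 ≤ p) (hφ : IsLipschitz φ) (hu : IsLipschitz u)
    (hη : IsLipschitz η) (hηc : HasCompactSupport η) :
    Integrable fun x => φ x * N.testDensity p u η x := by
  obtain ⟨L, hL⟩ := hu
  obtain ⟨A, hA⟩ := N.exists_abs_testDensity_le p L hη hηc
  have hc := N.hasCompactSupport_testDensity p u hηc
  exact integrable_continuous_mul_of_hasCompactSupport hφ.continuous
    (integrable_of_ae_norm_le_of_hasCompactSupport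
      (N.measurable_testDensity p u hη).aestronglyMeasurable
      (.of_forall fun x => hA p hp le_rfl u hL x) hc) hc

end MinkowskiNorm

variable {N}

lemma IsPSolution.mono (hu : IsPSolution N p V u) (hUV : U ⊆ V) : IsPSolution N p U u :=
  fun ζ hζ hζc hζ0 => hu ζ hζ hζc fun x hx => hζ0 x fun hxU => hx (hUV hxU)

theorem IsPSolution.integral_mul_rpow_gradient_le (hsol : IsPSolution N p (tsupport η) u)
    (hp : 1 ≤ p) (hu : IsLipschitz u) (hφ : IsLipschitz φ) (hη : IsLipschitz η)
    (hηc : HasCompactSupport η) (hη0 : ∀ x, 0 ≤ η x) :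
    ∫ x, η x * N.F (∇ u x) ^ p ≤ (∫ x, η x * N.F (∇ φ x) ^ p) +
      p * ∫ x, (φ x - u x) * N.testDensity p u η x := by
  have hp0 : 0 ≤ p := by linarith
  obtain ⟨r, -, hr⟩ := hu.exists_norm_gradient_le
  have hd := hφ.sub hu
  have hζ := hd.mul_hasCompactSupport hη hηc
  have hζc : HasCompactSupport fun x => (φ x - u x) * η x := hηc.mul_left
  have heq := hsol _ hζ hζc fun x hx => by rw [image_eq_zero_of_notMem_tsupport hx, mul_zero]
  have hζint : Integrable fun x => ⟪N.pFlux p (∇ u x), ∇ (fun y => (φ y - u y) * η y) x⟫ +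
      (φ x - u x) * η x * N.F (∇ u x) ^ p :=
    (N.integrable_inner_pFlux hp (measurable_gradient u) hr (hζ.integrable_gradient hζc)).add
      (N.integrable_mul_rpow_gradient hp0 hu (hζ.integrable hζc))
  have huint := N.integrable_mul_rpow_gradient hp0 hu (hη.integrable hηc)
  have hφint := N.integrable_mul_rpow_gradient hp0 hφ (hη.integrable hηc)
  have hdint := N.integrable_mul_testDensity hp hd hu hη hηc
  have hle := integral_mono_ae (huint.add (hζint.const_mul p))
      (hφint.add (hdint.const_mul p)) <| by
    filter_upwards [hu.ae_differentiableAt, hφ.ae_differentiableAt, hη.ae_differentiableAt]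
      with x hux hφx hηx
    have hconv := mul_le_mul_of_nonneg_left
      (N.rpow_add_inner_pFlux_le hp (∇ u x) (∇ φ x)) (hη0 x)
    simp only [Pi.add_apply, gradient_fun_mul (hφx.fun_sub hux) hηx, gradient_fun_sub hφx hux,
      inner_add_right, real_inner_smul_right, MinkowskiNorm.testDensity]
    linarith
  rwa [integral_add' huint (hζint.const_mul p), integral_const_mul,
    heq, mul_zero, add_zero, integral_add' hφint (hdint.const_mul p),
    integral_const_mul] at hle

end WeightedEnergyInequality

section Limit

lemma tendsto_integral_sub_mul {X : Type*} [MetricSpace X] [MeasurableSpace X]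
    [BorelSpace X] {μ : Measure X} [IsFiniteMeasureOnCompacts μ] {L : ℝ≥0} {w h : ℕ → X → ℝ}
    {u : X → ℝ} {K : Set X} {A : ℝ} (hw : ∀ k, LipschitzWith L (w k))
    (hu : ∀ x, Tendsto (fun k => w k x) atTop (𝓝 (u x))) (hK : IsCompact K)
    (hm : ∀ k, Measurable (h k)) (hA : ∀ k x, |h k x| ≤ A) (h0 : ∀ k, ∀ x ∉ K, h k x = 0) :
    Tendsto (fun k => ∫ x, (u x - w k x) * h k x ∂μ) atTop (𝓝 0) := by
  rcases K.eq_empty_or_nonempty with rfl | ⟨x₀, -⟩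
  · simpa only [h0 _ _ (notMem_empty _), mul_zero, integral_zero] using tendsto_const_nhds
  have huL : LipschitzWith L u := lipschitzWith_of_tendsto hw hu
  obtain ⟨B, hB⟩ := ((hu x₀).const_sub (u x₀)).norm.bddAbove_range
  obtain ⟨D, hD⟩ := hK.exists_bound_of_continuousOn (f := fun x => dist x x₀) (by fun_prop)
  have hbound : ∀ k, ∀ x ∈ K, |u x - w k x| ≤ L * D + B + L * D := fun k x hx => by
    have hdist : L * dist x x₀ ≤ L * D := by gcongr; exact (le_abs_self _).trans (hD x hx)
    have h1 := (huL.dist_le_mul x x₀).trans hdist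
    have h2 : dist (u x₀) (w k x₀) ≤ B := hB ⟨k, rfl⟩
    have h3 := ((hw k).dist_le_mul x x₀).trans hdist
    rw [← Real.dist_eq]
    linarith [dist_triangle4_right (u x) (w k x) (u x₀) (w k x₀)]
  have hlim : ∀ x, Tendsto (fun k => (u x - w k x) * h k x) atTop (𝓝 0) := fun x => by
    refine squeeze_zero_norm (a := fun k => |u x - w k x| * A) (fun k => ?_) ?_
    · rw [norm_mul]
      exact mul_le_mul_of_nonneg_left (hA k x) (norm_nonneg _)
    · simpa using ((hu x).const_sub (u x)).abs.mul_const A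
  have hmeas : ∀ k, AEStronglyMeasurable (fun x => (u x - w k x) * h k x) μ := fun k =>
    ((huL.continuous.sub (hw k).continuous).measurable.mul (hm k)).aestronglyMeasurable
  have hdom : ∀ k x, ‖(u x - w k x) * h k x‖ ≤
      K.indicator (fun _ => (L * D + B + L * D) * A) x := fun k x => by
    by_cases hx : x ∈ K
    · rw [indicator_of_mem hx, norm_mul]
      have hd := hbound k x hx
      exact mul_le_mul hd (hA k x) (abs_nonneg _) ((abs_nonneg _).trans hd)
    · rw [indicator_of_notMem hx, h0 k x hx, mul_zero, norm_zero]
  simpa using tendsto_integral_of_dominated_convergence _ hmeas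
    ((integrableOn_const hK.measure_lt_top.ne).integrable_indicator hK.measurableSet)
    (fun k => .of_forall (hdom k)) (.of_forall hlim)

variable {n : ℕ} {N : MinkowskiNorm n} {Ω : Set (En n)} {L : ℝ≥0} {p : ℕ → ℝ}
  {w : ℕ → En n → ℝ} {u g η : En n → ℝ}

/-- `w k → u` pointwise, with `w k` uniformly Lipschitz and solving the equation of exponent
`p k ↓ 1` on any given compact subset of `Ω` once `k` is large. -/
structure IsPApproximation (N : MinkowskiNorm n) (Ω : Set (En n)) (L : ℝ≥0) (p : ℕ → ℝ)
    (w : ℕ → En n → ℝ) (u : En n → ℝ) : Prop where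
  one_le : ∀ k, 1 ≤ p k
  le_two : ∀ k, p k ≤ 2
  tendsto_exponent : Tendsto p atTop (𝓝 1)
  lipschitzWith : ∀ k, LipschitzWith L (w k)
  tendsto : ∀ x, Tendsto (fun k => w k x) atTop (𝓝 (u x))
  eventually_isPSolution : ∀ K ⊆ Ω, IsCompact K → ∀ᶠ k in atTop, IsPSolution N (p k) K (w k)

lemma MinkowskiNorm.tendsto_integral_mul_rpow_of_tendsto_exponent (N : MinkowskiNorm n)
    (hp1 : ∀ k, 1 ≤ p k) (hp2 : ∀ k, p k ≤ 2) (hp : Tendsto p atTop (𝓝 1)) (hg : IsLipschitz g)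
    (hη : Integrable η) :
    Tendsto (fun k => ∫ x, η x * N.F (∇ g x) ^ p k) atTop (𝓝 (∫ x, η x * N.F (∇ g x))) := by
  obtain ⟨r, -, hr⟩ := hg.exists_norm_gradient_le
  obtain ⟨A, hA⟩ := N.exists_rpow_le r 2
  refine tendsto_integral_of_dominated_convergence (fun x => ‖η x‖ * A)
    (fun k => hη.aestronglyMeasurable.mul
      ((N.measurable_comp_gradient g).pow_const _).aestronglyMeasurable)
    (hη.norm.mul_const A) (fun k => .of_forall fun x => ?_) (.of_forall fun x => ?_)
  · rw [norm_mul, Real.norm_of_nonneg (N.rpow_nonneg _ _)]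
    gcongr
    exact hA _ (by linarith [hp1 k]) (hp2 k) _ (hr x)
  · have := (Real.continuousAt_const_rpow' (a := N.F (∇ g x)) one_ne_zero).tendsto.comp hp
    rw [Real.rpow_one] at this
    exact this.const_mul (η x)

lemma MinkowskiNorm.mul_integral_sub_le_integral_mul_rpow_gradient (N : MinkowskiNorm n) {q : ℝ}
    (hq : 1 ≤ q) (hg : IsLipschitz g) (hη : Integrable η) (hη0 : ∀ x, 0 ≤ η x) :
    q * (∫ x, η x * N.F (∇ g x)) - (q - 1) * ∫ x, η x ≤ ∫ x, η x * N.F (∇ g x) ^ q := by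
  have hF : Integrable fun x => η x * N.F (∇ g x) := by
    simpa only [Real.rpow_one] using N.integrable_mul_rpow_gradient zero_le_one hg hη
  rw [← integral_const_mul, ← integral_const_mul,
    ← integral_sub (hF.const_mul q) (hη.const_mul (q - 1))]
  refine integral_mono ((hF.const_mul q).sub (hη.const_mul (q - 1)))
    (N.integrable_mul_rpow_gradient (by linarith) hg hη) fun x => ?_
  have hbernoulli := mul_le_mul_of_nonneg_left
    (rpow_add_mul_sub_le_rpow zero_le_one (N.nonneg (∇ g x)) hq) (hη0 x)
  simp only [Real.one_rpow, mul_one] at hbernoulli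
  dsimp only
  linarith

namespace IsPApproximation

lemma isLipschitz (h : IsPApproximation N Ω L p w u) : IsLipschitz u :=
  ⟨L, lipschitzWith_of_tendsto h.lipschitzWith h.tendsto⟩

lemma tendsto_integral_sub_mul_testDensity (h : IsPApproximation N Ω L p w u)
    (hη : IsLipschitz η) (hηc : HasCompactSupport η) :
    Tendsto (fun k => ∫ x, (u x - w k x) * N.testDensity (p k) (w k) η x) atTop (𝓝 0) := by
  obtain ⟨A, hA⟩ := N.exists_abs_testDensity_le 2 L hη hηc
  exact tendsto_integral_sub_mul h.lipschitzWith h.tendsto hηc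
    (fun k => N.measurable_testDensity (p k) (w k) hη)
    (fun k => hA (p k) (h.one_le k) (h.le_two k) (w k) (h.lipschitzWith k))
    fun k x => N.testDensity_eq_zero (p k) (w k)

lemma eventually_integral_mul_rpow_gradient_le (h : IsPApproximation N Ω L p w u)
    (hη : IsLipschitz η) (hηc : HasCompactSupport η) (hηΩ : tsupport η ⊆ Ω) (hη0 : ∀ x, 0 ≤ η x)
    (hg : IsLipschitz g) (hgη : ∀ᵐ x, g x = 0 ∨ ∇ η x = 0) :
    ∀ᶠ k in atTop, ∫ x, η x * N.F (∇ (w k) x) ^ p k ≤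
      (∫ x, η x * N.F (∇ (fun y => u y + g y) x) ^ p k) +
        p k * ((∫ x, g x * η x * N.F (∇ (w k) x) ^ p k) +
          ∫ x, (u x - w k x) * N.testDensity (p k) (w k) η x) := by
  filter_upwards [h.eventually_isPSolution _ hηΩ hηc] with k hk
  have hwk : IsLipschitz (w k) := ⟨L, h.lipschitzWith k⟩
  have hle := hk.integral_mul_rpow_gradient_le (h.one_le k) hwk (h.isLipschitz.add hg) hη hηc hη0
  have hp0 : 0 ≤ p k := zero_le_one.trans (h.one_le k)
  have hgint := N.integrable_mul_rpow_gradient hp0 hwk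
    ((hg.mul_hasCompactSupport hη hηc).integrable (hηc.mul_left (f := g)))
  have hdint := N.integrable_mul_testDensity (h.one_le k) (h.isLipschitz.sub hwk) hwk hη hηc
  have hsplit : ∫ x, (u x + g x - w k x) * N.testDensity (p k) (w k) η x =
      (∫ x, g x * η x * N.F (∇ (w k) x) ^ p k) +
        ∫ x, (u x - w k x) * N.testDensity (p k) (w k) η x := by
    rw [← integral_add hgint hdint]
    refine integral_congr_ae ?_
    filter_upwards [hgη] with x hx
    rcases hx with hx | hx
    · simp [hx]
    · simp only [MinkowskiNorm.testDensity, hx, inner_zero_right]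
      ring
  rwa [hsplit] at hle

-- Upper bound by comparing `w k` with `u`, lower bound by weak lower semicontinuity.
lemma tendsto_integral_mul_rpow_gradient_of_nonneg (h : IsPApproximation N Ω L p w u)
    (hη : IsLipschitz η) (hηc : HasCompactSupport η) (hηΩ : tsupport η ⊆ Ω)
    (hη0 : ∀ x, 0 ≤ η x) :
    Tendsto (fun k => ∫ x, η x * N.F (∇ (w k) x) ^ p k) atTop (𝓝 (∫ x, η x * N.F (∇ u x))) := by
  have hηint : Integrable η := hη.integrable hηc
  have hupper := h.eventually_integral_mul_rpow_gradient_le hη hηc hηΩ hη0 (.const 0)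
    (.of_forall fun _ => .inl rfl)
  simp only [add_zero, zero_mul, integral_zero, zero_add] at hupper
  have hupper_lim := (N.tendsto_integral_mul_rpow_of_tendsto_exponent h.one_le h.le_two
    h.tendsto_exponent h.isLipschitz hηint).add
    (h.tendsto_exponent.mul (h.tendsto_integral_sub_mul_testDensity hη hηc))
  obtain ⟨e, he, hle⟩ := N.exists_tendsto_zero_integral_mul_rpow_gradient_add_le le_rfl
    h.lipschitzWith h.tendsto hηint hη0
  simp only [Real.rpow_one] at hle
  have hlower : ∀ k, p k * ((∫ x, η x * N.F (∇ u x)) + e k) - (p k - 1) * ∫ x, η x ≤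
      ∫ x, η x * N.F (∇ (w k) x) ^ p k := fun k => by
    refine le_trans ?_ (N.mul_integral_sub_le_integral_mul_rpow_gradient (h.one_le k)
      ⟨L, h.lipschitzWith k⟩ hηint hη0)
    have := h.one_le k
    gcongr
    exact hle k
  have hlower_lim : Tendsto (fun k => p k * ((∫ x, η x * N.F (∇ u x)) + e k) -
      (p k - 1) * ∫ x, η x) atTop (𝓝 (∫ x, η x * N.F (∇ u x))) := by
    simpa using (h.tendsto_exponent.mul (he.const_add (∫ x, η x * N.F (∇ u x)))).sub
      ((h.tendsto_exponent.sub_const 1).mul_const (∫ x, η x))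
  rw [one_mul, add_zero] at hupper_lim
  exact tendsto_of_tendsto_of_tendsto_of_le_of_le' hlower_lim hupper_lim (.of_forall hlower) hupper

lemma tendsto_integral_mul_rpow_gradient (h : IsPApproximation N Ω L p w u)
    (hg : IsLipschitz g) (hgc : HasCompactSupport g) (hgΩ : tsupport g ⊆ Ω) :
    Tendsto (fun k => ∫ x, g x * N.F (∇ (w k) x) ^ p k) atTop (𝓝 (∫ x, g x * N.F (∇ u x))) := by
  have hpart : ∀ c : ℝ, Tendsto (fun k => ∫ x, max (c * g x) 0 * N.F (∇ (w k) x) ^ p k) atTop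
      (𝓝 (∫ x, max (c * g x) 0 * N.F (∇ u x))) := fun c => by
    have hsupp : tsupport (fun x => max (c * g x) 0) ⊆ tsupport g :=
      closure_mono fun x hx hgx => hx (by simp [hgx])
    exact h.tendsto_integral_mul_rpow_gradient_of_nonneg ((hg.const_mul c).max (.const 0))
      (hgc.mono' (subset_closure.trans hsupp)) (hsupp.trans hgΩ) fun x => le_max_right _ _
  have hsplit : ∀ (q : ℝ) f, 0 ≤ q → IsLipschitz f → ∫ x, g x * N.F (∇ f x) ^ q =
      (∫ x, max (1 * g x) 0 * N.F (∇ f x) ^ q) - ∫ x, max (-1 * g x) 0 * N.F (∇ f x) ^ q := by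
    intro q f hq hf
    have hint : ∀ c : ℝ, Integrable fun x => max (c * g x) 0 := fun c =>
      ((hg.integrable hgc).const_mul c).pos_part
    rw [← integral_sub (N.integrable_mul_rpow_gradient hq hf (hint 1))
      (N.integrable_mul_rpow_gradient hq hf (hint (-1)))]
    refine integral_congr_ae (.of_forall fun x => ?_)
    dsimp only
    rw [← sub_mul, one_mul, neg_one_mul, max_zero_sub_max_neg_zero_eq_self]
  have hlimit := hsplit 1 u zero_le_one h.isLipschitz
  simp only [Real.rpow_one] at hlimit
  rw [hlimit]
  exact ((hpart 1).sub (hpart (-1))).congr fun k =>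
    (hsplit (p k) (w k) (zero_le_one.trans (h.one_le k)) ⟨L, h.lipschitzWith k⟩).symm

lemma integral_mul_gradient_le (h : IsPApproximation N Ω L p w u) (hη : IsLipschitz η)
    (hηc : HasCompactSupport η) (hηΩ : tsupport η ⊆ Ω) (hη0 : ∀ x, 0 ≤ η x) (hg : IsLipschitz g)
    (hgη : ∀ᵐ x, g x = 0 ∨ ∇ η x = 0) :
    ∫ x, η x * N.F (∇ u x) ≤ (∫ x, η x * N.F (∇ (fun y => u y + g y) x)) +
      ∫ x, g x * η x * N.F (∇ u x) := by
  have hsupp : tsupport (fun x => g x * η x) ⊆ tsupport η := tsupport_mul_subset_right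
  have hlim := (N.tendsto_integral_mul_rpow_of_tendsto_exponent h.one_le h.le_two h.tendsto_exponent
    (h.isLipschitz.add hg) (hη.integrable hηc)).add (h.tendsto_exponent.mul
      ((h.tendsto_integral_mul_rpow_gradient (hg.mul_hasCompactSupport hη hηc)
        (hηc.mul_left (f := g)) (hsupp.trans hηΩ)).add
        (h.tendsto_integral_sub_mul_testDensity hη hηc)))
  rw [add_zero, one_mul] at hlim
  exact le_of_tendsto_of_tendsto (h.tendsto_integral_mul_rpow_gradient_of_nonneg hη hηc hηΩ hη0)
    hlim (h.eventually_integral_mul_rpow_gradient_le hη hηc hηΩ hη0 hg hgη)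

theorem isWeakSolIAMCF (h : IsPApproximation N Ω L p w u) (hΩ : IsOpen Ω) :
    IsWeakSolIAMCF N Ω u := by
  refine (isWeakSolIAMCF_iff hΩ).2 ⟨h.isLipschitz.locallyLipschitzOn Ω,
    fun K hK hKΩ g hg hg0 => ?_⟩
  obtain ⟨η, hη, hηc, hηΩ, hη0, -, hη1⟩ := exists_isLipschitz_cutoff hK hΩ hKΩ
  have hgη : ∀ᵐ x, g x = 0 ∨ ∇ η x = 0 := by
    filter_upwards [hη.ae_gradient_eq (.const 1)] with x hx
    by_cases hxK : x ∈ K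
    · exact .inr ((hx (hη1 x hxK)).trans (gradient_fun_const x 1))
    · exact .inl (hg0 x hxK)
  have hle := h.integral_mul_gradient_le hη hηc hηΩ hη0 hg hgη
  have hint {f} (hf : IsLipschitz f) {θ : En n → ℝ} (hθ : Integrable θ) :
      Integrable fun x => θ x * N.F (∇ f x) := by
    simpa only [Real.rpow_one] using N.integrable_mul_rpow_gradient zero_le_one hf hθ
  have hsum := hint (h.isLipschitz.add hg) (hη.integrable hηc)
  have hu := hint h.isLipschitz (hη.integrable hηc)
  have hgu := hint h.isLipschitz
    ((hg.mul_hasCompactSupport hη hηc).integrable (hηc.mul_left (f := g)))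
  have hincr : ∫ x, N.energyIncrement u g x = (∫ x, η x * N.F (∇ (fun y => u y + g y) x)) -
      (∫ x, η x * N.F (∇ u x)) + ∫ x, g x * η x * N.F (∇ u x) := by
    have hdiff : Integrable fun x => η x * N.F (∇ (fun y => u y + g y) x) - η x * N.F (∇ u x) :=
      hsum.sub hu
    rw [← integral_sub hsum hu, ← integral_add hdiff hgu]
    refine integral_congr_ae ?_
    filter_upwards [h.isLipschitz.ae_differentiableAt, hg.ae_differentiableAt,
      hg.ae_gradient_eq_zero] with x hux hgx hgx0
    rw [gradient_fun_add hux hgx, MinkowskiNorm.energyIncrement]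
    by_cases hxK : x ∈ K
    · rw [hη1 x hxK]
      ring
    · rw [hgx0 (hg0 x hxK), hg0 x hxK, add_zero]
      ring
  linarith

end IsPApproximation

end Limit

section Existence

variable {n : ℕ} {N : MinkowskiNorm n} {Ω : Set (En n)} {R₀ r : ℝ}

lemma MinkowskiNorm.tendsto_polar_cocompact (N : MinkowskiNorm n) :
    Tendsto N.polar (cocompact (En n)) atTop := by
  obtain ⟨c, hc, hle⟩ := N.exists_mul_norm_le_polar
  exact tendsto_atTop_mono hle (tendsto_norm_cocompact_atTop.const_mul_atTop hc)

lemma tendsto_half_log_max_polar (N : MinkowskiNorm n) (hR₀ : 0 < R₀) :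
    Tendsto (fun x => 1 / 2 * Real.log (max (N.polar x) R₀ / R₀)) (cocompact (En n)) atTop :=
  (Real.tendsto_log_atTop.comp ((tendsto_atTop_mono (fun _ => le_max_left _ _)
    N.tendsto_polar_cocompact).atTop_div_const hR₀)).const_mul_atTop one_half_pos

lemma exists_hasTouchingWulff (N : MinkowskiNorm n) (hΩ : IsOpen Ω)
    (hsmooth : HasSmoothBoundary Ω) (hbd : Bornology.IsBounded Ωᶜ) :
    ∃ R₀ r, HasTouchingWulff N Ω R₀ r := by
  obtain ⟨B, hB⟩ := (isCompact_of_isClosed_isBounded hΩ.isClosed_compl hbd).bddAbove_image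
    (isLipschitz_seminorm N.polar).continuous.continuousOn
  have hlt : ∀ x ∉ Ω, N.polar x < 2 * (|B| + 1) / 2 := fun x hx => by
    linarith [hB (mem_image_of_mem _ hx), le_abs_self B]
  obtain ⟨r, hr, hrR, htouch⟩ := exists_touching_wulff N hΩ hsmooth hbd
    (show 0 < 2 * (|B| + 1) / 2 by positivity)
  exact ⟨_, r, hΩ, hr, hrR, hlt, htouch⟩

namespace IsApproxSolution

variable {K L : ℝ≥0} {p R : ℕ → ℝ} {z : ℕ → En n → ℝ} {u : En n → ℝ}

lemma isPApproximation (hz : ∀ k, IsApproxSolution N Ω R₀ L (p k) (R k) (z k))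
    (hp1 : ∀ k, 1 ≤ p k) (hp2 : ∀ k, p k ≤ 2) (hp : Tendsto p atTop (𝓝 1))
    (hR : Tendsto R atTop atTop) (hu : ∀ x, Tendsto (fun k => z k x) atTop (𝓝 (u x))) :
    IsPApproximation N Ω L p z u := by
  refine ⟨hp1, hp2, hp, fun k => (hz k).lipschitzWith, hu, fun K hKΩ hK => ?_⟩
  obtain ⟨B, hB⟩ := hK.bddAbove_image (isLipschitz_seminorm N.polar).continuous.continuousOn
  filter_upwards [hR.eventually_gt_atTop B] with k hk
  exact (hz k).isPSolution.mono fun x hx => ⟨hKΩ hx, (hB (mem_image_of_mem _ hx)).trans_lt hk⟩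

lemma limit_eq_zero (hz : ∀ k, IsApproxSolution N Ω R₀ L (p k) (R k) (z k))
    (hu : ∀ x, Tendsto (fun k => z k x) atTop (𝓝 (u x))) {x : En n} (hx : x ∉ Ω) : u x = 0 :=
  tendsto_nhds_unique (hu x) (by simpa only [(hz _).eq_zero x hx] using tendsto_const_nhds)

lemma tendsto_limit_cocompact (hz : ∀ k, IsApproxSolution N Ω R₀ L (p k) (R k) (z k))
    (hR₀ : 0 < R₀) (hR : Tendsto R atTop atTop)
    (hu : ∀ x, Tendsto (fun k => z k x) atTop (𝓝 (u x))) :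
    Tendsto u (cocompact (En n)) atTop := by
  refine tendsto_atTop_mono (fun x => ?_) (tendsto_half_log_max_polar N hR₀)
  refine ge_of_tendsto (hu x) ?_
  filter_upwards [hR.eventually_ge_atTop (N.polar x)] with k hk
  exact (hz k).half_log_le x hk

lemma exists_subseq_tendsto (hz : ∀ k, IsApproxSolution N Ω R₀ L (p k) (R k) (z k))
    (hne : Ωᶜ.Nonempty) :
    ∃ (u : En n → ℝ) (s : ℕ → ℕ), StrictMono s ∧
      ∀ x, Tendsto (fun k => z (s k) x) atTop (𝓝 (u x)) := by
  obtain ⟨x₀, hx₀⟩ := hne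
  refine exists_subseq_tendsto_of_lipschitzWith (fun k => (hz k).lipschitzWith) fun x =>
    ⟨L * dist x x₀, fun k => ?_⟩
  simpa [Real.dist_eq, (hz k).eq_zero x₀ hx₀] using (hz k).lipschitzWith.dist_le_mul x x₀

end IsApproxSolution

theorem HasTouchingWulff.exists_isWeakSolIAMCF (hn : 2 ≤ n) (hΩ : HasTouchingWulff N Ω R₀ r)
    (hne : Ωᶜ.Nonempty) :
    ∃ u, IsLipschitz u ∧ IsWeakSolIAMCF N Ω u ∧ (∀ x ∉ Ω, u x = 0) ∧
      Tendsto u (cocompact (En n)) atTop := by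
  obtain ⟨L, hL⟩ := hΩ.exists_isApproxSolution hn
  have hpos : ∀ k : ℕ, (0 : ℝ) < 1 / (k + 3) := fun k => by positivity
  have hlt : ∀ k : ℕ, (1 : ℝ) / (k + 3) < 1 / 2 := fun k =>
    one_div_lt_one_div_of_lt two_pos (by linarith [k.cast_nonneg (α := ℝ)])
  choose z hz using fun k : ℕ => hL (1 + 1 / (k + 3)) (k + R₀) (by linarith [hpos k])
    (by linarith [hlt k]) (le_add_of_nonneg_left k.cast_nonneg)
  have hR : Tendsto (fun k : ℕ => (k : ℝ) + R₀) atTop atTop :=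
    tendsto_natCast_atTop_atTop.atTop_add tendsto_const_nhds
  have hp : Tendsto (fun k : ℕ => (1 : ℝ) + 1 / (k + 3)) atTop (𝓝 1) := by
    simpa using (tendsto_const_nhds (x := (1 : ℝ))).div_atTop
      (tendsto_natCast_atTop_atTop.atTop_add (tendsto_const_nhds (x := (3 : ℝ)))) |>.const_add 1
  obtain ⟨u, s, hs, hu⟩ := IsApproxSolution.exists_subseq_tendsto hz hne
  have hzs := fun k => hz (s k)
  have hRs := hR.comp hs.tendsto_atTop
  have happrox : IsPApproximation N Ω L _ _ u := IsApproxSolution.isPApproximation hzs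
    (fun k => by linarith [hpos (s k)]) (fun k => by linarith [hlt (s k)])
    (hp.comp hs.tendsto_atTop) hRs hu
  exact ⟨u, happrox.isLipschitz, happrox.isWeakSolIAMCF hΩ.isOpen,
    fun x hx => IsApproxSolution.limit_eq_zero hzs hu hx,
    IsApproxSolution.tendsto_limit_cocompact hzs hΩ.outer_pos hRs hu⟩

end Existence

/-- For `n ≥ 2`, a Minkowski norm `F` on `ℝⁿ` and an open set `Ω ⊆ ℝⁿ`
with smooth boundary whose complement is bounded and nonempty, there exists one and only
one proper weak solution `u ∈ C^{0,1}_loc(closure Ω)` of `div(F_ξ(∇u)) = F(∇u)` in `Ω`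
with `u = 0` on `∂Ω`. -/
theorem statement0 (n : ℕ) (hn : 2 ≤ n) (N : MinkowskiNorm n)
    (Ω : Set (En n)) (hΩ : IsOpen Ω) (hsb : HasSmoothBoundary Ω)
    (hbd : Bornology.IsBounded Ωᶜ) (hne : Ωᶜ.Nonempty) :
    ∃ u : En n → ℝ,
      (LocLipOn u (closure Ω) ∧ IsWeakSolIAMCF N Ω u ∧
        (∀ x ∈ frontier Ω, u x = 0) ∧
        Tendsto u (cocompact (En n)) atTop) ∧
      ∀ v : En n → ℝ,
        (LocLipOn v (closure Ω) ∧ IsWeakSolIAMCF N Ω v ∧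
          (∀ x ∈ frontier Ω, v x = 0) ∧
          Tendsto v (cocompact (En n)) atTop) →
        ∀ x ∈ closure Ω, v x = u x := by
  obtain ⟨R₀, r, htouch⟩ := exists_hasTouchingWulff N hΩ hsb hbd
  obtain ⟨u, hlip, hu, hzero, hproper⟩ := htouch.exists_isWeakSolIAMCF hn hne
  have hu0 : ∀ x ∈ frontier Ω, u x = 0 := fun x hx => hzero x (hΩ.frontier_eq ▸ hx).2
  refine ⟨u, ⟨hlip.locallyLipschitzOn _, hu, hu0, hproper⟩, ?_⟩
  rintro v ⟨hvlip, hv, hv0, hvproper⟩ x hx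
  have hn0 : 0 < n := by omega
  have hucont := hlip.continuous.continuousOn (s := closure Ω)
  have hvcont := (locLipOn_iff_locallyLipschitzOn.1 hvlip).continuousOn
  by_cases hxΩ : x ∈ Ω
  · exact le_antisymm (weakSolIAMCF_le hn0 hΩ hu hv hucont hvcont hu0 hv0 hproper x hxΩ)
      (weakSolIAMCF_le hn0 hΩ hv hu hvcont hucont hv0 hu0 hvproper x hxΩ)
  · have hxfr : x ∈ frontier Ω := hΩ.frontier_eq ▸ ⟨hx, hxΩ⟩
    rw [hv0 x hxfr, hu0 x hxfr]
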